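/- (Theorem A with explicit constant, for u = Λ_j^{μ,ν}) Assume the integrality condition on (μ,ν) and let j ∈ ℕ. Then for all ϑ, φ ∈ [0,π] with cos ϑ + cos φ > 0, ∫₀^∞ Λ_j^{μ,ν}(x) J̃_{μ/2}(ax) J̃_{ν/2}(bx) x^{μ+ν+1} dx = (−1)^j · (2^{2(μ+ν)} Γ(j+(μ−ν+2)/2))/(π Γ(j+μ+1)) · ((cos ϑ + cos φ)/2)^{(μ+ν+2)/2} · C̃_j^{(μ+1)/2}(cos ϑ) · C̃_{j+(μ−ν)/2}^{(ν+1)/2}(cos φ), where a = sin ϑ/(cos ϑ + cos φ) and b = sin φ/(cos ϑ + cos φ). -/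

import Mathlib

open MeasureTheory Real Filter Set Metric

noncomputable section

/-- Normalized Bessel function of the first kind: `J̃_α(x) = (x/2)^{-α} J_α(x)`,
given by its (entire) power series. -/
def besselJt (α x : ℝ) : ℝ :=
  ∑' m : ℕ, (-1) ^ m / (m.factorial * Real.Gamma (m + α + 1)) * (x / 2) ^ (2 * m)

/-- Bessel function of the first kind `J_α`. -/
def besselJ (α x : ℝ) : ℝ :=
  ∑' m : ℕ, (-1) ^ m / (m.factorial * Real.Gamma (m + α + 1)) * (x / 2) ^ (2 * (m : ℝ) + α)

/-- Normalized modified Bessel function `Ĩ_α(x) = (x/2)^{-α} I_α(x)`,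
given by its (entire, even) power series. -/
def besselIt (α x : ℝ) : ℝ :=
  ∑' m : ℕ, (x / 2) ^ (2 * m) / (m.factorial * Real.Gamma (m + α + 1))

/-- Modified Bessel function of the first kind `I_α`. -/
def besselI (α x : ℝ) : ℝ :=
  ∑' m : ℕ, (x / 2) ^ (2 * (m : ℝ) + α) / (m.factorial * Real.Gamma (m + α + 1))

/-- Modified Bessel function of the second kind,
`K_α(x) = lim_{β→α} (π/2)(I_{−β}(x) − I_β(x))/sin(βπ)`. -/
def besselK (α x : ℝ) : ℝ :=
  limUnder (nhdsWithin α {α}ᶜ) fun β =>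
    Real.pi / 2 * (besselI (-β) x - besselI β x) / Real.sin (β * Real.pi)

/-- Normalized K-Bessel function `K̃_α(x) = (x/2)^{-α} K_α(x)`. -/
def besselKt (α x : ℝ) : ℝ := (x / 2) ^ (-α) * besselK α x

/-- Normalized Gegenbauer polynomial `C̃_n^λ = Γ(λ) C_n^λ`, where `C_n^λ` is defined via the
generating function `(1 − 2xt + t²)^{−λ} = Σ_{n≥0} C_n^λ(x) tⁿ`; explicitly,
`C̃_n^λ(x) = Σ_{k=0}^{⌊n/2⌋} (−1)^k Γ(λ+n−k)/(k!(n−2k)!) (2x)^{n−2k}`.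
This expression also gives the limit value `C̃_n^0 = lim_{λ→0+} Γ(λ) C_n^λ` for `n ≥ 1`. -/
def gegenbauerCt (n : ℕ) (l x : ℝ) : ℝ :=
  ∑ k ∈ Finset.range (n / 2 + 1),
    (-1) ^ k * Real.Gamma (l + n - k) / (k.factorial * (n - 2 * k).factorial)
      * (2 * x) ^ (n - 2 * k)

/-- Laguerre polynomial `L_n^μ(x) = Σ_{k=0}^n (−1)^k binom(n+μ, n−k) x^k/k!`
(with nonnegative integer parameter `μ`). -/
def laguerreL (n μ : ℕ) (x : ℝ) : ℝ :=
  ∑ k ∈ Finset.range (n + 1),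
    (-1) ^ k * (Nat.choose (n + μ) (n - k)) * x ^ k / k.factorial

/-- The Euler operator `θ = x d/dx`. -/
def eulerOp (u : ℝ → ℝ) : ℝ → ℝ := fun x => x * deriv u x

/-- `(θ+c)(θ+c+ν)u − x² u`, i.e. the operator `Q_ν(θ+c)` applied to `u`. -/
def besselQ (ν c : ℝ) (u : ℝ → ℝ) : ℝ → ℝ := fun x =>
  eulerOp (fun y => eulerOp u y + (c + ν) * u y) x
    + c * (eulerOp u x + (c + ν) * u x) - x ^ 2 * u x

/-- The fourth order differential operator
`D_{μ,ν} = x^{−2}((θ+μ)(θ+μ+ν) − x²)(θ(θ+ν) − x²)`. -/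
def Dop (μ ν : ℝ) (u : ℝ → ℝ) : ℝ → ℝ := fun x =>
  besselQ ν μ (besselQ ν 0 u) x / x ^ 2

/-- The generating function
`G^{μ,ν}(t,x) = (1−t)^{−(μ+ν+2)/2} Ĩ_{μ/2}(tx/(1−t)) K̃_{ν/2}(x/(1−t))`. -/
def genFun (μ ν t x : ℝ) : ℝ :=
  (1 - t) ^ (-(μ + ν + 2) / 2) * besselIt (μ / 2) (t * x / (1 - t))
    * besselKt (ν / 2) (x / (1 - t))

/-- The eigenfunctions `Λ_j^{μ,ν}`, defined as the Taylor coefficients in `t` at `t = 0` of the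
generating function `G^{μ,ν}(t,x) = Σ_{j≥0} Λ_j^{μ,ν}(x) t^j`. -/
def LambdaF (μ ν : ℝ) (j : ℕ) (x : ℝ) : ℝ :=
  iteratedDeriv j (fun t => genFun μ ν t x) 0 / j.factorial

/-- The integrality condition: `μ ≥ ν ≥ −1` are integers of the same parity,
not both equal to `−1`. -/
def IntCond (μ ν : ℤ) : Prop :=
  -1 ≤ ν ∧ ν ≤ μ ∧ Even (μ - ν) ∧ ¬(μ = -1 ∧ ν = -1)

end


/-! ### Part 1: the entire function `io α w = Σ w^m / (m! Γ(m+α+1))` -/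

/-- coefficients of the normalized modified Bessel function -/
noncomputable def ioC (α : ℝ) (m : ℕ) : ℝ := 1 / (m.factorial * Real.Gamma (m + α + 1))

/-- normalized Bessel function in the variable `x^2/4` -/
noncomputable def io (α w : ℝ) : ℝ := ∑' m : ℕ, ioC α m * w ^ m

lemma Gamma_inv_rec (z : ℝ) : z * (1 / Real.Gamma (z + 1)) = 1 / Real.Gamma z := by
  by_cases hz : z = 0
  · subst hz; simp
  · rw [Real.Gamma_add_one hz]
    by_cases hG : Real.Gamma z = 0
    · simp [hG]
    · field_simp

lemma ioC_succ (α : ℝ) (m : ℕ) : ((m : ℝ) + 1) * ioC α (m + 1) = ioC (α + 1) m := by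
  unfold ioC
  have : ((m + 1 : ℕ) : ℝ) + α + 1 = m + (α + 1) + 1 := by push_cast; ring
  rw [this, Nat.factorial_succ]
  have h1 : ((m : ℝ) + 1) ≠ 0 := by positivity
  push_cast
  rw [mul_one_div, mul_assoc, ← div_div, div_self h1]

lemma ioC_gamma (α : ℝ) (m : ℕ) : ((m : ℝ) + α + 1) * ioC (α + 1) m = ioC α m := by
  unfold ioC
  have : (m : ℝ) + (α + 1) + 1 = (m + α + 1) + 1 := by ring
  have h := Gamma_inv_rec (m + α + 1)
  rw [this, ← one_div_mul_one_div, ← one_div_mul_one_div, ← h]; ring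

lemma ioC_ratio (α : ℝ) (m : ℕ) : ioC α m = ((m : ℝ) + 1) * (m + α + 1) * ioC α (m + 1) := by
  rw [← ioC_gamma, ← ioC_succ]; ring

lemma ioC_pos {α : ℝ} (hα : -1 < α) (m : ℕ) : 0 < ioC α m := by
  unfold ioC
  have : 0 < Real.Gamma (m + α + 1) := Real.Gamma_pos_of_pos (by
    have : (0 : ℝ) ≤ m := Nat.cast_nonneg m
    linarith)
  positivity

lemma summable_io_norm (α w : ℝ) : Summable (fun m : ℕ => ‖ioC α m * w ^ m‖) := by
  refine Summable.norm ?_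
  refine summable_of_ratio_norm_eventually_le (r := 1 / 2) (by norm_num) ?_
  obtain ⟨N, hN⟩ := exists_nat_ge (|α| + 2 * |w| + 1)
  filter_upwards [eventually_ge_atTop N] with m hm
  have hm' : (N : ℝ) ≤ m := by exact_mod_cast hm
  have hα := neg_abs_le α
  have hw := abs_nonneg w
  have hq : 2 * |w| ≤ ((m : ℝ) + 1) * (m + α + 1) := by nlinarith [abs_nonneg α]
  have e : ‖((m : ℝ) + 1) * (m + α + 1)‖ = ((m : ℝ) + 1) * (m + α + 1) :=
    Real.norm_of_nonneg (by linarith)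
  rw [ioC_ratio α m, norm_mul, norm_mul, norm_mul, pow_succ, norm_mul, e, Real.norm_eq_abs w]
  have h0 : 0 ≤ ‖ioC α (m + 1)‖ * ‖w ^ m‖ := by positivity
  nlinarith

lemma summable_io (α w : ℝ) : Summable (fun m : ℕ => ioC α m * w ^ m) :=
  (summable_io_norm α w).of_norm

lemma hasSum_io (α w : ℝ) : HasSum (fun m : ℕ => ioC α m * w ^ m) (io α w) :=
  (summable_io α w).hasSum

lemma hasDerivAt_io (α w : ℝ) : HasDerivAt (io α) (io (α + 1) w) w := by
  have key : ∀ (m : ℕ) (y : ℝ), HasDerivAt (fun z => ioC α m * z ^ m)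
      (ioC α m * (m * y ^ (m - 1))) y := fun m y => (hasDerivAt_pow m y).const_mul _
  have hshift : ∀ y : ℝ, (fun m : ℕ => ioC α (m + 1) * (((m + 1 : ℕ) : ℝ) * y ^ (m + 1 - 1)))
      = fun m => ioC (α + 1) m * y ^ m := by
    intro y; ext m
    rw [← ioC_succ]; push_cast; ring
  set r := |w| + 1
  have hr : 0 ≤ r := by positivity
  have hu : Summable (fun m : ℕ => ‖ioC α m * (m * r ^ (m - 1))‖) := by
    rw [← summable_nat_add_iff 1]
    have := summable_io_norm (α + 1) r
    refine this.congr ?_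
    intro m
    rw [← congrFun (hshift r) m]
  have h := hasDerivAt_tsum_of_isPreconnected (t := Metric.ball (0 : ℝ) r) (y₀ := 0) (y := w)
    hu Metric.isOpen_ball (convex_ball 0 r).isPreconnected
    (fun m y _ => key m y) (fun m y hy => by
      rw [norm_mul, norm_mul, norm_mul, norm_mul]
      gcongr
      rw [norm_pow, norm_pow]
      gcongr
      rw [Metric.mem_ball, dist_zero_right] at hy
      rw [Real.norm_of_nonneg hr]; exact hy.le) (by simp [r]; positivity)
    (summable_io α 0) (by simp [r])
  refine h.congr_deriv ?_
  rw [← Summable.sum_add_tsum_nat_add 1]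
  · simp only [Finset.range_one, Finset.sum_singleton, Nat.cast_zero, zero_mul, mul_zero, zero_add]
    unfold io
    exact congrArg tsum (hshift w)
  · rw [← summable_nat_add_iff 1]
    rw [hshift w]; exact summable_io _ _

lemma io_rec (α w : ℝ) : w * io (α + 2) w + (α + 1) * io (α + 1) w = io α w := by
  have h1 : HasSum (fun m : ℕ => (m : ℝ) * (ioC (α + 1) m * w ^ m)) (w * io (α + 2) w) := by
    rw [← hasSum_nat_add_iff' 1]
    simp only [Finset.range_one, Finset.sum_singleton, Nat.cast_zero, zero_mul, sub_zero]
    have := (hasSum_io (α + 2) w).mul_left w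
    refine this.congr_fun ?_
    intro m
    have e : α + 2 = (α + 1) + 1 := by ring
    rw [e, ← ioC_succ (α + 1)]; push_cast; ring
  have h2 := h1.add ((hasSum_io (α + 1) w).mul_left (α + 1))
  refine h2.unique ((hasSum_io α w).congr_fun ?_)
  intro m
  rw [← ioC_gamma α m]; ring

lemma io_zero (α : ℝ) : io α 0 = 1 / Real.Gamma (α + 1) := by
  unfold io
  rw [tsum_eq_single 0]
  · simp [ioC]
  · intro m hm; simp [hm]

lemma contDiff_io (α : ℝ) (n : ℕ) : ContDiff ℝ n (io α) := by
  induction n generalizing α with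
  | zero => exact contDiff_zero.2 (continuous_iff_continuousAt.2 fun w => (hasDerivAt_io α w).continuousAt)
  | succ n ih =>
    have : deriv (io α) = io (α + 1) := funext fun w => (hasDerivAt_io α w).deriv
    have h := contDiff_succ_iff_deriv (n := n) (f := io α) (𝕜 := ℝ)
    push_cast
    rw [h, this]
    exact ⟨fun w => (hasDerivAt_io α w).differentiableAt, by simp, ih _⟩

lemma continuous_io (α : ℝ) : Continuous (io α) :=
  continuous_iff_continuousAt.2 fun w => (hasDerivAt_io α w).continuousAt

lemma io_bound {α : ℝ} (hα : -1 / 2 ≤ α) {w : ℝ} (hw : 0 ≤ w) :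
    |io α (-w)| ≤ 1 / Real.Gamma (α + 1) := by
  have hG : 0 < Real.Gamma (α + 1) := Real.Gamma_pos_of_pos (by linarith)
  set E : ℝ → ℝ := fun v => (io α (-v)) ^ 2 + v * (io (α + 1) (-v)) ^ 2 with hE
  have hd : ∀ v : ℝ, HasDerivAt E (-(2 * α + 1) * (io (α + 1) (-v)) ^ 2) v := by
    intro v
    have h0 : HasDerivAt (fun v => io α (-v)) (-(io (α + 1) (-v))) v := by
      have := (hasDerivAt_io α (-v)).comp v (hasDerivAt_neg v)
      exact this.congr_deriv (by ring)
    have h1 : HasDerivAt (fun v => io (α + 1) (-v)) (-(io (α + 1 + 1) (-v))) v := by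
      have := (hasDerivAt_io (α + 1) (-v)).comp v (hasDerivAt_neg v)
      exact this.congr_deriv (by ring)
    have := (h0.pow 2).add ((hasDerivAt_id v).mul (h1.pow 2))
    refine this.congr_deriv ?_
    have hr := io_rec α (-v)
    have e : α + 1 + 1 = α + 2 := by ring
    rw [e]
    simp only [id, Pi.pow_apply]
    rw [← hr]; push_cast; ring
  have hanti : AntitoneOn E (Set.Ici 0) := by
    refine antitoneOn_of_deriv_nonpos (convex_Ici 0) (fun v _ => (hd v).continuousAt.continuousWithinAt)
      (fun v _ => (hd v).differentiableAt.differentiableWithinAt) ?_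
    intro v _
    rw [(hd v).deriv]
    have : 0 ≤ 2 * α + 1 := by linarith
    nlinarith [mul_nonneg this (sq_nonneg (io (α + 1) (-v)))]
  have h := hanti (Set.mem_Ici.2 le_rfl) (Set.mem_Ici.2 hw) hw
  simp only [hE, neg_zero, zero_mul, add_zero, io_zero] at h
  have h2 : (io α (-w)) ^ 2 ≤ (1 / Real.Gamma (α + 1)) ^ 2 := by
    nlinarith [mul_nonneg hw (sq_nonneg (io (α + 1) (-w)))]
  exact abs_le_of_sq_le_sq h2 (by positivity)

lemma besselJt_eq (α x : ℝ) : besselJt α x = io α (-(x ^ 2 / 4)) := by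
  unfold besselJt io ioC
  congr 1; ext m
  have : (-(x ^ 2 / 4)) ^ m = (-1) ^ m * (x / 2) ^ (2 * m) := by
    rw [pow_mul, ← mul_pow]; congr 1; ring
  rw [this]; ring

lemma besselIt_eq (α x : ℝ) : besselIt α x = io α (x ^ 2 / 4) := by
  unfold besselIt io ioC
  congr 1; ext m
  have : (x ^ 2 / 4) ^ m = (x / 2) ^ (2 * m) := by
    rw [pow_mul]; congr 1; ring
  rw [this]; ring

lemma besselI_eq (α : ℝ) {x : ℝ} (hx : 0 < x) : besselI α x = (x / 2) ^ α * io α (x ^ 2 / 4) := by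
  unfold besselI io ioC
  rw [← tsum_mul_left]
  congr 1; ext m
  have : (x ^ 2 / 4) ^ m = (x / 2) ^ (2 * m) := by
    rw [pow_mul]; congr 1; ring
  rw [this, Real.rpow_add (by positivity)]
  have h2 : (x / 2) ^ (2 * (m : ℝ)) = (x / 2) ^ (2 * m) := by
    rw [← Real.rpow_natCast]; push_cast; rfl
  rw [h2]; ring


/-! ### Part 2: the function `kB β v = K̃_β(2√v)` through its integral representation -/

/-- integrand of the integral representation of the normalized K-Bessel function -/
noncomputable def kI (β v s : ℝ) : ℝ := s ^ (-β - 1) * Real.exp (-s - v / s)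

/-- normalized K-Bessel function in the variable `x^2/4` -/
noncomputable def kB (β v : ℝ) : ℝ := (1 / 2) * ∫ s in Set.Ioi (0 : ℝ), kI β v s

lemma kI_pos (β v : ℝ) {s : ℝ} (hs : 0 < s) : 0 < kI β v s := by
  unfold kI; positivity

lemma kI_continuousOn (β v : ℝ) : ContinuousOn (kI β v) (Set.Ioi 0) := by
  intro s hs
  have hs' : s ≠ 0 := ne_of_gt hs
  unfold kI
  refine ContinuousAt.continuousWithinAt ?_
  refine ContinuousAt.mul (Real.continuousAt_rpow_const _ _ (Or.inl hs')) ?_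
  refine Real.continuous_exp.continuousAt.comp ?_
  exact (continuousAt_id.neg).sub (continuousAt_const.div continuousAt_id hs')

lemma kI_aesm (β v : ℝ) : AEStronglyMeasurable (kI β v) (volume.restrict (Set.Ioi 0)) :=
  (kI_continuousOn β v).aestronglyMeasurable measurableSet_Ioi

lemma kI_integrable_of_neg {β v : ℝ} (hβ : β < 0) (hv : 0 ≤ v) :
    IntegrableOn (kI β v) (Set.Ioi 0) := by
  have h := Real.GammaIntegral_convergent (s := -β) (by linarith)
  refine Integrable.mono' h (kI_aesm β v) ?_
  refine (ae_restrict_iff' measurableSet_Ioi).2 (Eventually.of_forall fun s hs => ?_)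
  have hs' : 0 < s := hs
  rw [Real.norm_of_nonneg (kI_pos β v hs').le]
  unfold kI
  rw [mul_comm]
  gcongr
  have : 0 ≤ v / s := by positivity
  linarith

lemma kI_shift_bound (β v : ℝ) (hv : 0 < v) (N : ℕ) {s : ℝ} (hs : 0 < s) :
    kI β v s ≤ N.factorial / v ^ N * (s ^ (-(β - N) - 1) * Real.exp (-s)) := by
  unfold kI
  have h1 : (v / s) ^ N / N.factorial ≤ Real.exp (v / s) :=
    Real.pow_div_factorial_le_exp _ (by positivity) N
  have h2 : Real.exp (-(v / s)) ≤ N.factorial * (s / v) ^ N := by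
    rw [Real.exp_neg]
    have hf : (0 : ℝ) < N.factorial := by positivity
    have h0 : 0 < (v / s) ^ N / N.factorial := by positivity
    refine (inv_anti₀ h0 h1).trans (le_of_eq ?_)
    rw [div_pow, div_pow]; field_simp
  have e1 : Real.exp (-s - v / s) = Real.exp (-s) * Real.exp (-(v / s)) := by
    rw [← Real.exp_add]; congr 1
  have e2 : s ^ (-(β - N) - 1) = s ^ (-β - 1) * s ^ N := by
    rw [← Real.rpow_natCast, ← Real.rpow_add hs]; congr 1; ring
  rw [e1, e2]
  calc s ^ (-β - 1) * (Real.exp (-s) * Real.exp (-(v / s)))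
      ≤ s ^ (-β - 1) * (Real.exp (-s) * (N.factorial * (s / v) ^ N)) := by gcongr
    _ = _ := by rw [div_pow]; ring

lemma kI_integrable (β : ℝ) {v : ℝ} (hv : 0 < v) : IntegrableOn (kI β v) (Set.Ioi 0) := by
  obtain ⟨N, hN⟩ := exists_nat_gt β
  have h := (Real.GammaIntegral_convergent (s := -(β - N)) (by linarith)).const_mul
    (N.factorial / v ^ N : ℝ)
  refine Integrable.mono' h (kI_aesm β v) ?_
  refine (ae_restrict_iff' measurableSet_Ioi).2 (Eventually.of_forall fun s hs => ?_)
  have hs' : 0 < s := hs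
  rw [Real.norm_of_nonneg (kI_pos β v hs').le]
  refine (kI_shift_bound β v hv N hs').trans (le_of_eq ?_)
  ring

lemma kI_anti (β : ℝ) {v v' s : ℝ} (hs : 0 < s) (h : v ≤ v') : kI β v' s ≤ kI β v s := by
  unfold kI; gcongr

lemma kB_nonneg (β v : ℝ) : 0 ≤ kB β v := by
  unfold kB
  have := setIntegral_nonneg (μ := volume) measurableSet_Ioi (fun s hs => (kI_pos β v (mem_Ioi.1 hs)).le)
  positivity

lemma kB_anti (β : ℝ) {v v' : ℝ} (hv : 0 < v) (h : v ≤ v') : kB β v' ≤ kB β v := by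
  unfold kB
  have := setIntegral_mono_on (kI_integrable β (lt_of_lt_of_le hv h)) (kI_integrable β hv)
    measurableSet_Ioi (fun s hs => kI_anti β (mem_Ioi.1 hs) h)
  linarith

lemma hasDerivAt_kB (β : ℝ) {v : ℝ} (hv : 0 < v) : HasDerivAt (kB β) (-kB (β + 1) v) v := by
  have h := hasDerivAt_integral_of_dominated_loc_of_deriv_le (μ := volume.restrict (Set.Ioi 0))
    (F := fun v s => kI β v s) (F' := fun v s => -kI (β + 1) v s) (x₀ := v)
    (s := Set.Ioi (v / 2)) (bound := fun s => kI (β + 1) (v / 2) s)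
    (Ioi_mem_nhds (by linarith)) (Eventually.of_forall fun v => kI_aesm β v)
    (kI_integrable β hv) (kI_aesm (β + 1) v).neg
    ((ae_restrict_iff' measurableSet_Ioi).2 (Eventually.of_forall fun s hs x hx => by
      rw [norm_neg, Real.norm_of_nonneg (kI_pos _ _ hs).le]
      exact kI_anti _ hs (le_of_lt hx)))
    (kI_integrable _ (by linarith))
    ((ae_restrict_iff' measurableSet_Ioi).2 (Eventually.of_forall fun s hs x hx => by
      have hs' : 0 < s := hs
      unfold kI
      have h1 : HasDerivAt (fun x => -s - x / s) (-(1 / s)) x := by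
        simpa using ((hasDerivAt_id x).div_const s).const_sub (-s)
      refine (h1.exp.const_mul (s ^ (-β - 1))).congr_deriv ?_
      have e : s ^ (-β - 1) = s ^ (-(β + 1) - 1) * s := by
        rw [← Real.rpow_add_one hs'.ne']; congr 1; ring
      rw [e]; field_simp))
  have h2 := h.2.const_mul (1 / 2 : ℝ)
  refine h2.congr_deriv ?_
  rw [integral_neg]; unfold kB; ring

lemma continuousOn_kB (β : ℝ) : ContinuousOn (kB β) (Set.Ioi 0) := fun _ hv =>
  (hasDerivAt_kB β hv).continuousAt.continuousWithinAt

lemma kB_symm (β : ℝ) {v : ℝ} (hv : 0 < v) : kB (-β) v = v ^ β * kB β v := by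
  have h1 := integral_comp_mul_left_Ioi (fun s => kI β v s) 0 hv
  have h2 := integral_comp_rpow_Ioi (fun s => kI β v (v * s)) (p := -1) (by norm_num)
  rw [mul_zero] at h1
  rw [h1] at h2
  have h3 : ∫ s in Set.Ioi (0 : ℝ), (|(-1 : ℝ)| * s ^ ((-1 : ℝ) - 1)) • kI β v (v * s ^ (-1 : ℝ))
      = ∫ s in Set.Ioi (0 : ℝ), v ^ (-β - 1) * kI (-β) v s := by
    refine setIntegral_congr_fun measurableSet_Ioi fun s hs => ?_
    have hs' : 0 < s := hs
    simp only [smul_eq_mul, abs_neg, abs_one, one_mul]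
    unfold kI
    rw [Real.mul_rpow hv.le (by positivity), ← Real.rpow_mul hs'.le]
    have e1 : -(v * s ^ (-1 : ℝ)) - v / (v * s ^ (-1 : ℝ)) = -s - v / s := by
      rw [Real.rpow_neg_one]; field_simp; ring
    have e2 : s ^ (-(-β) - 1) = s ^ ((-1 : ℝ) - 1) * s ^ (-1 * (-β - 1)) := by
      rw [← Real.rpow_add hs']; congr 1; ring
    rw [e1, e2]; ring
  rw [h3, integral_const_mul, smul_eq_mul] at h2
  unfold kB
  have e3 : v ^ (-β - 1) = v⁻¹ * (v ^ β)⁻¹ := by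
    rw [← Real.rpow_neg_one, ← Real.rpow_neg hv.le, ← Real.rpow_add hv]; congr 1; ring
  rw [e3] at h2
  have hb : 0 < v ^ β := by positivity
  field_simp at h2
  rw [h2]; ring

lemma kB_ode (β : ℝ) {v : ℝ} (hv : 0 < v) :
    v * kB (β + 2) v - (β + 1) * kB (β + 1) v - kB β v = 0 := by
  have hd : ∀ s ∈ Set.Ioi (0 : ℝ), HasDerivAt (kI β v)
      (v * kI (β + 2) v s - (β + 1) * kI (β + 1) v s - kI β v s) s := by
    intro s hs
    have hs' : 0 < s := hs
    unfold kI
    have h1 : HasDerivAt (fun s => -s - v / s) (-1 + v / s ^ 2) s := by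
      have := (hasDerivAt_neg s).sub ((hasDerivAt_const s v).div (hasDerivAt_id s) hs'.ne')
      refine this.congr_deriv ?_
      simp only [id]; field_simp; ring
    have h2 := (Real.hasDerivAt_rpow_const (x := s) (p := -β - 1) (Or.inl hs'.ne')).mul h1.exp
    refine h2.congr_deriv ?_
    have e1 : s ^ (-β - 1) = s ^ (-(β + 2) - 1) * s ^ 2 := by
      rw [← Real.rpow_natCast, ← Real.rpow_add hs']; congr 1; push_cast; ring
    have e2 : s ^ (-β - 1 - 1) = s ^ (-(β + 2) - 1) * s := by
      rw [← Real.rpow_add_one hs'.ne']; congr 1; ring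
    have e3 : s ^ (-(β + 1) - 1) = s ^ (-(β + 2) - 1) * s := by
      rw [← Real.rpow_add_one hs'.ne']; congr 1; ring
    rw [e1, e2, e3]; field_simp; ring
  have hIntg : IntegrableOn (fun s => v * kI (β + 2) v s - (β + 1) * kI (β + 1) v s - kI β v s)
      (Set.Ioi 0) :=
    (((kI_integrable _ hv).const_mul v).sub ((kI_integrable _ hv).const_mul (β + 1))).sub
      (kI_integrable _ hv)
  have hlim0 : Tendsto (kI β v) (nhdsWithin 0 (Set.Ioi 0)) (nhds 0) := by
    obtain ⟨N, hN⟩ := exists_nat_gt (β + 1)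
    have hb : Tendsto (fun s : ℝ => N.factorial / v ^ N * (s ^ (-(β - N) - 1) * Real.exp (-s)))
        (nhdsWithin 0 (Set.Ioi 0)) (nhds 0) := by
      have hp : 0 < -(β - N) - 1 := by linarith
      have : ContinuousAt (fun s : ℝ => N.factorial / v ^ N * (s ^ (-(β - N) - 1) * Real.exp (-s))) 0 := by
        refine continuousAt_const.mul ((Real.continuousAt_rpow_const _ _ (Or.inr hp.le)).mul ?_)
        fun_prop
      have h := this.tendsto
      rw [Real.zero_rpow hp.ne', zero_mul, mul_zero] at h
      exact h.mono_left nhdsWithin_le_nhds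
    refine tendsto_of_tendsto_of_tendsto_of_le_of_le' tendsto_const_nhds hb ?_ ?_
    · filter_upwards [self_mem_nhdsWithin] with s hs using (kI_pos β v hs).le
    · filter_upwards [self_mem_nhdsWithin] with s hs using kI_shift_bound β v hv N hs
  have hlimi : Tendsto (kI β v) atTop (nhds 0) := by
    have := tendsto_rpow_mul_exp_neg_mul_atTop_nhds_zero (-β - 1) 1 one_pos
    refine tendsto_of_tendsto_of_tendsto_of_le_of_le' tendsto_const_nhds this ?_ ?_
    · filter_upwards [eventually_gt_atTop 0] with s hs using (kI_pos β v hs).le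
    · filter_upwards [eventually_gt_atTop 0] with s hs
      unfold kI
      gcongr
      have : 0 < v / s := by positivity
      linarith
  have h := integral_Ioi_of_hasDerivAt_of_tendsto (a := 0) (f := Function.update (kI β v) 0 0) (m := 0)
    (f' := fun s => v * kI (β + 2) v s - (β + 1) * kI (β + 1) v s - kI β v s)
    (by
      rw [continuousWithinAt_update_same]
      refine hlim0.mono_left (nhdsWithin_mono _ ?_)
      intro s hs
      exact lt_of_le_of_ne hs.1 (fun h => hs.2 h.symm))
    (fun s hs => by
      refine (hd s hs).congr_of_eventuallyEq ?_
      filter_upwards [Ioi_mem_nhds hs] with u hu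
      exact Function.update_of_ne (ne_of_gt hu) _ _)
    hIntg
    (hlimi.congr' (by
      filter_upwards [eventually_gt_atTop 0] with u hu
      exact (Function.update_of_ne (ne_of_gt hu) _ _).symm))
  rw [Function.update_self] at h
  have h4 := integral_sub (((kI_integrable (β + 2) hv).const_mul v).sub
    ((kI_integrable (β + 1) hv).const_mul (β + 1))) (kI_integrable β hv)
  have h5 := integral_sub ((kI_integrable (β + 2) hv).const_mul v)
    ((kI_integrable (β + 1) hv).const_mul (β + 1))
  simp only [Pi.sub_apply] at h4
  rw [h4, h5, integral_const_mul, integral_const_mul] at h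
  unfold kB
  linarith

lemma kB_tendsto {γ : ℝ} (hγ : 0 < γ) :
    Tendsto (kB (-γ)) (nhdsWithin 0 (Set.Ioi 0)) (nhds (Real.Gamma γ / 2)) := by
  have h := tendsto_integral_filter_of_dominated_convergence (μ := volume.restrict (Set.Ioi 0))
    (l := nhdsWithin (0 : ℝ) (Set.Ioi 0)) (F := fun v s => kI (-γ) v s)
    (f := fun s => Real.exp (-s) * s ^ (γ - 1))
    (fun s => Real.exp (-s) * s ^ (γ - 1))
    (Eventually.of_forall fun v => kI_aesm _ v)
    (by
      filter_upwards [self_mem_nhdsWithin] with v hv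
      refine (ae_restrict_iff' measurableSet_Ioi).2 (Eventually.of_forall fun s hs => ?_)
      have hs' : 0 < s := hs
      have hv' : 0 < v := hv
      rw [Real.norm_of_nonneg (kI_pos _ v hs').le]
      unfold kI
      rw [neg_neg, mul_comm]
      gcongr
      have : 0 < v / s := by positivity
      linarith)
    (Real.GammaIntegral_convergent hγ)
    ((ae_restrict_iff' measurableSet_Ioi).2 (Eventually.of_forall fun s hs => by
      have hs' : 0 < s := hs
      have : ContinuousAt (fun v => kI (-γ) v s) 0 := by
        unfold kI; fun_prop (disch := exact hs'.ne')
      have h := this.tendsto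
      have e : kI (-γ) 0 s = Real.exp (-s) * s ^ (γ - 1) := by
        unfold kI; simp [mul_comm]
      rw [e] at h
      exact h.mono_left nhdsWithin_le_nhds))
  rw [← Real.Gamma_eq_integral hγ] at h
  have h2 := h.const_mul (1 / 2 : ℝ)
  unfold kB
  convert h2 using 2
  ring

/-- joint integrability used for Tonelli/Fubini -/
lemma kI_prod_integrable {p β P : ℝ} (hp : -1 < p) (hp2 : β - 1 < p) (hP : 0 < P) :
    Integrable (fun z : ℝ × ℝ => z.1 ^ p * kI β (P * z.1) z.2)
      ((volume.restrict (Set.Ioi (0 : ℝ))).prod (volume.restrict (Set.Ioi (0 : ℝ)))) := by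
  have hmeas : AEStronglyMeasurable (fun z : ℝ × ℝ => z.1 ^ p * kI β (P * z.1) z.2)
      ((volume.restrict (Set.Ioi (0 : ℝ))).prod (volume.restrict (Set.Ioi (0 : ℝ)))) := by
    have : Measurable (fun z : ℝ × ℝ => z.1 ^ p * kI β (P * z.1) z.2) := by
      unfold kI; fun_prop
    exact this.aestronglyMeasurable
  have hval : ∀ s : ℝ, 0 < s → ∀ W : ℝ, W ^ p * kI β (P * W) s
      = (s ^ (-β - 1) * Real.exp (-s)) * (W ^ (p + 1 - 1) * Real.exp (-(P / s * W))) := by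
    intro s hs W
    unfold kI
    have : Real.exp (-s - P * W / s) = Real.exp (-s) * Real.exp (-(P / s * W)) := by
      rw [← Real.exp_add]; congr 1; ring
    rw [this, add_sub_cancel_right]; ring
  have hW : ∀ s : ℝ, 0 < s → IntegrableOn (fun W : ℝ => W ^ (p + 1 - 1) * Real.exp (-(P / s * W)))
      (Set.Ioi 0) := by
    intro s hs
    have := integrableOn_rpow_mul_exp_neg_mul_rpow (s := p) (p := 1) (b := P / s) hp one_pos
      (by positivity)
    refine this.congr_fun (fun W _ => ?_) measurableSet_Ioi
    simp
  rw [integrable_prod_iff' hmeas]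
  constructor
  · refine (ae_restrict_iff' measurableSet_Ioi).2 (Eventually.of_forall fun s hs => ?_)
    simp only [hval s hs]
    exact (hW s hs).const_mul _
  · have hg := (Real.GammaIntegral_convergent (s := p - β + 1) (by linarith)).const_mul
      ((1 / P) ^ (p + 1) * Real.Gamma (p + 1))
    refine IntegrableOn.congr_fun hg (fun s hs => ?_) measurableSet_Ioi
    have hs' : 0 < s := hs
    have e : ∫ W in Set.Ioi (0 : ℝ), ‖W ^ p * kI β (P * W) s‖
        = ∫ W in Set.Ioi (0 : ℝ), (s ^ (-β - 1) * Real.exp (-s)) * (W ^ (p + 1 - 1) * Real.exp (-(P / s * W))) := by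
      refine setIntegral_congr_fun measurableSet_Ioi fun W hW => ?_
      have hW' : 0 < W := hW
      try simp only
      rw [Real.norm_of_nonneg (mul_nonneg (by positivity) (kI_pos _ _ hs').le), hval s hs']
    simp only
    rw [e, integral_const_mul, Real.integral_rpow_mul_exp_neg_mul_Ioi (by linarith) (by positivity)]
    have e2 : s ^ (p - β + 1 - 1) = s ^ (-β - 1) * s ^ (p + 1) := by
      rw [← Real.rpow_add hs']; congr 1; ring
    have e3 : (1 / (P / s)) ^ (p + 1) = (1 / P) ^ (p + 1) * s ^ (p + 1) := by
      rw [← Real.mul_rpow (by positivity) hs'.le]; congr 1; field_simp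
    rw [e2, e3]; ring

lemma kB_rpow_integrable {p β P : ℝ} (hp : -1 < p) (hp2 : β - 1 < p) (hP : 0 < P) :
    IntegrableOn (fun W => W ^ p * kB β (P * W)) (Set.Ioi 0) := by
  have h := ((kI_prod_integrable hp hp2 hP).integral_prod_left).const_mul (1 / 2 : ℝ)
  refine h.congr (Eventually.of_forall fun W => ?_)
  simp only [kB]
  rw [integral_const_mul]; ring


/-! ### Part 3: identification of the K-Bessel function -/

lemma wronsk_const {β L : ℝ} {f f1 f2 g g1 g2 : ℝ → ℝ}
    (hf : ∀ v > 0, HasDerivAt f (f1 v) v) (hf1 : ∀ v > 0, HasDerivAt f1 (f2 v) v)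
    (hg : ∀ v > 0, HasDerivAt g (g1 v) v) (hg1 : ∀ v > 0, HasDerivAt g1 (g2 v) v)
    (of : ∀ v > 0, v * f2 v + (1 + β) * f1 v = f v)
    (og : ∀ v > 0, v * g2 v + (1 + β) * g1 v = g v)
    (hL : Tendsto (fun v => v ^ (1 + β) * (f v * g1 v - f1 v * g v)) (nhdsWithin 0 (Set.Ioi 0)) (nhds L)) :
    ∀ v > 0, v ^ (1 + β) * (f v * g1 v - f1 v * g v) = L := by
  have hd : ∀ v > 0, HasDerivAt (fun v => v ^ (1 + β) * (f v * g1 v - f1 v * g v)) 0 v := by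
    intro v hv
    have h := (Real.hasDerivAt_rpow_const (x := v) (p := 1 + β) (Or.inl hv.ne')).mul
      (((hf v hv).mul (hg1 v hv)).sub ((hf1 v hv).mul (hg v hv)))
    refine h.congr_deriv ?_
    have e : v ^ (1 + β) = v ^ (1 + β - 1) * v := by
      rw [← Real.rpow_add_one hv.ne']; congr 1; ring
    rw [e]
    simp only [Pi.mul_apply, Pi.sub_apply]
    have h1 : v * f2 v = f v - (1 + β) * f1 v := by linarith [of v hv]
    have h2 : v * g2 v = g v - (1 + β) * g1 v := by linarith [og v hv]
    linear_combination (v ^ (1 + β - 1)) * (f v * h2 - g v * h1)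
  intro v hv
  have hc : ∀ u > 0, u ^ (1 + β) * (f u * g1 u - f1 u * g u)
      = v ^ (1 + β) * (f v * g1 v - f1 v * g v) := by
    intro u hu
    refine (convex_Ioi (0 : ℝ)).is_const_of_fderivWithin_eq_zero (𝕜 := ℝ)
      (f := fun v => v ^ (1 + β) * (f v * g1 v - f1 v * g v)) ?_ ?_ hu hv
    · intro z hz
      exact (hd z hz).differentiableAt.differentiableWithinAt
    · intro z hz
      have := (hd z hz).hasFDerivAt.hasFDerivWithinAt (s := Set.Ioi 0)
      rw [this.fderivWithin ((isOpen_Ioi).uniqueDiffWithinAt hz)]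
      ext; simp
  refine tendsto_nhds_unique (f := fun u => u ^ (1 + β) * (f u * g1 u - f1 u * g u)) ?_ hL
  refine tendsto_const_nhds.congr' ?_
  filter_upwards [self_mem_nhdsWithin] with u hu using (hc u hu).symm

lemma hasDerivAt_rpow_io (β : ℝ) {v : ℝ} (hv : 0 < v) :
    HasDerivAt (fun v => v ^ (-β) * io (-β) v) (v ^ (-β - 1) * io (-β - 1) v) v := by
  have h := (Real.hasDerivAt_rpow_const (x := v) (p := -β) (Or.inl hv.ne')).mul (hasDerivAt_io (-β) v)
  refine h.congr_deriv ?_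
  have e : v ^ (-β) = v ^ (-β - 1) * v := by
    rw [← Real.rpow_add_one hv.ne']; congr 1; ring
  have r := io_rec (-β - 1) v
  have e1 : -β - 1 + 2 = -β + 1 := by ring
  have e2 : -β - 1 + 1 = -β := by ring
  rw [e1, e2] at r
  rw [e, ← r]; ring

lemma kB_rep_base {β : ℝ} (h1 : -1 < β) (h0 : β < 0) {v : ℝ} (hv : 0 < v) :
    kB β v * Real.sin (π * β) = π / 2 * (v ^ (-β) * io (-β) v - io β v) := by
  have tio : ∀ γ, Tendsto (io γ) (nhdsWithin 0 (Set.Ioi 0)) (nhds (1 / Real.Gamma (γ + 1))) := by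
    intro γ
    rw [← io_zero]
    exact (continuous_io γ).continuousAt.tendsto.mono_left nhdsWithin_le_nhds
  have tr : ∀ p : ℝ, 0 < p → Tendsto (fun v : ℝ => v ^ p) (nhdsWithin 0 (Set.Ioi 0)) (nhds 0) := by
    intro p hp
    have := (Real.continuousAt_rpow_const 0 p (Or.inr hp.le)).tendsto
    rw [Real.zero_rpow hp.ne'] at this
    exact this.mono_left nhdsWithin_le_nhds
  have tf := kB_tendsto (γ := -β) (by linarith)
  rw [neg_neg] at tf
  have tf1 := kB_tendsto (γ := 1 + β) (by linarith)
  have hG1 : Real.Gamma (1 + β) ≠ 0 := (Real.Gamma_pos_of_pos (by linarith)).ne'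
  have hG2 : Real.Gamma (-β) ≠ 0 := (Real.Gamma_pos_of_pos (by linarith)).ne'
  have dK : ∀ v > 0, HasDerivAt (kB β) (-kB (β + 1) v) v := fun v hv => hasDerivAt_kB β hv
  have dK1 : ∀ v > 0, HasDerivAt (fun v => -kB (β + 1) v) (kB (β + 2) v) v := fun v hv => by
    have := (hasDerivAt_kB (β + 1) hv).neg
    rw [neg_neg, show β + 1 + 1 = β + 2 by ring] at this
    exact this
  have dI : ∀ v > 0, HasDerivAt (io β) (io (β + 1) v) v := fun v _ => hasDerivAt_io β v
  have dI1 : ∀ v > 0, HasDerivAt (io (β + 1)) (io (β + 2) v) v := fun v _ => by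
    have := hasDerivAt_io (β + 1) v
    rwa [show β + 1 + 1 = β + 2 by ring] at this
  have dJ : ∀ v > 0, HasDerivAt (fun v => v ^ (-β) * io (-β) v) (v ^ (-β - 1) * io (-β - 1) v) v :=
    fun v hv => hasDerivAt_rpow_io β hv
  have dJ1 : ∀ v > 0, HasDerivAt (fun v => v ^ (-β - 1) * io (-β - 1) v)
      (v ^ (-β - 2) * io (-β - 2) v) v := fun v hv => by
    have := hasDerivAt_rpow_io (β + 1) hv
    rwa [show -(β + 1) = -β - 1 by ring, show -β - 1 - 1 = -β - 2 by ring] at this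
  have oK : ∀ v > 0, v * kB (β + 2) v + (1 + β) * -kB (β + 1) v = kB β v := fun v hv => by
    linarith [kB_ode β hv]
  have oI : ∀ v > 0, v * io (β + 2) v + (1 + β) * io (β + 1) v = io β v := fun v _ => by
    linarith [io_rec β v]
  have oJ : ∀ v > 0, v * (v ^ (-β - 2) * io (-β - 2) v) + (1 + β) * (v ^ (-β - 1) * io (-β - 1) v)
      = v ^ (-β) * io (-β) v := fun v hv => by
    have r := io_rec (-β - 2) v
    rw [show -β - 2 + 2 = -β by ring, show -β - 2 + 1 = -β - 1 by ring] at r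
    have e : v ^ (-β) = v ^ (-β - 2) * v ^ 2 := by
      rw [← Real.rpow_natCast, ← Real.rpow_add hv]; congr 1; push_cast; ring
    have e' : v ^ (-β - 1) = v ^ (-β - 2) * v := by
      rw [← Real.rpow_add_one hv.ne']; congr 1; ring
    rw [e, e', ← r]; ring
  have W1 := wronsk_const (L := 1 / 2) dK dK1 dI dI1 oK oI (by
    have t := (((tr (1 + β) (by linarith)).mul tf).mul (tio (β + 1))).add (tf1.mul (tio β))
    have e : 0 * (Real.Gamma (-β) / 2) * (1 / Real.Gamma (β + 1 + 1))
        + Real.Gamma (1 + β) / 2 * (1 / Real.Gamma (β + 1)) = 1 / 2 := by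
      rw [add_comm β 1]; field_simp; ring
    rw [e] at t
    refine t.congr' ?_
    filter_upwards [self_mem_nhdsWithin] with u hu
    rw [kB_symm (1 + β) hu, add_comm β 1]; ring)
  have W2 := wronsk_const (L := 1 / 2) dK dK1 dJ dJ1 oK oJ (by
    have t := (tf.mul (tio (-β - 1))).add ((tf1.mul (tr (-β) (by linarith))).mul (tio (-β)))
    have e : Real.Gamma (-β) / 2 * (1 / Real.Gamma (-β - 1 + 1))
        + Real.Gamma (1 + β) / 2 * 0 * (1 / Real.Gamma (-β + 1)) = 1 / 2 := by
      rw [sub_add_cancel]; field_simp; ring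
    rw [e] at t
    refine t.congr' ?_
    filter_upwards [self_mem_nhdsWithin] with u hu
    have hu' : 0 < u := hu
    have e : u ^ (1 + β) * u ^ (-β - 1) = 1 := by
      rw [← Real.rpow_add hu', show 1 + β + (-β - 1) = 0 by ring, Real.rpow_zero]
    rw [kB_symm (1 + β) hu, add_comm β 1]
    linear_combination (-kB β u * io (-β - 1) u) * e)
  have W3 := wronsk_const (L := 1 / Real.Gamma (1 + β) * (1 / Real.Gamma (-β))) dI dI1 dJ dJ1 oI oJ (by
    have t := ((tio β).mul (tio (-β - 1))).sub (((tr 1 one_pos).mul (tio (β + 1))).mul (tio (-β)))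
    have e : 1 / Real.Gamma (β + 1) * (1 / Real.Gamma (-β - 1 + 1))
        - 0 * (1 / Real.Gamma (β + 1 + 1)) * (1 / Real.Gamma (-β + 1))
          = 1 / Real.Gamma (1 + β) * (1 / Real.Gamma (-β)) := by
      rw [sub_add_cancel, add_comm β 1]; ring
    rw [e] at t
    refine t.congr' ?_
    filter_upwards [self_mem_nhdsWithin] with u hu
    have hu' : 0 < u := hu
    have e : u ^ (1 + β) * u ^ (-β - 1) = 1 := by
      rw [← Real.rpow_add hu', show 1 + β + (-β - 1) = 0 by ring, Real.rpow_zero]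
    have e2 : u ^ (1 + β) * u ^ (-β) = u ^ (1 : ℝ) := by
      rw [← Real.rpow_add hu']; simp
    linear_combination (-io β u * io (-β - 1) u) * e + io (β + 1) u * io (-β) u * e2)
  have w1 := W1 v hv
  have w2 := W2 v hv
  have w3 := W3 v hv
  have key : kB β v * (1 / Real.Gamma (1 + β) * (1 / Real.Gamma (-β)))
      = io β v * (1 / 2) - v ^ (-β) * io (-β) v * (1 / 2) := by
    linear_combination io β v * w2 - (v ^ (-β) * io (-β) v) * w1 - kB β v * w3
  have hsin : 0 < Real.sin (π * -β) := Real.sin_pos_of_pos_of_lt_pi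
    (by have := Real.pi_pos; nlinarith) (by have := Real.pi_pos; nlinarith)
  have gm := Real.Gamma_mul_Gamma_one_sub (-β)
  rw [sub_neg_eq_add] at gm
  have e : 1 / Real.Gamma (1 + β) * (1 / Real.Gamma (-β)) = Real.sin (π * -β) / π := by
    rw [← one_div_div π, ← gm]; field_simp
  rw [e] at key
  have e2 : Real.sin (π * -β) = -Real.sin (π * β) := by rw [mul_neg, Real.sin_neg]
  rw [e2] at key
  have hpi := Real.pi_pos.ne'
  field_simp at key ⊢
  linarith

lemma kB_rep_aux (n : ℕ) : ∀ {β : ℝ}, -1 < β - n → β - n < 0 → ∀ {v : ℝ}, 0 < v →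
    kB β v * Real.sin (π * β) = π / 2 * (v ^ (-β) * io (-β) v - io β v) := by
  induction n with
  | zero =>
    intro β h1 h2 v hv
    exact kB_rep_base (by simpa using h1) (by simpa using h2) hv
  | succ n ih =>
    intro β h1 h2 v hv
    push_cast at h1 h2
    have h : ∀ u > 0, kB (β - 1) u * Real.sin (π * (β - 1))
        = π / 2 * (u ^ (-(β - 1)) * io (-(β - 1)) u - io (β - 1) u) := fun u hu =>
      ih (β := β - 1) (by linarith) (by linarith) hu
    have d1 := (hasDerivAt_kB (β - 1) hv).mul_const (Real.sin (π * (β - 1)))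
    have d2 := ((hasDerivAt_rpow_io (β - 1) hv).sub (hasDerivAt_io (β - 1) v)).const_mul (π / 2)
    have d3 := d1.unique (d2.congr_of_eventuallyEq (by
      filter_upwards [Ioi_mem_nhds hv] with u hu using h u hu))
    have e : Real.sin (π * (β - 1)) = -Real.sin (π * β) := by
      rw [mul_sub, mul_one, Real.sin_sub_pi]
    rw [e, show β - 1 + 1 = β by ring, show -(β - 1) - 1 = -β by ring] at d3
    linarith

lemma kB_rep {β : ℝ} (h1 : -1 < β) (hn : ∀ n : ℤ, (n : ℝ) ≠ β) {v : ℝ} (hv : 0 < v) :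
    kB β v * Real.sin (π * β) = π / 2 * (v ^ (-β) * io (-β) v - io β v) := by
  have hf := Int.floor_le β
  have hf2 := Int.lt_floor_add_one β
  have hf3 := lt_of_le_of_ne hf (hn _)
  have hnn : 0 ≤ ⌊β⌋ + 1 := by
    have : (-1 : ℤ) ≤ ⌊β⌋ := Int.le_floor.2 (by push_cast; linarith)
    linarith
  obtain ⟨n, hn'⟩ := Int.eq_ofNat_of_zero_le hnn
  have hc : ((n : ℕ) : ℝ) = (⌊β⌋ : ℝ) + 1 := by
    have : ((⌊β⌋ + 1 : ℤ) : ℝ) = ((n : ℤ) : ℝ) := by rw [hn']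
    push_cast at this; linarith
  exact kB_rep_aux n (by linarith) (by linarith) hv

lemma continuousAt_kB_param (α : ℝ) {v : ℝ} (hv : 0 < v) : ContinuousAt (fun β => kB β v) α := by
  unfold kB
  refine ContinuousAt.mul continuousAt_const ?_
  refine continuousAt_of_dominated (bound := fun s => kI (α + 1) v s + kI (α - 1) v s)
    (Eventually.of_forall fun β => kI_aesm β v) ?_
    ((kI_integrable _ hv).add (kI_integrable _ hv)) ?_
  · filter_upwards [Ioo_mem_nhds (show α - 1 < α by linarith) (show α < α + 1 by linarith)] with β hβ
    refine (ae_restrict_iff' measurableSet_Ioi).2 (Eventually.of_forall fun s hs => ?_)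
    have hs' : 0 < s := hs
    rw [Real.norm_of_nonneg (kI_pos _ _ hs').le]
    have p1 := (kI_pos (α + 1) v hs').le
    have p2 := (kI_pos (α - 1) v hs').le
    rcases le_total s 1 with h | h
    · have : kI β v s ≤ kI (α + 1) v s := by
        unfold kI
        refine mul_le_mul_of_nonneg_right ?_ (Real.exp_pos _).le
        exact Real.rpow_le_rpow_of_exponent_ge hs' h (by linarith [hβ.2])
      linarith
    · have : kI β v s ≤ kI (α - 1) v s := by
        unfold kI
        refine mul_le_mul_of_nonneg_right ?_ (Real.exp_pos _).le
        exact Real.rpow_le_rpow_of_exponent_le h (by linarith [hβ.1])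
      linarith
  · refine (ae_restrict_iff' measurableSet_Ioi).2 (Eventually.of_forall fun s hs => ?_)
    have hs' : 0 < s := hs
    unfold kI
    refine ContinuousAt.mul ?_ continuousAt_const
    exact (Real.continuousAt_const_rpow hs'.ne').comp (by fun_prop)

lemma besselKt_eq {α : ℝ} (hα : -1 < α) {x : ℝ} (hx : 0 < x) :
    besselKt α x = kB α (x ^ 2 / 4) := by
  have hv : 0 < x ^ 2 / 4 := by positivity
  have hx2 : 0 < x / 2 := by positivity
  have hlim : besselK α x = (x / 2) ^ α * kB α (x ^ 2 / 4) := by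
    unfold besselK
    refine Tendsto.limUnder_eq ?_
    have hc : ContinuousAt (fun β => (x / 2) ^ β * kB β (x ^ 2 / 4)) α :=
      (Real.continuousAt_const_rpow hx2.ne').mul (continuousAt_kB_param α hv)
    refine (hc.tendsto.mono_left nhdsWithin_le_nhds).congr' ?_
    have hcl : IsClosed ((fun n : ℤ => (n : ℝ)) '' {n | (n : ℝ) ≠ α}) :=
      Int.isClosedEmbedding_coe_real.isClosedMap _ (isClosed_discrete _)
    have hmem : ((fun n : ℤ => (n : ℝ)) '' {n | (n : ℝ) ≠ α})ᶜ ∈ nhds α := by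
      refine hcl.isOpen_compl.mem_nhds ?_
      rintro ⟨n, hn, hn2⟩
      exact hn hn2
    filter_upwards [self_mem_nhdsWithin, mem_nhdsWithin_of_mem_nhds hmem,
      mem_nhdsWithin_of_mem_nhds (Ioi_mem_nhds hα)] with β h1 h2 h3
    have hn : ∀ n : ℤ, (n : ℝ) ≠ β := by
      intro n hn
      refine h2 ⟨n, ?_, hn⟩
      show (n : ℝ) ≠ α
      rw [hn]; exact h1
    have hr := kB_rep h3 hn hv
    have hs : Real.sin (β * π) ≠ 0 := by
      intro h
      obtain ⟨n, hn'⟩ := Real.sin_eq_zero_iff.1 h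
      exact hn n (mul_right_cancel₀ Real.pi_pos.ne' hn')
    rw [eq_div_iff hs, besselI_eq _ hx, besselI_eq _ hx, mul_assoc, mul_comm β π, hr]
    have e : (x / 2) ^ (-β) = (x / 2) ^ β * (x ^ 2 / 4) ^ (-β) := by
      rw [show x ^ 2 / 4 = (x / 2) ^ (2 : ℝ) by rw [Real.rpow_two]; ring, ← Real.rpow_mul hx2.le,
        ← Real.rpow_add hx2]
      congr 1; ring
    rw [e]; ring
  unfold besselKt
  rw [hlim, ← mul_assoc, ← Real.rpow_add hx2]
  simp


/-! ### Part 4: algebraic identities -/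

lemma prod_identity (l : ℕ) : ∀ (α Z : ℝ), ∑ i ∈ Finset.range (l + 1),
    (l.choose i : ℝ) * (1 / Real.Gamma (i + α + 1)) * (Z ^ i * io (α + l + i) Z)
      = io α Z * (1 / Real.Gamma (α + l + 1)) := by
  induction l with
  | zero =>
    intro α Z
    simp; ring
  | succ l ih =>
    intro α Z
    -- derivative of the induction hypothesis at `α + 1`
    have hd1 : HasDerivAt (fun Z => ∑ i ∈ Finset.range (l + 1),
        (l.choose i : ℝ) * (1 / Real.Gamma (i + (α + 1) + 1)) * (Z ^ i * io (α + 1 + l + i) Z))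
        (∑ i ∈ Finset.range (l + 1), (l.choose i : ℝ) * (1 / Real.Gamma (i + (α + 1) + 1)) *
          ((i * Z ^ (i - 1)) * io (α + 1 + l + i) Z + Z ^ i * io (α + 1 + l + i + 1) Z)) Z := by
      refine HasDerivAt.fun_sum fun i _ => ?_
      exact ((hasDerivAt_pow i Z).mul (hasDerivAt_io _ Z)).const_mul _
    have hd2 : HasDerivAt (fun Z => io (α + 1) Z * (1 / Real.Gamma (α + 1 + l + 1)))
        (io (α + 1 + 1) Z * (1 / Real.Gamma (α + 1 + l + 1))) Z := (hasDerivAt_io _ Z).mul_const _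
    have hfun : (fun Z => ∑ i ∈ Finset.range (l + 1),
        (l.choose i : ℝ) * (1 / Real.Gamma (i + (α + 1) + 1)) * (Z ^ i * io (α + 1 + l + i) Z))
        = (fun Z => io (α + 1) Z * (1 / Real.Gamma (α + 1 + l + 1))) := funext fun Z => ih (α + 1) Z
    rw [hfun] at hd1
    have hD := hd1.unique hd2
    have h0 := ih (α + 1) Z
    -- Pascal
    have hP : ∑ i ∈ Finset.range (l + 1 + 1),
        ((l + 1).choose i : ℝ) * (1 / Real.Gamma (i + α + 1)) * (Z ^ i * io (α + (l + 1 : ℕ) + i) Z)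
        = ∑ i ∈ Finset.range (l + 1),
          (l.choose i : ℝ) * (1 / Real.Gamma (i + α + 1)) * (Z ^ i * io (α + 1 + l + i) Z)
        + ∑ i ∈ Finset.range (l + 1),
          (l.choose i : ℝ) * (1 / Real.Gamma (i + (α + 1) + 1)) * (Z ^ (i + 1) * io (α + 1 + l + i + 1) Z) := by
      rw [Finset.sum_range_succ', Finset.sum_range_succ' (fun i => (l.choose i : ℝ) *
        (1 / Real.Gamma (i + α + 1)) * (Z ^ i * io (α + 1 + l + i) Z))]
      have hl : ∑ i ∈ Finset.range l, (l.choose (i + 1) : ℝ) * (1 / Real.Gamma ((i + 1 : ℕ) + α + 1))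
          * (Z ^ (i + 1) * io (α + 1 + l + (i + 1 : ℕ)) Z)
          = ∑ i ∈ Finset.range (l + 1), (l.choose (i + 1) : ℝ) * (1 / Real.Gamma ((i + 1 : ℕ) + α + 1))
          * (Z ^ (i + 1) * io (α + 1 + l + (i + 1 : ℕ)) Z) := by
        rw [Finset.sum_range_succ]; simp
      rw [hl, add_right_comm (∑ i ∈ Finset.range (l + 1), (l.choose (i + 1) : ℝ) * (1 / Real.Gamma ((i + 1 : ℕ) + α + 1))
          * (Z ^ (i + 1) * io (α + 1 + l + (i + 1 : ℕ)) Z)), ← Finset.sum_add_distrib]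
      congr 1
      · refine Finset.sum_congr rfl fun i _ => ?_
        rw [Nat.choose_succ_succ]
        push_cast
        rw [show (i : ℝ) + 1 + α + 1 = i + (α + 1) + 1 by ring,
          show α + (l + 1) + ((i : ℝ) + 1) = α + 1 + l + i + 1 by ring,
          show α + 1 + l + ((i : ℝ) + 1) = α + 1 + l + i + 1 by ring]
        ring
      · simp; ring_nf; simp
    rw [hP]
    have h1 : ∑ i ∈ Finset.range (l + 1),
          (l.choose i : ℝ) * (1 / Real.Gamma (i + α + 1)) * (Z ^ i * io (α + 1 + l + i) Z)
        + ∑ i ∈ Finset.range (l + 1),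
          (l.choose i : ℝ) * (1 / Real.Gamma (i + (α + 1) + 1)) * (Z ^ (i + 1) * io (α + 1 + l + i + 1) Z)
        = (α + 1) * (∑ i ∈ Finset.range (l + 1),
        (l.choose i : ℝ) * (1 / Real.Gamma (i + (α + 1) + 1)) * (Z ^ i * io (α + 1 + l + i) Z))
        + Z * (∑ i ∈ Finset.range (l + 1), (l.choose i : ℝ) * (1 / Real.Gamma (i + (α + 1) + 1)) *
          ((i * Z ^ (i - 1)) * io (α + 1 + l + i) Z + Z ^ i * io (α + 1 + l + i + 1) Z)) := by
      rw [Finset.mul_sum, Finset.mul_sum, ← Finset.sum_add_distrib, ← Finset.sum_add_distrib]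
      refine Finset.sum_congr rfl fun i _ => ?_
      have hG := Gamma_inv_rec ((i : ℝ) + α + 1)
      rw [show (i : ℝ) + α + 1 + 1 = i + (α + 1) + 1 by ring] at hG
      have hz : Z * ((i : ℝ) * Z ^ (i - 1)) = i * Z ^ i := by
        rcases i with _ | i
        · simp
        · simp; ring
      rw [← hG]
      linear_combination (-(l.choose i : ℝ) * (1 / Real.Gamma (i + (α + 1) + 1)) * io (α + 1 + l + i) Z) * hz
    rw [h1, h0, hD, ← io_rec α Z, show α + 1 + 1 = α + 2 by ring]
    push_cast
    rw [show α + 1 + (l : ℝ) + 1 = α + (l + 1) + 1 by ring]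
    ring

/-- truncated monomials `x^(n-2k)/(n-2k)!` -/
noncomputable def gE (n k : ℕ) (x : ℝ) : ℝ :=
  if 2 * k ≤ n then x ^ (n - 2 * k) / (n - 2 * k).factorial else 0

lemma gE_of_lt {n k : ℕ} (h : n < 2 * k) (x : ℝ) : gE n k x = 0 := by
  unfold gE; rw [if_neg (by omega)]

lemma hasDerivAt_gE (n k : ℕ) (x : ℝ) : HasDerivAt (gE n k) (gE (n + 1) (k + 1) x) x := by
  unfold gE
  by_cases h : 2 * k ≤ n
  · by_cases h2 : 2 * k = n
    · subst h2
      rw [if_neg (by omega)]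
      simpa using hasDerivAt_const x (1 : ℝ)
    · rw [if_pos (by omega)]
      obtain ⟨m, hm⟩ : ∃ m, n - 2 * k = m + 1 := ⟨n - 2 * k - 1, by omega⟩
      have hm2 : n + 1 - 2 * (k + 1) = m := by omega
      simp only [h, if_true, hm, hm2]
      refine ((hasDerivAt_pow (m + 1) x).div_const _).congr_deriv ?_
      rw [Nat.factorial_succ]; push_cast; field_simp
  · rw [if_neg (by omega)]
    simp only [h, if_false]
    exact hasDerivAt_const x 0

lemma gE_mul (n k : ℕ) (x : ℝ) : x * gE n k x = ((n : ℝ) + 1 - 2 * k) * gE (n + 1) k x := by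
  unfold gE
  by_cases h : 2 * k ≤ n
  · rw [if_pos h, if_pos (by omega)]
    obtain ⟨m, rfl⟩ := Nat.exists_eq_add_of_le h
    rw [show 2 * k + m - 2 * k = m by omega, show 2 * k + m + 1 - 2 * k = m + 1 by omega,
      Nat.factorial_succ]
    push_cast; field_simp; ring
  · rw [if_neg h]
    by_cases h2 : 2 * k = n + 1
    · have : (n : ℝ) + 1 - 2 * k = 0 := by
        have : ((2 * k : ℕ) : ℝ) = ((n + 1 : ℕ) : ℝ) := by rw [h2]
        push_cast at this; linarith
      rw [this]; simp
    · rw [if_neg (by omega)]; simp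

lemma gE_mul' (n k : ℕ) (x : ℝ) : x * gE (n + 1) (k + 1) x = ((n : ℝ) - 2 * k) * gE n k x := by
  have h := gE_mul (n + 1) (k + 1) x
  have e : gE (n + 1 + 1) (k + 1) x = gE n k x := by
    unfold gE
    rw [show n + 1 + 1 - 2 * (k + 1) = n - 2 * k by omega]
    by_cases h : 2 * k ≤ n
    · rw [if_pos h, if_pos (by omega)]
    · rw [if_neg h, if_neg (by omega)]
  rw [h, e]; push_cast; ring

lemma gegen_eq (n M : ℕ) (hM : n < 2 * M) (l x : ℝ) :
    gegenbauerCt n l x = ∑ k ∈ Finset.range M, (-1) ^ k * Real.Gamma (l + n - k) / k.factorial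
      * gE n k (2 * x) := by
  unfold gegenbauerCt
  have hs : Finset.range (n / 2 + 1) ⊆ Finset.range M := Finset.range_subset_range.2 (by omega)
  rw [← Finset.sum_subset hs]
  · refine Finset.sum_congr rfl fun k hk => ?_
    unfold gE
    rw [if_pos (by have := Finset.mem_range.1 hk; omega)]
    field_simp
  · intro k _ hk
    rw [gE_of_lt (by have : ¬ k < n / 2 + 1 := fun h => hk (Finset.mem_range.2 h)
                     omega), mul_zero]

/-- sum appearing from the Taylor expansion -/
noncomputable def gT (M j : ℕ) (α c : ℝ) : ℝ :=
  ∑ i ∈ Finset.range M, ioC α i * ((-((1 - c ^ 2) / 4)) ^ i * gE j i c)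

lemma hasDerivAt_gT (M j : ℕ) (hM : j < 2 * M) (α c : ℝ) :
    HasDerivAt (gT (M + 1) (j + 1) α) ((j + 2 * α + 2) / 2 * gT (M + 1) j (α + 1) c) c := by
  have hu : HasDerivAt (fun c : ℝ => -((1 - c ^ 2) / 4)) (c / 2) c := by
    have := (((hasDerivAt_pow 2 c).const_sub 1).div_const 4).neg
    refine this.congr_deriv ?_
    simp; ring
  have h : HasDerivAt (gT (M + 1) (j + 1) α) (∑ i ∈ Finset.range (M + 1), ioC α i *
      ((i * (-((1 - c ^ 2) / 4)) ^ (i - 1) * (c / 2)) * gE (j + 1) i c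
        + (-((1 - c ^ 2) / 4)) ^ i * gE (j + 1 + 1) (i + 1) c)) c := by
    unfold gT
    refine HasDerivAt.fun_sum fun i _ => ?_
    exact ((hu.pow i).mul (hasDerivAt_gE (j + 1) i c)).const_mul _
  refine h.congr_deriv ?_
  have e0 : ∀ i, gE (j + 1 + 1) (i + 1) c = gE j i c := by
    intro i
    unfold gE
    rw [show j + 1 + 1 - 2 * (i + 1) = j - 2 * i by omega]
    by_cases h : 2 * i ≤ j
    · rw [if_pos h, if_pos (by omega)]
    · rw [if_neg h, if_neg (by omega)]
  simp only [e0, mul_add, Finset.sum_add_distrib]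
  rw [Finset.sum_range_succ']
  have e1 : ∑ i ∈ Finset.range M, ioC α (i + 1) *
      (((i + 1 : ℕ) : ℝ) * (-((1 - c ^ 2) / 4)) ^ (i + 1 - 1) * (c / 2) * gE (j + 1) (i + 1) c)
      = ∑ i ∈ Finset.range (M + 1), ((j : ℝ) - 2 * i) / 2 *
        (ioC (α + 1) i * ((-((1 - c ^ 2) / 4)) ^ i * gE j i c)) := by
    rw [Finset.sum_range_succ _ M, gE_of_lt (n := j) (k := M) hM]
    simp only [mul_zero, add_zero]
    refine Finset.sum_congr rfl fun i _ => ?_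
    have h1 := ioC_succ α i
    have h2 := gE_mul' j i c
    rw [← h1, add_tsub_cancel_right]
    push_cast
    linear_combination (ioC α (i + 1) * (i + 1) * (-((1 - c ^ 2) / 4)) ^ i / 2) * h2
  rw [e1]
  simp only [Nat.cast_zero, zero_mul, mul_zero, add_zero]
  rw [← Finset.sum_add_distrib]
  unfold gT
  rw [Finset.mul_sum]
  refine Finset.sum_congr rfl fun i _ => ?_
  rw [← ioC_gamma α i]; ring

lemma hasDerivAt_gegen (n : ℕ) (l c : ℝ) :
    HasDerivAt (gegenbauerCt (n + 1) l) (2 * gegenbauerCt n (l + 1) c) c := by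
  have e : gegenbauerCt (n + 1) l = fun x => ∑ k ∈ Finset.range (n + 2),
      (-1) ^ k * Real.Gamma (l + (n + 1 : ℕ) - k) / k.factorial * gE (n + 1) k (2 * x) :=
    funext fun x => gegen_eq (n + 1) (n + 2) (by omega) l x
  rw [e, gegen_eq n (n + 2) (by omega) (l + 1) c, Finset.mul_sum]
  refine HasDerivAt.fun_sum fun k _ => ?_
  have h2 : HasDerivAt (fun x : ℝ => 2 * x) 2 c := by simpa using (hasDerivAt_id c).const_mul 2
  have := ((hasDerivAt_gE (n + 1) k (2 * c)).comp c h2).const_mul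
    ((-1) ^ k * Real.Gamma (l + (n + 1 : ℕ) - k) / k.factorial)
  refine this.congr_deriv ?_
  have e0 : gE (n + 1 + 1) (k + 1) (2 * c) = gE n k (2 * c) := by
    unfold gE
    rw [show n + 1 + 1 - 2 * (k + 1) = n - 2 * k by omega]
    by_cases h : 2 * k ≤ n
    · rw [if_pos h, if_pos (by omega)]
    · rw [if_neg h, if_neg (by omega)]
  rw [e0]
  push_cast
  rw [show l + ((n : ℝ) + 1) - k = l + 1 + n - k by ring]
  ring

lemma gE_zero (n k : ℕ) : gE n k 0 = if 2 * k = n then 1 else 0 := by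
  unfold gE
  by_cases h : 2 * k = n
  · subst h; simp
  · rw [if_neg h]
    by_cases h2 : 2 * k ≤ n
    · rw [if_pos h2, zero_pow (by omega)]; simp
    · rw [if_neg h2]

lemma gT_zero_eq (M j : ℕ) (hM : j < 2 * M) {α : ℝ} (hα : -1 / 2 < α) :
    gT M j α 0 = 4 ^ α / (√π * Real.Gamma (j + 2 * α + 1)) * gegenbauerCt j (α + 1 / 2) 0 := by
  rw [gegen_eq j M hM]
  unfold gT
  simp only [mul_zero, gE_zero]
  rw [Finset.mul_sum]
  refine Finset.sum_congr rfl fun i _ => ?_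
  by_cases h : 2 * i = j
  · rw [if_pos h]
    subst h
    have hd := Real.Gamma_mul_Gamma_add_half (i + α + 1 / 2)
    have hi : (0 : ℝ) ≤ i := Nat.cast_nonneg i
    have g1 : 0 < Real.Gamma (i + α + 1) := Real.Gamma_pos_of_pos (by linarith)
    have g2 : 0 < Real.Gamma ((2 * i : ℕ) + 2 * α + 1) := Real.Gamma_pos_of_pos (by push_cast; linarith)
    have g3 : 0 < √π := Real.sqrt_pos.2 Real.pi_pos
    rw [show (i : ℝ) + α + 1 / 2 + 1 / 2 = i + α + 1 by ring,
      show 2 * ((i : ℝ) + α + 1 / 2) = (2 * i : ℕ) + 2 * α + 1 by push_cast; ring,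
      show (1 : ℝ) - ((2 * i : ℕ) + 2 * α + 1) = -(2 * (i + α)) by push_cast; ring,
      Real.rpow_neg (by norm_num), Real.rpow_mul (by norm_num), Real.rpow_add (by norm_num)] at hd
    rw [show α + 1 / 2 + ((2 * i : ℕ) : ℝ) - i = i + α + 1 / 2 by push_cast; ring]
    have e4 : (2 : ℝ) ^ (2 : ℝ) = 4 := by norm_num
    rw [e4, Real.rpow_natCast] at hd
    unfold ioC
    have e5 : (-((1 - (0 : ℝ) ^ 2) / 4)) ^ i = (-1) ^ i / 4 ^ i := by
      rw [← div_pow]; congr 1; ring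
    rw [e5]
    have h4 : (0 : ℝ) < 4 ^ α := by positivity
    have h4' : (0 : ℝ) < 4 ^ i := by positivity
    have hf : (0 : ℝ) < i.factorial := by positivity
    have hd' : Real.Gamma (i + α + 1 / 2) = Real.Gamma ((2 * i : ℕ) + 2 * α + 1) * (4 ^ i * 4 ^ α)⁻¹ * √π
        / Real.Gamma (i + α + 1) := by
      rw [← hd]; field_simp
    rw [hd']
    generalize Real.Gamma ((2 * i : ℕ) + 2 * α + 1) = G at g2 ⊢
    field_simp
  · rw [if_neg h]; simp

lemma gT_eq (j : ℕ) : ∀ (M : ℕ), j < 2 * M → ∀ {α : ℝ}, -1 / 2 < α → ∀ c : ℝ,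
    gT (M + 1) j α c = 4 ^ α / (√π * Real.Gamma (j + 2 * α + 1)) * gegenbauerCt j (α + 1 / 2) c := by
  induction j with
  | zero =>
    intro M hM α hα c
    have h0 := gT_zero_eq (M + 1) 0 (by omega) hα
    have e1 : gT (M + 1) 0 α c = gT (M + 1) 0 α 0 := by
      unfold gT
      refine Finset.sum_congr rfl fun i _ => ?_
      rcases i with _ | i
      · simp [gE]
      · rw [gE_of_lt (by omega), gE_of_lt (by omega)]; simp
    have e2 : gegenbauerCt 0 (α + 1 / 2) c = gegenbauerCt 0 (α + 1 / 2) 0 := by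
      unfold gegenbauerCt; simp
    rw [e1, e2, h0]
  | succ j ih =>
    intro M hM α hα c
    have h0 := gT_zero_eq (M + 1) (j + 1) (by omega) hα
    set K : ℝ := 4 ^ α / (√π * Real.Gamma ((j + 1 : ℕ) + 2 * α + 1)) with hK
    have hd : ∀ x, HasDerivAt (fun c => gT (M + 1) (j + 1) α c - K * gegenbauerCt (j + 1) (α + 1 / 2) c) 0 x := by
      intro x
      have h1 := (hasDerivAt_gT M j (by omega) α x).sub
        ((hasDerivAt_gegen j (α + 1 / 2) x).const_mul K)
      refine h1.congr_deriv ?_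
      rw [ih M (by omega) (α := α + 1) (by linarith) x, hK]
      have e1 : (4 : ℝ) ^ (α + 1) = 4 ^ α * 4 := by rw [Real.rpow_add_one (by norm_num)]
      have hj : (0 : ℝ) ≤ j := Nat.cast_nonneg j
      have hpos : (0 : ℝ) < (j : ℝ) + 2 * α + 2 := by linarith
      have e2 : Real.Gamma (j + 2 * (α + 1) + 1) = (j + 2 * α + 2) * Real.Gamma ((j + 1 : ℕ) + 2 * α + 1) := by
        rw [show (j : ℝ) + 2 * (α + 1) + 1 = (j + 2 * α + 2) + 1 by ring, Real.Gamma_add_one hpos.ne']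
        congr 2; push_cast; ring
      have g2 : 0 < Real.Gamma ((j + 1 : ℕ) + 2 * α + 1) := Real.Gamma_pos_of_pos (by push_cast; linarith)
      have g3 : 0 < √π := Real.sqrt_pos.2 Real.pi_pos
      rw [e1, e2, show α + 1 + 1 / 2 = α + 1 / 2 + 1 by ring]
      field_simp; ring
    have hc := is_const_of_deriv_eq_zero (fun x => (hd x).differentiableAt) (fun x => (hd x).deriv) c 0
    rw [h0] at hc
    linarith


/-! ### Part 5: Laplace type integrals -/

lemma lap_integrable {p r : ℝ} (hp : -1 < p) (hr : 0 < r) :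
    IntegrableOn (fun W : ℝ => W ^ p * Real.exp (-(r * W))) (Set.Ioi 0) := by
  have := integrableOn_rpow_mul_exp_neg_mul_rpow (s := p) (p := 1) (b := r) hp one_pos hr
  refine this.congr_fun (fun W _ => ?_) measurableSet_Ioi
  simp

lemma lap_value {p r : ℝ} (hp : -1 < p) (hr : 0 < r) :
    ∫ W in Set.Ioi (0 : ℝ), W ^ p * Real.exp (-(r * W)) = (1 / r) ^ (p + 1) * Real.Gamma (p + 1) := by
  have := Real.integral_rpow_mul_exp_neg_mul_Ioi (a := p + 1) (r := r) (by linarith) hr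
  rwa [add_sub_cancel_right] at this

lemma lap_termwise {a p : ℕ → ℝ} {r B : ℝ} {h : ℝ → ℝ} (hr : 0 < r) (hp : ∀ m, -1 < p m)
    (hh : ContinuousOn h (Set.Ioi 0)) (hB : ∀ W > 0, |h W| ≤ B)
    (hs : Summable fun m => |a m| * ((1 / r) ^ (p m + 1) * Real.Gamma (p m + 1))) :
    HasSum (fun m => ∫ W in Set.Ioi (0 : ℝ), a m * (W ^ p m * Real.exp (-(r * W))) * h W)
      (∫ W in Set.Ioi (0 : ℝ), ∑' m, a m * (W ^ p m * Real.exp (-(r * W))) * h W) := by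
  have hB0 : 0 ≤ B := (abs_nonneg _).trans (hB 1 one_pos)
  have hIntg : ∀ m, IntegrableOn (fun W => a m * (W ^ p m * Real.exp (-(r * W))) * h W) (Set.Ioi 0) := by
    intro m
    refine Integrable.mul_bdd (c := B) ((lap_integrable (hp m) hr).const_mul (a m))
      (hh.aestronglyMeasurable measurableSet_Ioi) ?_
    exact (ae_restrict_iff' measurableSet_Ioi).2 (Eventually.of_forall fun s hs => hB s hs)
  refine hasSum_integral_of_summable_integral_norm hIntg ?_
  refine Summable.of_nonneg_of_le (fun m => integral_nonneg fun _ => norm_nonneg _) (fun m => ?_)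
    (hs.mul_left B)
  have hi2 : IntegrableOn (fun W : ℝ => B * (|a m| * (W ^ p m * Real.exp (-(r * W))))) (Set.Ioi 0) :=
    ((lap_integrable (hp m) hr).const_mul _).const_mul _
  refine (setIntegral_mono_on (hIntg m).norm hi2 measurableSet_Ioi fun W hW => ?_).trans (le_of_eq ?_)
  · have hW' : 0 < W := hW
    rw [norm_mul, norm_mul, Real.norm_eq_abs, Real.norm_eq_abs, Real.norm_eq_abs, mul_comm,
      abs_of_pos (show 0 < W ^ p m * Real.exp (-(r * W)) by positivity)]
    exact mul_le_mul_of_nonneg_right (hB W hW) (by positivity)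
  · rw [integral_const_mul, integral_const_mul, lap_value (hp m) hr]

lemma ioC_mul_Gamma {γ : ℝ} (hγ : -1 < γ) (m : ℕ) : ioC γ m * Real.Gamma (γ + m + 1) = 1 / m.factorial := by
  have g : 0 < Real.Gamma (γ + m + 1) := Real.Gamma_pos_of_pos (by
    have : (0 : ℝ) ≤ m := Nat.cast_nonneg m
    linarith)
  unfold ioC
  rw [show (m : ℝ) + γ + 1 = γ + m + 1 by ring]
  field_simp

lemma summable_exp_norm (x : ℝ) : Summable fun m : ℕ => ‖x ^ m / m.factorial‖ :=
  (Real.summable_pow_div_factorial x).norm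

lemma lap_io {γ r : ℝ} (hγ : -1 < γ) (hr : 0 < r) (y : ℝ) :
    ∫ W in Set.Ioi (0 : ℝ), W ^ γ * Real.exp (-(r * W)) * io γ (-(y * W))
      = (1 / r) ^ (γ + 1) * Real.exp (-(y / r)) := by
  have hterm : ∀ m : ℕ, ioC γ m * (-y) ^ m * ((1 / r) ^ (γ + m + 1) * Real.Gamma (γ + m + 1))
      = (1 / r) ^ (γ + 1) * ((-(y / r)) ^ m / m.factorial) := by
    intro m
    have h1 := ioC_mul_Gamma hγ m
    have h2 : (1 / r) ^ (γ + m + 1) = (1 / r) ^ (γ + 1) * (1 / r) ^ m := by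
      rw [← Real.rpow_natCast, ← Real.rpow_add (by positivity)]; congr 1; ring
    have h3 : (-(y / r)) ^ m = (-y) ^ m * (1 / r) ^ m := by rw [← mul_pow]; congr 1; ring
    rw [h2, h3]
    linear_combination ((-y) ^ m * ((1 / r) ^ (γ + 1) * (1 / r) ^ m)) * h1
  have hp : ∀ m : ℕ, -1 < γ + m := fun m => by
    have : (0 : ℝ) ≤ m := Nat.cast_nonneg m
    linarith
  have h := lap_termwise (a := fun m => ioC γ m * (-y) ^ m) (p := fun m => γ + m) (h := fun _ => 1)
    (B := 1) hr hp continuousOn_const (fun _ _ => by simp) (by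
      refine ((summable_exp_norm (-(y / r))).mul_left ((1 / r) ^ (γ + 1))).congr fun m => ?_
      have hG : 0 < Real.Gamma (γ + m + 1) := Real.Gamma_pos_of_pos (by linarith [hp m])
      have e : |ioC γ m * (-y) ^ m| * ((1 / r) ^ (γ + m + 1) * Real.Gamma (γ + m + 1))
          = |ioC γ m * (-y) ^ m * ((1 / r) ^ (γ + m + 1) * Real.Gamma (γ + m + 1))| := by
        rw [abs_mul _ ((1 / r) ^ (γ + m + 1) * Real.Gamma (γ + m + 1)), abs_of_pos (show
          0 < (1 / r) ^ (γ + m + 1) * Real.Gamma (γ + m + 1) by positivity)]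
      rw [e, hterm m, abs_mul, abs_of_pos (show 0 < (1 / r) ^ (γ + 1) by positivity), Real.norm_eq_abs])
  have e1 : ∀ m : ℕ, ∫ W in Set.Ioi (0 : ℝ), ioC γ m * (-y) ^ m * (W ^ (γ + m) * Real.exp (-(r * W))) * 1
      = (1 / r) ^ (γ + 1) * ((-(y / r)) ^ m / m.factorial) := by
    intro m
    simp only [mul_one]
    rw [integral_const_mul, lap_value (hp m) hr, hterm m]
  simp only [e1] at h
  have e2 : ∫ W in Set.Ioi (0 : ℝ), ∑' m : ℕ, ioC γ m * (-y) ^ m * (W ^ (γ + m) * Real.exp (-(r * W))) * 1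
      = ∫ W in Set.Ioi (0 : ℝ), W ^ γ * Real.exp (-(r * W)) * io γ (-(y * W)) := by
    refine setIntegral_congr_fun measurableSet_Ioi fun W hW => ?_
    have hW' : 0 < W := hW
    simp only [io]
    rw [← tsum_mul_left]
    congr 1; ext m
    rw [Real.rpow_add_natCast hW'.ne', show -(y * W) = -y * W by ring, mul_pow]; ring
  rw [e2] at h
  have hexp := (NormedSpace.exp_series_hasSum_exp' (𝕂 := ℝ) (-(y / r))).mul_left ((1 / r) ^ (γ + 1))
  have e3 : NormedSpace.exp (-(y / r)) = Real.exp (-(y / r)) := by rw [Real.exp_eq_exp_ℝ]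
  rw [e3] at hexp
  refine h.unique (hexp.congr_fun ?_)
  intro m
  simp only [smul_eq_mul]; ring

lemma lap_io_integrable {γ r : ℝ} (hγ : -1 / 2 ≤ γ) (hr : 0 < r) {y p : ℝ} (hp : -1 < p) (hy : 0 ≤ y) :
    IntegrableOn (fun W => W ^ p * Real.exp (-(r * W)) * io γ (-(y * W))) (Set.Ioi 0) := by
  refine Integrable.mul_bdd (c := 1 / Real.Gamma (γ + 1)) (lap_integrable hp hr)
      (((continuous_io γ).comp (by fun_prop : Continuous fun W : ℝ => -(y * W))).aestronglyMeasurable) ?_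
  refine (ae_restrict_iff' measurableSet_Ioi).2 (Eventually.of_forall fun W hW => ?_)
  exact io_bound hγ (mul_nonneg hy (le_of_lt hW))

lemma weber {β r y η : ℝ} (hβ : -1 / 2 ≤ β) (hr : 0 < r) (hy : 0 ≤ y) :
    ∫ W in Set.Ioi (0 : ℝ), W ^ β * Real.exp (-(r * W)) * io β (-(y * W)) * io β (-(η * W))
      = (1 / r) ^ (β + 1) * Real.exp (-((y + η) / r)) * io β (y * η / r ^ 2) := by
  have hβ1 : -1 < β := by linarith
  have hp : ∀ m : ℕ, -1 < β + m := fun m => by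
    have : (0 : ℝ) ≤ m := Nat.cast_nonneg m
    linarith
  have hG : ∀ m : ℕ, 0 < Real.Gamma (β + m + 1) := fun m => Real.Gamma_pos_of_pos (by linarith [hp m])
  have h := lap_termwise (a := fun m => ioC β m * (-η) ^ m) (p := fun m => β + m)
    (h := fun W => io β (-(y * W))) (B := 1 / Real.Gamma (β + 1)) hr hp
    ((continuous_io β).comp (by fun_prop)).continuousOn (fun W hW => io_bound hβ (by positivity)) (by
      refine ((summable_exp_norm (-(η / r))).mul_left ((1 / r) ^ (β + 1))).congr fun m => ?_
      have h1 := ioC_mul_Gamma hβ1 m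
      have h2 : (1 / r) ^ (β + m + 1) = (1 / r) ^ (β + 1) * (1 / r) ^ m := by
        rw [← Real.rpow_natCast, ← Real.rpow_add (by positivity)]; congr 1; ring
      have h3 : (-(η / r)) ^ m = (-η) ^ m * (1 / r) ^ m := by rw [← mul_pow]; congr 1; ring
      rw [h2, h3, norm_div, norm_mul, Real.norm_eq_abs, Real.norm_eq_abs, abs_mul,
        abs_of_pos (ioC_pos hβ1 m), abs_of_pos (show 0 < (1 / r) ^ m by positivity), Real.norm_natCast]
      linear_combination (-(|(-η) ^ m| * ((1 / r) ^ (β + 1) * (1 / r) ^ m))) * h1)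
  have e1 : ∀ n : ℕ, ∫ W in Set.Ioi (0 : ℝ),
      ioC β n * (-η) ^ n * (W ^ (β + n) * Real.exp (-(r * W))) * io β (-(y * W))
      = ((1 / r) ^ (β + 1) * Real.exp (-(y / r))) * ∑ i ∈ Finset.range (n + 1),
        (ioC β i * (y * η / r ^ 2) ^ i) * ((-(η / r)) ^ (n - i) / (n - i).factorial) := by
    intro n
    have hpt : ∀ W ∈ Set.Ioi (0 : ℝ), ioC β n * (-η) ^ n * (W ^ (β + n) * Real.exp (-(r * W))) * io β (-(y * W))
        = ∑ i ∈ Finset.range (n + 1), (1 / n.factorial * (-η) ^ n * ((n.choose i : ℝ) * (1 / Real.Gamma (i + β + 1)) * (-y) ^ i)) *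
          (W ^ (β + n + i) * Real.exp (-(r * W)) * io (β + n + i) (-(y * W))) := by
      intro W hW
      have hW' : 0 < W := hW
      have hpi := prod_identity n β (-(y * W))
      have e : io β (-(y * W)) = Real.Gamma (β + n + 1) * ∑ i ∈ Finset.range (n + 1),
          (n.choose i : ℝ) * (1 / Real.Gamma (i + β + 1)) * ((-(y * W)) ^ i * io (β + n + i) (-(y * W))) := by
        rw [hpi]; have := hG n; field_simp
      rw [e, Finset.mul_sum, Finset.mul_sum]
      refine Finset.sum_congr rfl fun i _ => ?_
      rw [Real.rpow_add_natCast hW'.ne' (β + n) i, show -(y * W) = -y * W by ring, mul_pow,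
        ← ioC_mul_Gamma hβ1 n]
      ring
    rw [setIntegral_congr_fun measurableSet_Ioi hpt, integral_finsetSum]
    · rw [Finset.mul_sum]
      refine Finset.sum_congr rfl fun i hi => ?_
      have hin : i ≤ n := Nat.lt_succ_iff.1 (Finset.mem_range.1 hi)
      obtain ⟨k, rfl⟩ := Nat.exists_eq_add_of_le hin
      have hi0 : (0 : ℝ) ≤ i := Nat.cast_nonneg i
      rw [integral_const_mul, lap_io (by linarith [hp (i + k)]) hr, add_tsub_cancel_left,
        Nat.choose_eq_factorial_div_factorial hin, add_tsub_cancel_left,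
        Nat.cast_div (Nat.factorial_mul_factorial_dvd_factorial_add i k) (by positivity)]
      have h2 : (1 / r) ^ (β + ((i + k : ℕ) : ℝ) + i + 1) = (1 / r) ^ (β + 1) * (1 / r) ^ (i + k + i) := by
        rw [← Real.rpow_natCast, ← Real.rpow_add (by positivity)]; congr 1; push_cast; ring
      have h3 : (-η) ^ (i + k) * (-y) ^ i * (1 / r) ^ (i + k + i) = (y * η / r ^ 2) ^ i * (-(η / r)) ^ k := by
        rw [show y * η / r ^ 2 = (-η) * (-y) * (1 / r) * (1 / r) by ring, show -(η / r) = -η * (1 / r) by ring]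
        simp only [mul_pow, pow_add]; ring
      rw [h2]
      unfold ioC
      push_cast
      have hf1 : ((i + k).factorial : ℝ) ≠ 0 := by positivity
      have hf2 : (i.factorial : ℝ) ≠ 0 := by positivity
      have hf3 : (k.factorial : ℝ) ≠ 0 := by positivity
      calc _ = (1 / r) ^ (β + 1) * Real.exp (-(y / r)) * (1 / Real.Gamma (i + β + 1)) * (1 / i.factorial) * (1 / k.factorial)
            * ((-η) ^ (i + k) * (-y) ^ i * (1 / r) ^ (i + k + i)) := by
              field_simp
        _ = _ := by rw [h3]; field_simp
    · intro i _
      have hi0 : (0 : ℝ) ≤ i := Nat.cast_nonneg i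
      have hn0 : (0 : ℝ) ≤ n := Nat.cast_nonneg n
      exact (lap_io_integrable (by linarith) hr (by linarith) hy).const_mul _
  simp only [e1] at h
  have e2 : ∫ W in Set.Ioi (0 : ℝ), ∑' m : ℕ, ioC β m * (-η) ^ m * (W ^ (β + m) * Real.exp (-(r * W))) * io β (-(y * W))
      = ∫ W in Set.Ioi (0 : ℝ), W ^ β * Real.exp (-(r * W)) * io β (-(y * W)) * io β (-(η * W)) := by
    refine setIntegral_congr_fun measurableSet_Ioi fun W hW => ?_
    have hW' : 0 < W := hW
    show _ = W ^ β * Real.exp (-(r * W)) * io β (-(y * W)) * ∑' m : ℕ, ioC β m * (-(η * W)) ^ m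
    rw [← tsum_mul_left]
    congr 1; ext m
    rw [Real.rpow_add_natCast hW'.ne', show -(η * W) = -η * W by ring, mul_pow]; ring
  rw [e2] at h
  have hc := (hasSum_sum_range_mul_of_summable_norm (summable_io_norm β (y * η / r ^ 2))
    (summable_exp_norm (-(η / r)))).mul_left ((1 / r) ^ (β + 1) * Real.exp (-(y / r)))
  rw [h.unique hc]
  have e3 : ∑' n : ℕ, (-(η / r)) ^ n / n.factorial = Real.exp (-(η / r)) := by
    rw [Real.exp_eq_exp_ℝ, NormedSpace.exp_eq_tsum_div]
  have e4 : Real.exp (-((y + η) / r)) = Real.exp (-(y / r)) * Real.exp (-(η / r)) := by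
    rw [← Real.exp_add]; congr 1; ring
  rw [e3, e4]
  show _ * (io β (y * η / r ^ 2) * _) = _
  ring


lemma binom_summable {a q : ℝ} (ha : 0 < a) (hq : 0 ≤ q) (hq1 : q < 1) :
    Summable fun m : ℕ => Real.Gamma (a + m) / m.factorial * q ^ m := by
  refine summable_of_ratio_norm_eventually_le (r := (1 + q) / 2) (by linarith) ?_
  obtain ⟨N, hN⟩ := exists_nat_ge (q * a / ((1 - q) / 2))
  filter_upwards [eventually_ge_atTop N] with m hm
  have hm' : (N : ℝ) ≤ m := by exact_mod_cast hm
  have hm0 : (0 : ℝ) ≤ m := Nat.cast_nonneg m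
  have h1 : q * a ≤ (1 - q) / 2 * m := by
    have := (div_le_iff₀ (by linarith : (0 : ℝ) < (1 - q) / 2)).1 (hN.trans hm')
    linarith
  have g : 0 < Real.Gamma (a + m) := Real.Gamma_pos_of_pos (by linarith)
  have e : Real.Gamma (a + (m + 1 : ℕ)) = (a + m) * Real.Gamma (a + m) := by
    rw [← Real.Gamma_add_one (by linarith)]; congr 1; push_cast; ring
  rw [e, Nat.factorial_succ, pow_succ, Real.norm_of_nonneg (by positivity), Real.norm_of_nonneg (by positivity)]
  push_cast
  have hf : (0 : ℝ) < m.factorial := by positivity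
  have e2 : (a + m) * Real.Gamma (a + m) / ((m + 1) * m.factorial) * (q ^ m * q)
      = (q * (a + m) / (m + 1)) * (Real.Gamma (a + m) / m.factorial * q ^ m) := by
    field_simp
  rw [e2]
  refine mul_le_mul_of_nonneg_right ?_ (by positivity)
  rw [div_le_iff₀ (by linarith)]
  nlinarith

lemma binom_hasSum {a q : ℝ} (ha : 0 < a) (hq : 0 ≤ q) (hq1 : q < 1) :
    HasSum (fun m : ℕ => Real.Gamma (a + m) / m.factorial * q ^ m) (Real.Gamma a * (1 - q) ^ (-a)) := by
  have hp : ∀ m : ℕ, -1 < a - 1 + m := fun m => by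
    have : (0 : ℝ) ≤ m := Nat.cast_nonneg m
    linarith
  have h := lap_termwise (a := fun m => q ^ m / m.factorial) (p := fun m => a - 1 + m) (h := fun _ => 1)
    (B := 1) (r := 1) one_pos hp continuousOn_const (fun _ _ => by simp) (by
      refine (binom_summable ha hq hq1).congr fun m => ?_
      rw [abs_of_nonneg (by positivity), show a - 1 + m + 1 = a + m by ring]
      simp; ring)
  have e1 : ∀ m : ℕ, ∫ W in Set.Ioi (0 : ℝ), q ^ m / m.factorial * (W ^ (a - 1 + m) * Real.exp (-(1 * W))) * 1
      = Real.Gamma (a + m) / m.factorial * q ^ m := by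
    intro m
    simp only [mul_one]
    rw [integral_const_mul, lap_value (hp m) one_pos, show a - 1 + m + 1 = a + m by ring]
    simp; ring
  simp only [e1] at h
  have e2 : ∫ W in Set.Ioi (0 : ℝ), ∑' m : ℕ, q ^ m / m.factorial * (W ^ (a - 1 + m) * Real.exp (-(1 * W))) * 1
      = Real.Gamma a * (1 - q) ^ (-a) := by
    have h1q : 0 < 1 - q := by linarith
    have hv := lap_value (p := a - 1) (r := 1 - q) (by linarith) h1q
    rw [sub_add_cancel, one_div, Real.inv_rpow h1q.le, ← Real.rpow_neg h1q.le] at hv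
    rw [mul_comm, ← hv]
    refine setIntegral_congr_fun measurableSet_Ioi fun W hW => ?_
    have hW' : 0 < W := hW
    have e3 : Real.exp (-((1 - q) * W)) = Real.exp (-W) * ∑' m : ℕ, (q * W) ^ m / m.factorial := by
      have : ∑' m : ℕ, (q * W) ^ m / m.factorial = Real.exp (q * W) := by
        rw [Real.exp_eq_exp_ℝ, NormedSpace.exp_eq_tsum_div]
      rw [this, ← Real.exp_add]; congr 1; ring
    rw [e3, ← mul_assoc, ← tsum_mul_left]
    congr 1; ext m
    rw [Real.rpow_add_natCast hW'.ne', mul_pow, one_mul]; ring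
  rwa [e2] at h

lemma sint {β δ K a u κ : ℝ} (hβ : -1 < β) (hδ : -1 < δ) (ha : 0 < a) (hu : 0 < u) (hκ : 0 ≤ κ)
    (h4 : 4 * κ < u ^ 2)
    (hcoef : ∀ m : ℕ, ioC β m * Real.Gamma (δ + 2 * m + 1) = K * 4 ^ m * (Real.Gamma (a + m) / m.factorial)) :
    ∫ s in Set.Ioi (0 : ℝ), s ^ δ * Real.exp (-(u * s)) * io β (κ * s ^ 2)
      = K * (1 / u) ^ (δ + 1) * (Real.Gamma a * (1 - 4 * κ / u ^ 2) ^ (-a)) := by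
  have hp : ∀ m : ℕ, -1 < δ + 2 * m := fun m => by
    have : (0 : ℝ) ≤ m := Nat.cast_nonneg m
    linarith
  have hb := (binom_hasSum (q := 4 * κ / u ^ 2) ha (by positivity) (by
    rw [div_lt_one (by positivity)]; exact h4)).mul_left (K * (1 / u) ^ (δ + 1))
  have hterm : ∀ m : ℕ, ioC β m * κ ^ m * ((1 / u) ^ (δ + 2 * m + 1) * Real.Gamma (δ + 2 * m + 1))
      = K * (1 / u) ^ (δ + 1) * (Real.Gamma (a + m) / m.factorial * (4 * κ / u ^ 2) ^ m) := by
    intro m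
    have h2 : (1 / u) ^ (δ + 2 * m + 1) = (1 / u) ^ (δ + 1) * ((1 / u) ^ 2) ^ m := by
      rw [← pow_mul, ← Real.rpow_natCast, ← Real.rpow_add (by positivity)]; congr 1; push_cast; ring
    have h3 : (4 * κ / u ^ 2) ^ m = 4 ^ m * κ ^ m * ((1 / u) ^ 2) ^ m := by
      rw [← mul_pow, ← mul_pow]; congr 1; ring
    rw [h2, h3]
    linear_combination (κ ^ m * ((1 / u) ^ (δ + 1) * ((1 / u) ^ 2) ^ m)) * hcoef m
  have h := lap_termwise (a := fun m => ioC β m * κ ^ m) (p := fun m => δ + 2 * m) (h := fun _ => 1)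
    (B := 1) hu hp continuousOn_const (fun _ _ => by simp) (by
      refine hb.summable.congr fun m => ?_
      rw [← hterm m, abs_of_nonneg (mul_nonneg (ioC_pos hβ m).le (by positivity))])
  have e1 : ∀ m : ℕ, ∫ W in Set.Ioi (0 : ℝ), ioC β m * κ ^ m * (W ^ (δ + 2 * m) * Real.exp (-(u * W))) * 1
      = K * (1 / u) ^ (δ + 1) * (Real.Gamma (a + m) / m.factorial * (4 * κ / u ^ 2) ^ m) := by
    intro m
    simp only [mul_one]
    rw [integral_const_mul, lap_value (hp m) hu, hterm m]
  simp only [e1] at h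
  have e2 : ∫ W in Set.Ioi (0 : ℝ), ∑' m : ℕ, ioC β m * κ ^ m * (W ^ (δ + 2 * m) * Real.exp (-(u * W))) * 1
      = ∫ s in Set.Ioi (0 : ℝ), s ^ δ * Real.exp (-(u * s)) * io β (κ * s ^ 2) := by
    refine setIntegral_congr_fun measurableSet_Ioi fun W hW => ?_
    have hW' : 0 < W := hW
    simp only [io]
    rw [← tsum_mul_left]
    congr 1; ext m
    have : W ^ (δ + 2 * m) = W ^ δ * (W ^ 2) ^ m := by
      rw [← pow_mul, ← Real.rpow_natCast, ← Real.rpow_add hW']; congr 1; push_cast; ring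
    rw [this, mul_pow]; ring
  rw [e2] at h
  exact h.unique hb

lemma sint_integrable {β δ K a u κ : ℝ} (hβ : -1 < β) (hδ : -1 < δ) (ha : 0 < a) (hu : 0 < u) (hκ : 0 ≤ κ)
    (h4 : 4 * κ < u ^ 2) (hK : 0 < K)
    (hcoef : ∀ m : ℕ, ioC β m * Real.Gamma (δ + 2 * m + 1) = K * 4 ^ m * (Real.Gamma (a + m) / m.factorial)) :
    IntegrableOn (fun s => s ^ δ * Real.exp (-(u * s)) * io β (κ * s ^ 2)) (Set.Ioi 0) := by
  have h := sint hβ hδ ha hu hκ h4 hcoef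
  by_contra hn
  rw [IntegrableOn] at hn
  rw [integral_undef hn] at h
  have g := Real.Gamma_pos_of_pos ha
  have h5 : 0 < 1 - 4 * κ / u ^ 2 := by
    rw [sub_pos, div_lt_one (by positivity)]; exact h4
  have : 0 < K * (1 / u) ^ (δ + 1) * (Real.Gamma a * (1 - 4 * κ / u ^ 2) ^ (-a)) := by positivity
  linarith

lemma coef0 {β : ℝ} (hβ : -1 / 2 < β) (m : ℕ) : ioC β m * Real.Gamma (2 * β + 2 * m + 1)
    = 4 ^ β / √π * 4 ^ m * (Real.Gamma (β + 1 / 2 + m) / m.factorial) := by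
  have hm : (0 : ℝ) ≤ m := Nat.cast_nonneg m
  have hd := Real.Gamma_mul_Gamma_add_half (β + 1 / 2 + m)
  have g1 : 0 < Real.Gamma (m + β + 1) := Real.Gamma_pos_of_pos (by linarith)
  have g3 : 0 < √π := Real.sqrt_pos.2 Real.pi_pos
  rw [show β + 1 / 2 + m + 1 / 2 = m + β + 1 by ring,
    show 2 * (β + 1 / 2 + m) = 2 * β + 2 * m + 1 by ring,
    show 1 - (2 * β + 2 * m + 1) = -(2 * (β + m)) by ring, Real.rpow_neg (by norm_num),
    Real.rpow_mul (by norm_num), Real.rpow_add (by norm_num)] at hd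
  have e4 : (2 : ℝ) ^ (2 : ℝ) = 4 := by norm_num
  rw [e4, Real.rpow_natCast] at hd
  have h4 : (0 : ℝ) < 4 ^ β := by positivity
  have h4' : (0 : ℝ) < 4 ^ m := by positivity
  have e : Real.Gamma (2 * β + 2 * m + 1) = Real.Gamma (β + 1 / 2 + m) * Real.Gamma (m + β + 1) * (4 ^ β * 4 ^ m) / √π := by
    rw [hd]; field_simp
  rw [e]; unfold ioC
  field_simp

lemma coef1 {β : ℝ} (hβ : -1 < β) (m : ℕ) : ioC β m * Real.Gamma (2 * β + 1 + 2 * m + 1)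
    = 2 * 4 ^ β / √π * 4 ^ m * (Real.Gamma (β + 3 / 2 + m) / m.factorial) := by
  have hm : (0 : ℝ) ≤ m := Nat.cast_nonneg m
  have hd := Real.Gamma_mul_Gamma_add_half (m + β + 1)
  have g1 : 0 < Real.Gamma (m + β + 1) := Real.Gamma_pos_of_pos (by linarith)
  have g3 : 0 < √π := Real.sqrt_pos.2 Real.pi_pos
  rw [show m + β + 1 + 1 / 2 = β + 3 / 2 + m by ring,
    show 2 * (m + β + 1) = 2 * β + 1 + 2 * m + 1 by ring,
    show 1 - (2 * β + 1 + 2 * m + 1) = -(1 + 2 * (β + m)) by ring, Real.rpow_neg (by norm_num),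
    Real.rpow_add (by norm_num), Real.rpow_mul (by norm_num), Real.rpow_add (by norm_num), Real.rpow_one] at hd
  have e4 : (2 : ℝ) ^ (2 : ℝ) = 4 := by norm_num
  rw [e4, Real.rpow_natCast] at hd
  have h4 : (0 : ℝ) < 4 ^ β := by positivity
  have h4' : (0 : ℝ) < 4 ^ m := by positivity
  have e : Real.Gamma (2 * β + 1 + 2 * m + 1) = Real.Gamma (m + β + 1) * Real.Gamma (β + 3 / 2 + m) * (2 * (4 ^ β * 4 ^ m)) / √π := by
    rw [hd]; field_simp
  rw [e]; unfold ioC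
  field_simp

/-- differentiation under the integral sign for Bessel type kernels -/
lemma deriv_under {g : ℝ → ℝ} {γ y : ℝ} (hγ : -1 / 2 ≤ γ) (hy : 0 < y)
    (hg : IntegrableOn g (Set.Ioi 0)) (hg1 : IntegrableOn (fun W => W * g W) (Set.Ioi 0)) :
    HasDerivAt (fun y => ∫ W in Set.Ioi (0 : ℝ), g W * io γ (-(y * W)))
      (-∫ W in Set.Ioi (0 : ℝ), (W * g W) * io (γ + 1) (-(y * W))) y := by
  have hm : ∀ γ y : ℝ, AEStronglyMeasurable (fun W => io γ (-(y * W))) (volume.restrict (Set.Ioi (0 : ℝ))) :=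
    fun γ y => ((continuous_io γ).comp (by fun_prop : Continuous fun W : ℝ => -(y * W))).aestronglyMeasurable
  have h := hasDerivAt_integral_of_dominated_loc_of_deriv_le (μ := volume.restrict (Set.Ioi (0 : ℝ)))
    (F := fun y W => g W * io γ (-(y * W))) (F' := fun y W => -((W * g W) * io (γ + 1) (-(y * W)))) (x₀ := y)
    (s := Set.Ioi 0) (bound := fun W => ‖W * g W‖ * (1 / Real.Gamma (γ + 1 + 1)))
    (Ioi_mem_nhds hy) (Eventually.of_forall fun y => hg.aestronglyMeasurable.mul (hm γ y))
    (Integrable.mul_bdd (c := 1 / Real.Gamma (γ + 1)) hg (hm γ y)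
      ((ae_restrict_iff' measurableSet_Ioi).2 (Eventually.of_forall fun W hW =>
        io_bound hγ (mul_nonneg hy.le (le_of_lt hW)))))
    ((hg1.aestronglyMeasurable.mul (hm (γ + 1) y)).neg)
    ((ae_restrict_iff' measurableSet_Ioi).2 (Eventually.of_forall fun W hW x hx => by
      rw [norm_neg, norm_mul]
      refine mul_le_mul_of_nonneg_left ?_ (norm_nonneg _)
      exact io_bound (by linarith) (mul_nonneg (le_of_lt hx) (le_of_lt hW))))
    (hg1.norm.mul_const _)
    ((ae_restrict_iff' measurableSet_Ioi).2 (Eventually.of_forall fun W hW x hx => by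
      have h1 : HasDerivAt (fun x => -(x * W)) (-W) x := by
        simpa using ((hasDerivAt_id x).mul_const W).fun_neg
      refine (((hasDerivAt_io γ (-(x * W))).comp x h1).const_mul (g W)).congr_deriv ?_
      ring))
  refine h.2.congr_deriv ?_
  rw [integral_neg]

lemma weber' {β r y η : ℝ} (hβ : -1 / 2 ≤ β) (hr : 0 < r) (hy : 0 < y) (hη : 0 ≤ η) :
    ∫ W in Set.Ioi (0 : ℝ), W ^ (β + 1) * Real.exp (-(r * W)) * (io (β + 1) (-(y * W)) * io β (-(η * W)))
      = (1 / r) ^ (β + 1) * Real.exp (-((y + η) / r)) *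
        (1 / r * io β (y * η / r ^ 2) - η / r ^ 2 * io (β + 1) (y * η / r ^ 2)) := by
  have hd := deriv_under (g := fun W => W ^ β * Real.exp (-(r * W)) * io β (-(η * W))) hβ hy
    (lap_io_integrable hβ hr (by linarith) hη) (by
      refine IntegrableOn.congr_fun (lap_io_integrable (p := β + 1) hβ hr (by linarith) hη) (fun W hW => ?_) measurableSet_Ioi
      have hW' : 0 < W := hW
      rw [Real.rpow_add_one hW'.ne']; ring)
  have hd2 : HasDerivAt (fun y => (1 / r) ^ (β + 1) * Real.exp (-((y + η) / r)) * io β (y * η / r ^ 2))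
      ((1 / r) ^ (β + 1) * (Real.exp (-((y + η) / r)) * (-(1 / r))) * io β (y * η / r ^ 2)
        + (1 / r) ^ (β + 1) * Real.exp (-((y + η) / r)) * (io (β + 1) (y * η / r ^ 2) * (η / r ^ 2))) y := by
    have h1 : HasDerivAt (fun y => -((y + η) / r)) (-(1 / r)) y := by
      simpa using (((hasDerivAt_id y).add_const η).div_const r).fun_neg
    have h2 : HasDerivAt (fun y => y * η / r ^ 2) (η / r ^ 2) y := by
      simpa using ((hasDerivAt_id y).mul_const η).div_const (r ^ 2)
    exact (h1.exp.const_mul _).mul ((hasDerivAt_io β _).comp y h2)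
  have hu := hd.unique (hd2.congr_of_eventuallyEq (by
    filter_upwards [Ioi_mem_nhds hy] with x hx
    rw [← weber hβ hr (le_of_lt hx)]
    refine setIntegral_congr_fun measurableSet_Ioi fun W hW => ?_
    ring))
  have e : ∫ W in Set.Ioi (0 : ℝ), W ^ (β + 1) * Real.exp (-(r * W)) * (io (β + 1) (-(y * W)) * io β (-(η * W)))
      = ∫ W in Set.Ioi (0 : ℝ), W * (W ^ β * Real.exp (-(r * W)) * io β (-(η * W))) * io (β + 1) (-(y * W)) := by
    refine setIntegral_congr_fun measurableSet_Ioi fun W hW => ?_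
    have hW' : 0 < W := hW
    rw [Real.rpow_add_one hW'.ne']; ring
  rw [e]
  linear_combination -hu


noncomputable def psiT (l : ℝ) (M k : ℕ) (z c2 : ℝ) : ℝ :=
  (-1) ^ k * Real.Gamma (l + M - k) / k.factorial * gE M k (2 * z) * (z ^ 2 + c2) ^ (-l - M + k)

noncomputable def psi (l : ℝ) (M : ℕ) (z c2 : ℝ) : ℝ :=
  (-1) ^ M * M.factorial * ∑ k ∈ Finset.range (M + 1), psiT l M k z c2

lemma hasDerivAt_psi {l : ℝ} {M : ℕ} (hl : 0 < l + M) (hl0 : 0 ≤ l) {z c2 : ℝ} (hS : 0 < z ^ 2 + c2) :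
    HasDerivAt (fun z => psi l M z c2) (psi l (M + 1) z c2) z := by
  have hterm : ∀ k ∈ Finset.range (M + 1), HasDerivAt (fun z => psiT l M k z c2)
      (-(2 * ((k : ℝ) + 1)) * psiT l (M + 1) (k + 1) z c2 + -(((M : ℝ) + 1 - 2 * k)) * psiT l (M + 1) k z c2) z := by
    intro k _
    have h2 : HasDerivAt (fun z : ℝ => 2 * z) 2 z := by simpa using (hasDerivAt_id z).const_mul 2
    have h1 := (hasDerivAt_gE M k (2 * z)).comp z h2
    have h3 : HasDerivAt (fun z : ℝ => z ^ 2 + c2) (2 * z) z := by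
      simpa using ((hasDerivAt_id z).pow 2).add_const c2
    have h4 := h3.rpow_const (p := -l - M + k) (Or.inl hS.ne')
    have h5 := (h1.const_mul ((-1) ^ k * Real.Gamma (l + M - k) / k.factorial)).mul h4
    refine h5.congr_deriv ?_
    unfold psiT
    have e1 : l + ((M + 1 : ℕ) : ℝ) - ((k + 1 : ℕ) : ℝ) = l + M - k := by push_cast; ring
    have e2 : -l - ((M + 1 : ℕ) : ℝ) + ((k + 1 : ℕ) : ℝ) = -l - M + k := by push_cast; ring
    have e3 : -l - ((M + 1 : ℕ) : ℝ) + k = -l - M + k - 1 := by push_cast; ring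
    rw [e1, e2, e3]
    have hg := gE_mul M k (2 * z)
    have hk : (k.factorial : ℝ) ≠ 0 := by positivity
    have hk1 : (k : ℝ) + 1 ≠ 0 := by positivity
    have e4 : (-1 : ℝ) ^ k * Real.Gamma (l + M - k) / k.factorial * (gE (M + 1) (k + 1) (2 * z) * 2)
        = -(2 * ((k : ℝ) + 1)) * ((-1) ^ (k + 1) * Real.Gamma (l + M - k) / (k + 1).factorial
          * gE (M + 1) (k + 1) (2 * z)) := by
      rw [Nat.factorial_succ, pow_succ]; push_cast; field_simp
    have e5 : (-1 : ℝ) ^ k * Real.Gamma (l + M - k) / k.factorial * gE M k (2 * z) * (2 * z * (-l - M + k))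
        = -((M : ℝ) + 1 - 2 * k) * ((-1) ^ k * Real.Gamma (l + (M + 1 : ℕ) - k) / k.factorial
          * gE (M + 1) k (2 * z)) := by
      by_cases hkM : 2 * k ≤ M
      · have hpos : 0 < l + M - k := by
          have : 2 * (k : ℝ) ≤ M := by exact_mod_cast hkM
          have hM0 : (0 : ℝ) ≤ M := by positivity
          rcases hM0.eq_or_lt with h | h <;> linarith
        have : Real.Gamma (l + (M + 1 : ℕ) - k) = (l + M - k) * Real.Gamma (l + M - k) := by
          rw [← Real.Gamma_add_one hpos.ne']; congr 1; push_cast; ring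
        rw [this]
        linear_combination (-(-1) ^ k * Real.Gamma (l + M - k) * (l + M - k) / k.factorial) * hg
      · rw [gE_of_lt (by omega)] at hg ⊢
        have : ((M : ℝ) + 1 - 2 * k) * gE (M + 1) k (2 * z) = 0 := by rw [← hg]; ring
        linear_combination ((-1) ^ k * Real.Gamma (l + (M + 1 : ℕ) - k) / k.factorial) * this
    simp only [Function.comp]
    linear_combination ((z ^ 2 + c2) ^ (-l - M + k)) * e4 + ((z ^ 2 + c2) ^ (-l - M + k - 1)) * e5
  have h := (HasDerivAt.fun_sum hterm).const_mul ((-1) ^ M * (M.factorial : ℝ))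
  refine h.congr_deriv ?_
  rw [Finset.sum_add_distrib]
  have s1 : ∑ k ∈ Finset.range (M + 1), -(2 * ((k : ℝ) + 1)) * psiT l (M + 1) (k + 1) z c2
      = ∑ k ∈ Finset.range (M + 2), -(2 * (k : ℝ)) * psiT l (M + 1) k z c2 := by
    rw [Finset.sum_range_succ' _ (M + 1)]; simp
  have s2 : ∑ k ∈ Finset.range (M + 1), -((M : ℝ) + 1 - 2 * k) * psiT l (M + 1) k z c2
      = ∑ k ∈ Finset.range (M + 2), -((M : ℝ) + 1 - 2 * k) * psiT l (M + 1) k z c2 := by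
    rw [Finset.sum_range_succ _ (M + 1)]
    have : psiT l (M + 1) (M + 1) z c2 = 0 := by
      unfold psiT; rw [gE_of_lt (by omega)]; ring
    rw [this]; ring
  rw [s1, s2, ← Finset.sum_add_distrib]
  unfold psi
  rw [Nat.factorial_succ, pow_succ]
  have : ∑ k ∈ Finset.range (M + 2), (-(2 * (k : ℝ)) * psiT l (M + 1) k z c2 + -((M : ℝ) + 1 - 2 * k) * psiT l (M + 1) k z c2)
    = -((M : ℝ) + 1) * ∑ k ∈ Finset.range (M + 1 + 1), psiT l (M + 1) k z c2 := by
    rw [Finset.mul_sum]; refine Finset.sum_congr rfl fun k _ => by ring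
  rw [this]; push_cast; ring

lemma psi_scale (l : ℝ) (M : ℕ) {r : ℝ} (hr : 0 < r) {z c2 : ℝ} (hS : 0 < z ^ 2 + c2) :
    psi l M (z / r) (c2 / r ^ 2) = r ^ (M + 2 * l) * psi l M z c2 := by
  unfold psi
  rw [Finset.mul_sum, Finset.mul_sum, Finset.mul_sum]
  refine Finset.sum_congr rfl fun k _ => ?_
  unfold psiT
  by_cases hk : 2 * k ≤ M
  · have e1 : (z / r) ^ 2 + c2 / r ^ 2 = (z ^ 2 + c2) * (r ^ 2)⁻¹ := by field_simp
    rw [e1, Real.mul_rpow hS.le (by positivity), Real.inv_rpow (by positivity), ← Real.rpow_neg (by positivity),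
      ← Real.rpow_natCast r 2, ← Real.rpow_mul hr.le]
    have e2 : gE M k (2 * (z / r)) = gE M k (2 * z) * r ^ (-((M : ℝ) - 2 * k)) := by
      unfold gE
      rw [if_pos hk, if_pos hk, Real.rpow_neg hr.le]
      have : r ^ ((M : ℝ) - 2 * k) = r ^ (M - 2 * k) := by
        rw [← Real.rpow_natCast, Nat.cast_sub hk]; push_cast; rfl
      rw [this, show 2 * (z / r) = (2 * z) / r by ring, div_pow]; field_simp
    rw [e2]
    have e3 : r ^ ((M : ℝ) + 2 * l) = r ^ (-((M : ℝ) - 2 * k)) * r ^ (((2 : ℕ) : ℝ) * -(-l - M + k)) := by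
      rw [← Real.rpow_add hr]; congr 1; push_cast; ring
    rw [e3]; ring
  · rw [gE_of_lt (by omega), gE_of_lt (by omega)]; ring

lemma psi_gegen (l : ℝ) (M : ℕ) {R : ℝ} (hR : 0 < R) {z c2 : ℝ} (hS : z ^ 2 + c2 = R ^ 2) :
    psi l M z c2 = (-1) ^ M * M.factorial * R ^ (-(M + 2 * l)) * gegenbauerCt M l (z / R) := by
  have h := psi_scale l M hR (z := z) (c2 := c2) (by rw [hS]; positivity)
  rw [Real.rpow_neg hR.le]
  have h0 : 0 < R ^ (M + 2 * l) := by positivity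
  have : psi l M z c2 = (R ^ (M + 2 * l))⁻¹ * psi l M (z / R) (c2 / R ^ 2) := by
    rw [h]; field_simp
  rw [this]
  unfold psi
  rw [gegen_eq M (M + 1) (by omega)]
  have : ∀ k, psiT l M k (z / R) (c2 / R ^ 2) = (-1) ^ k * Real.Gamma (l + M - k) / k.factorial * gE M k (2 * (z / R)) := by
    intro k
    unfold psiT
    have : (z / R) ^ 2 + c2 / R ^ 2 = 1 := by
      rw [div_pow, ← add_div, hS]; field_simp
    rw [this, Real.one_rpow, mul_one]
  simp only [this]
  ring

/-- Fubini for the K Bessel kernel -/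
lemma kB_fubini {p b P B : ℝ} {h : ℝ → ℝ} (hp : -1 < p) (hpb : b - 1 < p) (hP : 0 < P) (hc : Continuous h)
    (hB : ∀ W, 0 < W → |h W| ≤ B) :
    ∫ W in Set.Ioi (0 : ℝ), W ^ p * kB b (P * W) * h W
      = 1 / 2 * ∫ s in Set.Ioi (0 : ℝ), s ^ (-b - 1) * Real.exp (-s) *
        ∫ W in Set.Ioi (0 : ℝ), W ^ p * Real.exp (-(P / s * W)) * h W := by
  have hi := kI_prod_integrable hp hpb hP
  have hi2 : Integrable (fun z : ℝ × ℝ => z.1 ^ p * kI b (P * z.1) z.2 * h z.1)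
      ((volume.restrict (Set.Ioi (0 : ℝ))).prod (volume.restrict (Set.Ioi (0 : ℝ)))) := by
    refine Integrable.mul_bdd (c := B) hi (hc.comp continuous_fst).aestronglyMeasurable ?_
    rw [Measure.prod_restrict]
    refine (ae_restrict_iff' (measurableSet_Ioi.prod measurableSet_Ioi)).2 (Eventually.of_forall fun z hz => ?_)
    exact hB z.1 hz.1
  have hsw := integral_integral_swap (f := fun W s => W ^ p * kI b (P * W) s * h W) hi2
  have e1 : ∫ W in Set.Ioi (0 : ℝ), W ^ p * kB b (P * W) * h W
      = 1 / 2 * ∫ W in Set.Ioi (0 : ℝ), ∫ s in Set.Ioi (0 : ℝ), W ^ p * kI b (P * W) s * h W := by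
    rw [← integral_const_mul]
    refine integral_congr_ae (Eventually.of_forall fun W => ?_)
    simp only [integral_mul_const, integral_const_mul, kB]
    ring
  rw [e1, hsw]
  congr 1
  refine setIntegral_congr_fun measurableSet_Ioi fun s hs => ?_
  simp only [← integral_const_mul]
  refine integral_congr_ae (Eventually.of_forall fun W => ?_)
  simp only [kI]
  rw [sub_eq_add_neg (-s), Real.exp_add, show P * W / s = P / s * W by ring]
  ring


noncomputable def nM (β η : ℝ) (M : ℕ) (P y : ℝ) : ℝ :=
  ∫ W in Set.Ioi (0 : ℝ), W ^ (2 * β + M) * kB β (P * W) * io β (-(η * W)) * io (β + M) (-(y * W))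

lemma nM_kernel_integrable {β η P p : ℝ} (hβ : -1 / 2 ≤ β) (hη : 0 ≤ η) (hP : 0 < P) (hp : -1 < p) (hp2 : β - 1 < p) :
    IntegrableOn (fun W => W ^ p * kB β (P * W) * io β (-(η * W))) (Set.Ioi 0) := by
  refine Integrable.mul_bdd (c := 1 / Real.Gamma (β + 1)) (kB_rpow_integrable hp hp2 hP)
    ((continuous_io β).comp (by fun_prop : Continuous fun W : ℝ => -(η * W))).aestronglyMeasurable ?_
  exact (ae_restrict_iff' measurableSet_Ioi).2 (Eventually.of_forall fun W hW =>
        io_bound hβ (mul_nonneg hη (le_of_lt hW)))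

lemma S_pos {P y η : ℝ} (hP : 0 < P) (hy : 0 ≤ y) (hη : 0 ≤ η) (h : 0 < y ∨ 0 < η ∨ True) :
    0 < (y + P - η) ^ 2 + 4 * P * η := by
  rcases hη.eq_or_lt with h | h
  · subst h; have : 0 < y + P - 0 := by linarith
    positivity
  · positivity

lemma S_aux {P y η a d : ℝ} (hP : 0 < P) (hy : 0 ≤ y) (hη : 0 ≤ η) (hd : d = 2 * a) :
    (1 / P) ^ d * ((1 / (1 + (y + η) / P)) ^ d * (1 - 4 * (y * η / P ^ 2) / (1 + (y + η) / P) ^ 2) ^ (-a))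
      = ((y + P - η) ^ 2 + 4 * P * η) ^ (-a) := by
  have hu : 0 < 1 + (y + η) / P := by positivity
  have hS := S_pos hP hy hη (Or.inr (Or.inr trivial))
  have hPu : 0 < P + y + η := by positivity
  have e1 : 1 - 4 * (y * η / P ^ 2) / (1 + (y + η) / P) ^ 2 = ((y + P - η) ^ 2 + 4 * P * η) / (P + y + η) ^ 2 := by
    field_simp; ring
  rw [e1, ← mul_assoc, ← Real.mul_rpow (by positivity) (by positivity)]
  have e2 : 1 / P * (1 / (1 + (y + η) / P)) = (P + y + η)⁻¹ := by field_simp; ring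
  rw [e2, Real.div_rpow hS.le (by positivity), hd, Real.rpow_mul (by positivity), Real.inv_rpow hPu.le]
  have e3 : ((P + y + η) ^ 2) ^ (-a) = (((P + y + η) ^ (2 : ℝ))⁻¹) ^ a := by
    rw [Real.rpow_neg (by positivity), Real.inv_rpow (by positivity), ← Real.rpow_natCast]; norm_num
  rw [e3]
  have : 0 < (((P + y + η) ^ (2 : ℝ))⁻¹) ^ a := by positivity
  field_simp

lemma kappa_lt {P y η : ℝ} (hP : 0 < P) (hy : 0 ≤ y) (hη : 0 ≤ η) :
    4 * (y * η / P ^ 2) < (1 + (y + η) / P) ^ 2 := by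
  have hS := S_pos hP hy hη (Or.inr (Or.inr trivial))
  have : (1 + (y + η) / P) ^ 2 - 4 * (y * η / P ^ 2) = ((y + P - η) ^ 2 + 4 * P * η) / P ^ 2 := by
    field_simp; ring
  have h2 : 0 < ((y + P - η) ^ 2 + 4 * P * η) / P ^ 2 := by positivity
  linarith

lemma kB_flip {β P W : ℝ} (hP : 0 < P) (hW : 0 < W) :
    W ^ β * kB β (P * W) = P ^ (-β) * kB (-β) (P * W) := by
  rw [kB_symm β (by positivity), Real.mul_rpow hP.le hW.le, Real.rpow_neg hP.le]
  have : 0 < P ^ β := by positivity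
  field_simp

lemma bdd2 {β γ y η : ℝ} (hβ : -1 / 2 ≤ β) (hγ : -1 / 2 ≤ γ) (hy : 0 ≤ y) (hη : 0 ≤ η) (W : ℝ) (hW : 0 < W) :
    |io γ (-(y * W)) * io β (-(η * W))| ≤ 1 / Real.Gamma (γ + 1) * (1 / Real.Gamma (β + 1)) := by
  rw [abs_mul]
  have : 0 < Real.Gamma (γ + 1) := Real.Gamma_pos_of_pos (by linarith)
  exact mul_le_mul (io_bound hγ (by positivity)) (io_bound hβ (by positivity)) (abs_nonneg _) (by positivity)

lemma nM_zero {β η P y : ℝ} (hβ : -1 / 2 < β) (hη : 0 ≤ η) (hP : 0 < P) (hy : 0 ≤ y) :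
    nM β η 0 P y = 4 ^ β / (2 * √π) * psi (β + 1 / 2) 0 (y + P - η) (4 * P * η) := by
  have hf := kB_fubini (p := β) (b := -β) (P := P) (h := fun W => io β (-(y * W)) * io β (-(η * W)))
    (by linarith) (by linarith) hP
    (((continuous_io β).comp (by fun_prop : Continuous fun W : ℝ => -(y * W))).mul
      ((continuous_io β).comp (by fun_prop : Continuous fun W : ℝ => -(η * W))))
    (bdd2 hβ.le hβ.le hy hη)
  have e1 : nM β η 0 P y = P ^ (-β) * ∫ W in Set.Ioi (0 : ℝ), W ^ β * kB (-β) (P * W) * (io β (-(y * W)) * io β (-(η * W))) := by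
    unfold nM
    rw [← integral_const_mul]
    refine setIntegral_congr_fun measurableSet_Ioi fun W hW => ?_
    have hW' : 0 < W := hW
    have h1 := kB_flip (β := β) hP hW'
    have h2 : W ^ (2 * β) = W ^ β * W ^ β := by rw [← Real.rpow_add hW']; congr 1; ring
    simp only [Nat.cast_zero, add_zero]
    rw [h2]
    linear_combination W ^ β * io β (-(η * W)) * io β (-(y * W)) * h1
  rw [e1, hf]
  have hs := sint (β := β) (δ := 2 * β) (u := 1 + (y + η) / P) (κ := y * η / P ^ 2) (by linarith) (by linarith)
    (by linarith : 0 < β + 1 / 2) (by positivity) (by positivity) (kappa_lt hP hy hη) (coef0 hβ)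
  have e2 : ∫ s in Set.Ioi (0 : ℝ), s ^ (-(-β) - 1) * Real.exp (-s) *
        ∫ W in Set.Ioi (0 : ℝ), W ^ β * Real.exp (-(P / s * W)) * (io β (-(y * W)) * io β (-(η * W)))
      = (1 / P) ^ (β + 1) * ∫ s in Set.Ioi (0 : ℝ), s ^ (2 * β) * Real.exp (-((1 + (y + η) / P) * s)) * io β (y * η / P ^ 2 * s ^ 2) := by
    rw [← integral_const_mul]
    refine setIntegral_congr_fun measurableSet_Ioi fun s hs => ?_
    have hs' : 0 < s := hs
    have hw := weber (η := η) hβ.le (by positivity : 0 < P / s) hy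
    simp only [mul_assoc] at hw ⊢
    rw [hw]
    have a1 : (1 / (P / s)) ^ (β + 1) = (1 / P) ^ (β + 1) * (s ^ β * s) := by
      rw [← Real.rpow_add_one hs'.ne', ← Real.mul_rpow (by positivity) hs'.le]; congr 1; field_simp
    have a2 : s ^ (-(-β) - 1) = s ^ β / s := by rw [neg_neg, Real.rpow_sub_one hs'.ne']
    have a3 : s ^ (2 * β) = s ^ β * s ^ β := by rw [← Real.rpow_add hs']; congr 1; ring
    have a4 : Real.exp (-((1 + (y + η) / P) * s)) = Real.exp (-s) * Real.exp (-((y + η) / (P / s))) := by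
      rw [← Real.exp_add]; congr 1; field_simp; ring
    have a5 : y * (η / (P / s) ^ 2) = y * η / P ^ 2 * s ^ 2 := by field_simp
    rw [a1, a2, a3, a4, show y * η / (P / s) ^ 2 = y * η / P ^ 2 * s ^ 2 by field_simp]
    field_simp
  rw [e2, hs]
  have hA := S_aux (a := β + 1 / 2) (d := 2 * β + 1) hP hy hη (by ring)
  have a6 : P ^ (-β) * (1 / P) ^ (β + 1) = (1 / P) ^ (2 * β + 1) := by
    rw [Real.rpow_neg hP.le, ← Real.inv_rpow hP.le, one_div, ← Real.rpow_add (by positivity)]; congr 1; ring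
  have a7 : psi (β + 1 / 2) 0 (y + P - η) (4 * P * η) = Real.Gamma (β + 1 / 2) * ((y + P - η) ^ 2 + 4 * P * η) ^ (-(β + 1 / 2)) := by
    simp [psi, psiT, gE]
  rw [a7, ← hA, ← a6]
  ring

lemma nM_one {β η P y : ℝ} (hβ : -1 / 2 ≤ β) (hη : 0 ≤ η) (hP : 0 < P) (hy : 0 < y) :
    nM β η 1 P y = -(4 ^ β / (2 * √π)) * psi (β + 1 / 2) 1 (y + P - η) (4 * P * η) := by
  have hf := kB_fubini (p := β + 1) (b := -β) (P := P) (h := fun W => io (β + 1) (-(y * W)) * io β (-(η * W)))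
    (by linarith) (by linarith) hP
    (((continuous_io (β + 1)).comp (by fun_prop : Continuous fun W : ℝ => -(y * W))).mul
      ((continuous_io β).comp (by fun_prop : Continuous fun W : ℝ => -(η * W))))
    (bdd2 hβ (by linarith) hy.le hη)
  have e1 : nM β η 1 P y = P ^ (-β) * ∫ W in Set.Ioi (0 : ℝ), W ^ (β + 1) * kB (-β) (P * W) * (io (β + 1) (-(y * W)) * io β (-(η * W))) := by
    unfold nM
    rw [← integral_const_mul]
    refine setIntegral_congr_fun measurableSet_Ioi fun W hW => ?_
    have hW' : 0 < W := hW
    have h1 := kB_flip (β := β) hP hW'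
    have h2 : W ^ (2 * β + 1) = W ^ β * W ^ (β + 1) := by rw [← Real.rpow_add hW']; congr 1; ring
    simp only [Nat.cast_one]
    rw [h2]
    linear_combination W ^ (β + 1) * io β (-(η * W)) * io (β + 1) (-(y * W)) * h1
  rw [e1, hf]
  have c1 := fun m => coef1 (β := β) (by linarith) m
  have c2 := fun m => coef0 (β := β + 1) (by linarith) m
  have hK1 : 0 < 2 * 4 ^ β / √π := by have := Real.sqrt_pos.2 Real.pi_pos; positivity
  have hK2 : 0 < 4 ^ (β + 1) / √π := by have := Real.sqrt_pos.2 Real.pi_pos; positivity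
  have hs1 := sint (β := β) (δ := 2 * β + 1) (u := 1 + (y + η) / P) (κ := y * η / P ^ 2) (by linarith) (by linarith)
    (by linarith : 0 < β + 3 / 2) (by positivity) (by positivity) (kappa_lt hP hy.le hη) c1
  have hs2 := sint (β := β + 1) (δ := 2 * (β + 1)) (u := 1 + (y + η) / P) (κ := y * η / P ^ 2) (by linarith) (by linarith)
    (by linarith : 0 < β + 1 + 1 / 2) (by positivity) (by positivity) (kappa_lt hP hy.le hη) c2
  have hi1 := sint_integrable (β := β) (δ := 2 * β + 1) (u := 1 + (y + η) / P) (κ := y * η / P ^ 2) (by linarith) (by linarith)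
    (by linarith : 0 < β + 3 / 2) (by positivity) (by positivity) (kappa_lt hP hy.le hη) hK1 c1
  have hi2 := sint_integrable (β := β + 1) (δ := 2 * (β + 1)) (u := 1 + (y + η) / P) (κ := y * η / P ^ 2) (by linarith) (by linarith)
    (by linarith : 0 < β + 1 + 1 / 2) (by positivity) (by positivity) (kappa_lt hP hy.le hη) hK2 c2
  have e2 : ∫ s in Set.Ioi (0 : ℝ), s ^ (-(-β) - 1) * Real.exp (-s) *
        ∫ W in Set.Ioi (0 : ℝ), W ^ (β + 1) * Real.exp (-(P / s * W)) * (io (β + 1) (-(y * W)) * io β (-(η * W)))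
      = (1 / P) ^ (β + 2) * ((∫ s in Set.Ioi (0 : ℝ), s ^ (2 * β + 1) * Real.exp (-((1 + (y + η) / P) * s)) * io β (y * η / P ^ 2 * s ^ 2))
        - η / P * (∫ s in Set.Ioi (0 : ℝ), s ^ (2 * (β + 1)) * Real.exp (-((1 + (y + η) / P) * s)) * io (β + 1) (y * η / P ^ 2 * s ^ 2))) := by
    rw [← integral_const_mul (η / P), ← integral_sub hi1 (hi2.const_mul _), ← integral_const_mul]
    refine setIntegral_congr_fun measurableSet_Ioi fun s hs => ?_
    have hs' : 0 < s := hs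
    have hw := weber' (η := η) hβ (by positivity : 0 < P / s) hy hη
    beta_reduce
    rw [hw]
    have a1 : (1 / (P / s)) ^ (β + 1) = (1 / P) ^ (β + 1) * (s ^ β * s) := by
      rw [← Real.rpow_add_one hs'.ne', ← Real.mul_rpow (by positivity) hs'.le]; congr 1; field_simp
    have a2 : s ^ (-(-β) - 1) = s ^ β / s := by rw [neg_neg, Real.rpow_sub_one hs'.ne']
    have a3 : s ^ (2 * β + 1) = s ^ β * s ^ β * s := by
      rw [← Real.rpow_add hs', ← Real.rpow_add_one hs'.ne']; congr 1; ring
    have a3' : s ^ (2 * (β + 1)) = s ^ β * s ^ β * s ^ 2 := by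
      rw [← Real.rpow_natCast, ← Real.rpow_add hs', ← Real.rpow_add hs']; congr 1; push_cast; ring
    have a4 : Real.exp (-((1 + (y + η) / P) * s)) = Real.exp (-s) * Real.exp (-((y + η) / (P / s))) := by
      rw [← Real.exp_add]; congr 1; field_simp; ring
    have a5 : (1 / P) ^ (β + 2) = (1 / P) ^ (β + 1) * (1 / P) := by
      rw [← Real.rpow_add_one (by positivity)]; congr 1; ring
    rw [a1, a2, a3, a3', a4, a5, show y * η / (P / s) ^ 2 = y * η / P ^ 2 * s ^ 2 by field_simp]
    field_simp
  rw [e2, hs1, hs2]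
  have hA := S_aux (a := β + 3 / 2) (d := 2 * β + 3) hP hy.le hη (by ring)
  have hu : 0 < 1 + (y + η) / P := by positivity
  have a6 : P ^ (-β) * (1 / P) ^ (β + 2) * (1 / P) = (1 / P) ^ (2 * β + 3) := by
    rw [Real.rpow_neg hP.le, ← Real.inv_rpow hP.le, one_div, ← Real.rpow_add (by positivity),
      ← Real.rpow_add_one (by positivity)]; congr 1; ring
  have a7 : psi (β + 1 / 2) 1 (y + P - η) (4 * P * η) = -(Real.Gamma (β + 3 / 2) * (2 * (y + P - η)) * ((y + P - η) ^ 2 + 4 * P * η) ^ (-(β + 3 / 2))) := by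
    simp [psi, psiT, gE, Finset.sum_range_succ]
    rw [show β + 2⁻¹ + 1 = β + 3 / 2 by ring, show -2⁻¹ + -β - 1 = -(3 / 2) + -β by ring]
  have a8 : (1 / (1 + (y + η) / P)) ^ (2 * (β + 1) + 1) = (1 / (1 + (y + η) / P)) ^ (2 * β + 3) := by congr 1; ring
  have a9 : (1 / (1 + (y + η) / P)) ^ (2 * β + 1 + 1) = (1 / (1 + (y + η) / P)) ^ (2 * β + 3) * (1 + (y + η) / P) := by
    rw [show 2 * β + 3 = 2 * β + 1 + 1 + 1 by ring, Real.rpow_add_one (by positivity) (2 * β + 1 + 1)]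
    field_simp
  rw [a7, ← hA, ← a6, a8, a9, show β + 1 + 1 / 2 = β + 3 / 2 by ring, Real.rpow_add_one (by norm_num : (4 : ℝ) ≠ 0)]
  have : √π ≠ 0 := (Real.sqrt_pos.2 Real.pi_pos).ne'
  field_simp
  ring

lemma nM_deriv {β η P y : ℝ} (M : ℕ) (hM : 0 < β + 1 / 2 + M) (hβ : -1 / 2 ≤ β) (hη : 0 ≤ η) (hP : 0 < P) (hy : 0 < y) :
    HasDerivAt (nM β η M P) (-nM β η (M + 1) P y) y := by
  have hM0 : (0 : ℝ) ≤ M := Nat.cast_nonneg M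
  have h := deriv_under (γ := β + M) (g := fun W => W ^ (2 * β + M) * kB β (P * W) * io β (-(η * W))) (by linarith) hy
    (nM_kernel_integrable hβ hη hP (by linarith) (by linarith)) (by
      refine IntegrableOn.congr_fun (nM_kernel_integrable (p := 2 * β + M + 1) hβ hη hP (by linarith) (by linarith))
        (fun W hW => ?_) measurableSet_Ioi
      have hW' : 0 < W := hW
      rw [Real.rpow_add_one hW'.ne']; ring)
  refine h.congr_deriv ?_
  unfold nM
  congr 1
  refine setIntegral_congr_fun measurableSet_Ioi fun W hW => ?_
  have hW' : 0 < W := hW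
  push_cast
  rw [← add_assoc, ← add_assoc, Real.rpow_add_one hW'.ne']; ring

lemma nM_eq {β η P : ℝ} (hβ : -1 / 2 ≤ β) (hη : 0 ≤ η) (hP : 0 < P) (M : ℕ) (hM : 0 < β + 1 / 2 + M) :
    ∀ y, 0 < y → nM β η M P y = (-1) ^ M * (4 ^ β / (2 * √π)) * psi (β + 1 / 2) M (y + P - η) (4 * P * η) := by
  induction M with
  | zero =>
    intro y hy
    have : -1 / 2 < β := by simp at hM; linarith
    rw [nM_zero this hη hP hy.le]; ring
  | succ M ih =>
    intro y hy
    rcases Nat.eq_zero_or_pos M with h0 | h0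
    · subst h0; rw [zero_add, nM_one hβ hη hP hy]; ring
    · have hM' : 0 < β + 1 / 2 + M := by
        have : (1 : ℝ) ≤ M := by exact_mod_cast h0
        linarith
      have h1 := nM_deriv M hM' hβ hη hP hy
      have hz : HasDerivAt (fun y => y + P - η) 1 y := ((hasDerivAt_id y).add_const P).sub_const η
      have h2 := ((hasDerivAt_psi hM' (by linarith) (S_pos hP hy.le hη (Or.inl hy))).comp y hz).const_mul
        ((-1) ^ M * (4 ^ β / (2 * √π)))
      have h3 := h1.unique (h2.congr_of_eventuallyEq (by
        filter_upwards [Ioi_mem_nhds hy] with x hx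
        exact ih hM' x hx))
      rw [pow_succ]
      linear_combination -h3


open scoped ContDiff


/-- a two-index family closed under differentiation is smooth -/
lemma fam2_contDiffOn {U : Set ℝ} (hU : IsOpen U) {p q : ℝ → ℝ} (hp : ContDiffOn ℝ ∞ p U) (hq : ContDiffOn ℝ ∞ q U)
    {k : ℕ → ℕ → ℝ → ℝ}
    (hk : ∀ l n, ∀ t ∈ U, HasDerivAt (k l n) (q t * k (l + 1) n t + p t * k l (n + 1) t) t) (l n : ℕ) :
    ContDiffOn ℝ ∞ (k l n) U := by
  have key : ∀ m : ℕ, ∀ l n, ContDiffOn ℝ m (k l n) U := by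
    intro m
    induction m with
    | zero =>
      intro l n
      rw [Nat.cast_zero, contDiffOn_zero]
      exact fun t ht => (hk l n t ht).continuousAt.continuousWithinAt
    | succ m ih =>
      intro l n
      rw [Nat.cast_succ, contDiffOn_succ_iff_deriv_of_isOpen hU]
      refine ⟨fun t ht => (hk l n t ht).differentiableAt.differentiableWithinAt, fun h => ?_, ?_⟩
      · exact absurd h (by simp)
      · refine ContDiffOn.congr (f := fun t => q t * k (l + 1) n t + p t * k l (n + 1) t) ?_
          (fun t ht => (hk l n t ht).deriv)
        have hp' : ContDiffOn ℝ m p U := hp.of_le (by exact_mod_cast le_top)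
        have hq' : ContDiffOn ℝ m q U := hq.of_le (by exact_mod_cast le_top)
        exact (hq'.mul (ih _ _)).add (hp'.mul (ih _ _))
  exact contDiffOn_infty.2 fun m => key m l n

lemma cda {U : Set ℝ} (hU : IsOpen U) {f : ℝ → ℝ} (hf : ContDiffOn ℝ ∞ f U) {t : ℝ} (ht : t ∈ U) (j : ℕ) :
    ContDiffAt ℝ j f t :=
  (hf.contDiffAt (hU.mem_nhds ht)).of_le (by exact_mod_cast le_top)

/-- one step of Leibniz rule for families -/
lemma fam2_step {U : Set ℝ} (hU : IsOpen U) (h0 : (0 : ℝ) ∈ U) {p q : ℝ → ℝ} (hp : ContDiffOn ℝ ∞ p U)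
    (hq : ContDiffOn ℝ ∞ q U) {k : ℕ → ℕ → ℝ → ℝ}
    (hk : ∀ l n, ∀ t ∈ U, HasDerivAt (k l n) (q t * k (l + 1) n t + p t * k l (n + 1) t) t)
    {f : ℝ → ℝ} (hf : ContDiffOn ℝ ∞ f U) (j : ℕ) :
    iteratedDeriv (j + 1) (fun t => f t * k 0 0 t) 0
      = iteratedDeriv j (fun t => deriv f t * k 0 0 t) 0 + iteratedDeriv j (fun t => (f t * q t) * k 1 0 t) 0
        + iteratedDeriv j (fun t => (f t * p t) * k 0 1 t) 0 := by
  have hf' := (contDiffOn_infty_iff_deriv_of_isOpen hU).1 hf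
  have hc := fam2_contDiffOn hU hp hq hk
  rw [iteratedDeriv_succ']
  have e : deriv (fun t => f t * k 0 0 t) =ᶠ[nhds 0]
      fun t => (deriv f t * k 0 0 t + (f t * q t) * k 1 0 t) + (f t * p t) * k 0 1 t := by
    filter_upwards [hU.mem_nhds h0] with t ht
    have h1 : HasDerivAt f (deriv f t) t := (hf'.1.differentiableAt (hU.mem_nhds ht)).hasDerivAt
    refine (h1.mul (hk 0 0 t ht)).deriv.trans ?_
    ring
  rw [e.iteratedDeriv_eq]
  rw [iteratedDeriv_fun_add, iteratedDeriv_fun_add]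
  · exact cda hU (hf'.2.mul (hc 0 0)) h0 j
  · exact cda hU ((hf.mul hq).mul (hc 1 0)) h0 j
  · exact (cda hU (hf'.2.mul (hc 0 0)) h0 j).add (cda hU ((hf.mul hq).mul (hc 1 0)) h0 j)
  · exact cda hU ((hf.mul hp).mul (hc 0 1)) h0 j

/-- integrability of Taylor coefficients -/
lemma exch_integrable {U : Set ℝ} (hU : IsOpen U) (h0 : (0 : ℝ) ∈ U) {p q : ℝ → ℝ} (hp : ContDiffOn ℝ ∞ p U)
    (hq : ContDiffOn ℝ ∞ q U) (j : ℕ) : ∀ {k : ℕ → ℕ → ℝ → ℝ → ℝ}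
    (_ : ∀ l n W, 0 < W → ∀ t ∈ U, HasDerivAt (fun t => k l n t W) (q t * k (l + 1) n t W + p t * k l (n + 1) t W) t)
    (_ : ∀ l n, IntegrableOn (k l n 0) (Set.Ioi 0))
    {f : ℝ → ℝ} (_ : ContDiffOn ℝ ∞ f U),
    IntegrableOn (fun W => iteratedDeriv j (fun t => f t * k 0 0 t W) 0) (Set.Ioi 0) := by
  induction j with
  | zero =>
    intro k hk hi f hf
    simp only [iteratedDeriv_zero]
    exact (hi 0 0).const_mul (f 0)
  | succ j ih =>
    intro k hk hi f hf
    have hf' := (contDiffOn_infty_iff_deriv_of_isOpen hU).1 hf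
    have i1 := ih hk hi hf'.2
    have i2 := ih (k := fun l n => k (l + 1) n) (fun l n => hk (l + 1) n) (fun l n => hi (l + 1) n) (hf.mul hq)
    have i3 := ih (k := fun l n => k l (n + 1)) (fun l n => hk l (n + 1)) (fun l n => hi l (n + 1)) (hf.mul hp)
    refine IntegrableOn.congr_fun ((i1.add i2).add i3) (fun W hW => ?_) measurableSet_Ioi
    exact (fam2_step hU h0 hp hq (k := fun l n t => k l n t W) (fun l n => hk l n W hW) hf j).symm

/-- exchanging Taylor coefficients with integrals -/
lemma exch {U : Set ℝ} (hU : IsOpen U) (h0 : (0 : ℝ) ∈ U) {p q : ℝ → ℝ} (hp : ContDiffOn ℝ ∞ p U)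
    (hq : ContDiffOn ℝ ∞ q U) (j : ℕ) : ∀ {k : ℕ → ℕ → ℝ → ℝ → ℝ}
    (_ : ∀ l n W, 0 < W → ∀ t ∈ U, HasDerivAt (fun t => k l n t W) (q t * k (l + 1) n t W + p t * k l (n + 1) t W) t)
    (_ : ∀ l n, ∀ t ∈ U, HasDerivAt (fun t => ∫ W in Set.Ioi (0 : ℝ), k l n t W)
      (q t * (∫ W in Set.Ioi (0 : ℝ), k (l + 1) n t W) + p t * ∫ W in Set.Ioi (0 : ℝ), k l (n + 1) t W) t)
    (_ : ∀ l n, IntegrableOn (k l n 0) (Set.Ioi 0))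
    {f : ℝ → ℝ} (_ : ContDiffOn ℝ ∞ f U),
    ∫ W in Set.Ioi (0 : ℝ), iteratedDeriv j (fun t => f t * k 0 0 t W) 0
      = iteratedDeriv j (fun t => f t * ∫ W in Set.Ioi (0 : ℝ), k 0 0 t W) 0 := by
  induction j with
  | zero =>
    intro k hk hK hi f hf
    simp only [iteratedDeriv_zero]
    exact integral_const_mul _ _
  | succ j ih =>
    intro k hk hK hi f hf
    have hf' := (contDiffOn_infty_iff_deriv_of_isOpen hU).1 hf
    have i1 := exch_integrable hU h0 hp hq j hk hi hf'.2
    have i2 := exch_integrable hU h0 hp hq j (k := fun l n => k (l + 1) n) (fun l n => hk (l + 1) n) (fun l n => hi (l + 1) n) (hf.mul hq)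
    have i3 := exch_integrable hU h0 hp hq j (k := fun l n => k l (n + 1)) (fun l n => hk l (n + 1)) (fun l n => hi l (n + 1)) (hf.mul hp)
    have e1 := ih hk hK hi hf'.2
    have e2 := ih (k := fun l n => k (l + 1) n) (fun l n => hk (l + 1) n) (fun l n => hK (l + 1) n) (fun l n => hi (l + 1) n) (hf.mul hq)
    have e3 := ih (k := fun l n => k l (n + 1)) (fun l n => hk l (n + 1)) (fun l n => hK l (n + 1)) (fun l n => hi l (n + 1)) (hf.mul hp)
    rw [fam2_step hU h0 hp hq (k := fun l n t => ∫ W in Set.Ioi (0 : ℝ), k l n t W) hK hf j]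
    simp only [zero_add] at e1 e2 e3 i1 i2 i3
    have i12 := i1.add i2
    have a12 := integral_add i12 i3
    simp only [Pi.add_apply] at a12
    rw [← e1, ← e2, ← e3, ← integral_add i1 i2, ← a12]
    refine setIntegral_congr_fun measurableSet_Ioi fun W hW => ?_
    exact fam2_step hU h0 hp hq (k := fun l n t => k l n t W) (fun l n => hk l n W hW) hf j

lemma fam1_contDiffOn {U : Set ℝ} (hU : IsOpen U) {g : ℕ → ℝ → ℝ}
    (hg : ∀ n, ∀ t ∈ U, HasDerivAt (g n) (g (n + 1) t) t) (n : ℕ) : ContDiffOn ℝ ∞ (g n) U := by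
  refine fam2_contDiffOn hU (p := fun _ => 0) (q := fun _ => 1) contDiffOn_const contDiffOn_const
    (k := fun l _ => g l) (fun l n t ht => ?_) n 0
  simpa using hg l t ht

lemma fam1_iter {U : Set ℝ} (hU : IsOpen U) {g : ℕ → ℝ → ℝ}
    (hg : ∀ n, ∀ t ∈ U, HasDerivAt (g n) (g (n + 1) t) t) (m : ℕ) : ∀ t ∈ U, iteratedDeriv m (g 0) t = g m t := by
  induction m with
  | zero => intro t _; rw [iteratedDeriv_zero]
  | succ m ih =>
    intro t ht
    rw [iteratedDeriv_succ]
    have : iteratedDeriv m (g 0) =ᶠ[nhds t] g m := by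
      filter_upwards [hU.mem_nhds ht] with s hs using ih s hs
    rw [this.deriv_eq, (hg m t ht).deriv]

lemma iter_pow_mul (k j : ℕ) {g : ℝ → ℝ} (hg : ContDiffAt ℝ j g 0) :
    iteratedDeriv j (fun t => t ^ k * g t) 0 = (j.choose k : ℝ) * k.factorial * iteratedDeriv (j - k) g 0 := by
  rw [iteratedDeriv_fun_mul (by fun_prop) hg]
  have h : ∀ i ∈ Finset.range (j + 1), (j.choose i : ℝ) * iteratedDeriv i (fun t : ℝ => t ^ k) 0 * iteratedDeriv (j - i) g 0
      = if i = k then (j.choose k : ℝ) * k.factorial * iteratedDeriv (j - k) g 0 else 0 := by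
    intro i _
    rw [iteratedDeriv_fun_pow_zero]
    split_ifs with h1
    · subst h1; rfl
    · simp
  rw [Finset.sum_congr rfl h, Finset.sum_ite_eq']
  split_ifs with h1
  · rfl
  · rw [Nat.choose_eq_zero_of_lt (by simpa using h1)]; simp

/-- vanishing jets compose -/
lemma jet_zero {U : Set ℝ} (hU : IsOpen U) (h0 : (0 : ℝ) ∈ U) {Q : ℝ → ℝ} (hQ : ContDiffOn ℝ ∞ Q U) (hQ0 : Q 0 = 0)
    (j : ℕ) : ∀ {r g : ℝ → ℝ} (_ : ContDiff ℝ ∞ r) (_ : ∀ l ≤ j, iteratedDeriv l r 0 = 0) (_ : ContDiffOn ℝ ∞ g U),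
    iteratedDeriv j (fun t => g t * r (Q t)) 0 = 0 := by
  have hQ' := (contDiffOn_infty_iff_deriv_of_isOpen hU).1 hQ
  induction j with
  | zero =>
    intro r g _ hz _
    have := hz 0 le_rfl
    simp only [iteratedDeriv_zero] at this ⊢
    rw [hQ0, this, mul_zero]
  | succ j ih =>
    intro r g hr hz hg
    have hg' := (contDiffOn_infty_iff_deriv_of_isOpen hU).1 hg
    have hr' := (contDiff_infty_iff_deriv).1 hr
    rw [iteratedDeriv_succ']
    have e : deriv (fun t => g t * r (Q t)) =ᶠ[nhds 0]
        fun t => deriv g t * r (Q t) + (g t * deriv Q t) * deriv r (Q t) := by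
      filter_upwards [hU.mem_nhds h0] with t ht
      have h1 : HasDerivAt g (deriv g t) t := (hg'.1.differentiableAt (hU.mem_nhds ht)).hasDerivAt
      have h2 : HasDerivAt Q (deriv Q t) t := (hQ'.1.differentiableAt (hU.mem_nhds ht)).hasDerivAt
      have h3 : HasDerivAt r (deriv r (Q t)) (Q t) := (hr'.1 _).hasDerivAt
      have h4 := h1.mul (h3.comp t h2)
      have h5 := h4.deriv
      refine Eq.trans h5 ?_
      simp only [Function.comp]; ring
    rw [e.iteratedDeriv_eq, iteratedDeriv_fun_add, ih hr (fun l hl => hz l (by omega)) hg'.2,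
      ih hr'.2 (fun l hl => by rw [← iteratedDeriv_succ']; exact hz (l + 1) (by omega)) (hg.mul hQ'.2), add_zero]
    · exact cda hU (hg'.2.mul (hr.comp_contDiffOn hQ)) h0 j
    · exact cda hU ((hg.mul hQ'.2).mul (hr'.2.comp_contDiffOn hQ)) h0 j


noncomputable def Pf (t : ℝ) : ℝ := ((1 - t) ^ 2)⁻¹
noncomputable def Qf (t : ℝ) : ℝ := t ^ 2 * ((1 - t) ^ 2)⁻¹
noncomputable def Pd (t : ℝ) : ℝ := 2 * ((1 - t) ^ 3)⁻¹
noncomputable def Qd (t : ℝ) : ℝ := 2 * t * ((1 - t) ^ 3)⁻¹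

lemma hasDerivAt_Pf {t : ℝ} (ht : t < 1) : HasDerivAt Pf (Pd t) t := by
  have h1 : HasDerivAt (fun t : ℝ => (1 - t) ^ 2) (-(2 * (1 - t))) t := by
    have h := ((hasDerivAt_id t).const_sub 1).pow 2
    refine h.congr_deriv ?_
    simp
  have h2 : 1 - t ≠ 0 := by linarith
  refine (h1.inv (by positivity)).congr_deriv ?_
  unfold Pd; field_simp

lemma hasDerivAt_Qf {t : ℝ} (ht : t < 1) : HasDerivAt Qf (Qd t) t := by
  have h1 : HasDerivAt (fun t : ℝ => t ^ 2) (2 * t) t := by simpa using hasDerivAt_pow 2 t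
  have h2 : 1 - t ≠ 0 := by linarith
  refine (h1.mul (hasDerivAt_Pf ht)).congr_deriv ?_
  unfold Qd Pd Pf; field_simp; ring

lemma inv_smooth (k : ℕ) : ContDiffOn ℝ ∞ (fun t : ℝ => ((1 - t) ^ k)⁻¹) (Set.Iio 1) := by
  refine ContDiffOn.inv (by fun_prop) fun t ht => ?_
  have : t < 1 := ht
  have h2 : 1 - t ≠ 0 := by linarith
  positivity

lemma smooth_Pf : ContDiffOn ℝ ∞ Pf (Set.Iio 1) := inv_smooth 2
lemma smooth_Qf : ContDiffOn ℝ ∞ Qf (Set.Iio 1) :=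
  ContDiffOn.mul (by fun_prop) (inv_smooth 2)
lemma smooth_Pd : ContDiffOn ℝ ∞ Pd (Set.Iio 1) := ContDiffOn.mul (by fun_prop) (inv_smooth 3)
lemma smooth_Qd : ContDiffOn ℝ ∞ Qd (Set.Iio 1) := ContDiffOn.mul (by fun_prop) (inv_smooth 3)

lemma Pf_pos {t : ℝ} (ht : t < 1) : 0 < Pf t := by
  have h2 : 0 < 1 - t := by linarith
  unfold Pf; positivity

/-- the neighbourhood of `0` used for parameter `y` -/
def Uy (y : ℝ) : Set ℝ := Set.Ioo (-(min (1 / 4) (y / 4))) (min (1 / 4) (y / 4))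

lemma Uy_open (y : ℝ) : IsOpen (Uy y) := isOpen_Ioo
lemma Uy_zero {y : ℝ} (hy : 0 < y) : (0 : ℝ) ∈ Uy y := by
  have : 0 < min (1 / 4) (y / 4) := by positivity
  exact ⟨by linarith, this⟩
lemma Uy_abs {y t : ℝ} (ht : t ∈ Uy y) : |t| < 1 / 4 ∧ |t| < y / 4 := by
  have : |t| < min (1 / 4) (y / 4) := abs_lt.2 ht
  exact lt_min_iff.1 this
lemma Uy_lt {y t : ℝ} (ht : t ∈ Uy y) : t < 1 := by
  have := (abs_lt.1 (Uy_abs ht).1).2; linarith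
lemma Uy_sub {y : ℝ} : Uy y ⊆ Set.Iio 1 := fun _ ht => Uy_lt ht

lemma Uy_inv {y t : ℝ} (ht : t ∈ Uy y) : 0 < (1 - t)⁻¹ ∧ (1 - t)⁻¹ ≤ 4 / 3 := by
  have h := abs_lt.1 (Uy_abs ht).1
  constructor
  · have : 0 < 1 - t := by linarith [h.2]
    positivity
  · rw [inv_le_comm₀ (by linarith [h.2]) (by norm_num)]; norm_num; linarith [h.2]

lemma Uy_Q {y t : ℝ} (ht : t ∈ Uy y) : 0 < y - Qf t := by
  obtain ⟨h1, h2⟩ := Uy_inv ht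
  obtain ⟨h3, h4⟩ := Uy_abs ht
  have e : Qf t = |t| * |t| * ((1 - t)⁻¹) ^ 2 := by
    rw [Qf, abs_mul_abs_self, inv_pow]; ring
  have h5 : ((1 - t)⁻¹) ^ 2 ≤ (4 / 3) ^ 2 := by gcongr
  have h6 : |t| * |t| ≤ 1 / 4 * |t| := by nlinarith [abs_nonneg t]
  have h7 : Qf t ≤ 1 / 4 * |t| * (4 / 3) ^ 2 := by
    rw [e]; gcongr
  nlinarith [abs_nonneg t]

lemma Uy_P {y t : ℝ} (ht : t ∈ Uy y) : 1 / 2 ≤ Pf t := by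
  have h := abs_lt.1 (Uy_abs ht).1
  unfold Pf
  rw [le_inv_comm₀ (by norm_num) (by nlinarith)]
  nlinarith

lemma Uy_Pd {y t : ℝ} (ht : t ∈ Uy y) : |Pd t| ≤ 5 := by
  obtain ⟨h1, h2⟩ := Uy_inv ht
  have e : Pd t = 2 * ((1 - t)⁻¹) ^ 3 := by rw [Pd, inv_pow]
  rw [e, abs_of_pos (by positivity)]
  have h5 : ((1 - t)⁻¹) ^ 3 ≤ (4 / 3) ^ 3 := by gcongr
  nlinarith

lemma Uy_Qd {y t : ℝ} (ht : t ∈ Uy y) : |Qd t| ≤ 5 := by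
  have e : Qd t = t * Pd t := by rw [Qd, Pd]; ring
  rw [e, abs_mul]
  have := Uy_Pd ht
  have h := (Uy_abs ht).1
  nlinarith [abs_nonneg t, abs_nonneg (Pd t)]

/-- the two-index family -/
noncomputable def kap (a β η y p0 : ℝ) (l n : ℕ) (t W : ℝ) : ℝ :=
  W ^ (p0 + l + n) * ((-1) ^ n * kB (β + n) (Pf t * W)) * io β (-(η * W)) * io (a + l) (-((y - Qf t) * W))

lemma kap_deriv (a β η y p0 : ℝ) (l n : ℕ) {t W : ℝ} (ht : t < 1) (hW : 0 < W) :
    HasDerivAt (fun t => kap a β η y p0 l n t W)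
      (Qd t * kap a β η y p0 (l + 1) n t W + Pd t * kap a β η y p0 l (n + 1) t W) t := by
  have h1 : HasDerivAt (fun t => Pf t * W) (Pd t * W) t := (hasDerivAt_Pf ht).mul_const W
  have h2 : HasDerivAt (fun t => -((y - Qf t) * W)) (Qd t * W) t :=
    (((hasDerivAt_Qf ht).const_sub y).mul_const W).fun_neg.congr_deriv (by ring)
  have h3 := (hasDerivAt_kB (β + n) (mul_pos (Pf_pos ht) hW)).comp t h1
  have h4 := (hasDerivAt_io (a + l) (-((y - Qf t) * W))).comp t h2
  have h5 := (((h3.const_mul ((-1) ^ n)).const_mul (W ^ (p0 + l + n))).mul_const (io β (-(η * W)))).mul h4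
  refine h5.congr_deriv ?_
  unfold kap
  have e1 : W ^ (p0 + (l + 1 : ℕ) + n) = W ^ (p0 + l + n) * W := by
    rw [← Real.rpow_add_one hW.ne']; congr 1; push_cast; ring
  have e2 : W ^ (p0 + l + (n + 1 : ℕ)) = W ^ (p0 + l + n) * W := by
    rw [← Real.rpow_add_one hW.ne']; congr 1; push_cast; ring
  rw [e1, e2, pow_succ]
  push_cast
  rw [← add_assoc, ← add_assoc]
  simp only [Function.comp]
  ring

noncomputable def kapB (a β p0 : ℝ) (l n : ℕ) (W : ℝ) : ℝ :=
  W ^ (p0 + l + n) * kB (β + n) (1 / 2 * W) * (1 / Real.Gamma (β + 1)) * (1 / Real.Gamma (a + l + 1))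

lemma kap_bound {a β η y p0 : ℝ} (ha : 0 ≤ a) (hβ : -1 / 2 ≤ β) (hη : 0 ≤ η) (l n : ℕ) {t W : ℝ} (ht : t ∈ Uy y) (hW : 0 < W) :
    |kap a β η y p0 l n t W| ≤ kapB a β p0 l n W := by
  unfold kap kapB
  have hl : (0 : ℝ) ≤ l := Nat.cast_nonneg l
  have g1 : 0 < Real.Gamma (β + 1) := Real.Gamma_pos_of_pos (by linarith)
  have b1 : |io β (-(η * W))| ≤ 1 / Real.Gamma (β + 1) := io_bound hβ (by positivity)
  have b2 : |io (a + l) (-((y - Qf t) * W))| ≤ 1 / Real.Gamma (a + l + 1) :=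
    io_bound (by linarith) (mul_nonneg (Uy_Q ht).le hW.le)
  have b3 : |(-1) ^ n * kB (β + n) (Pf t * W)| ≤ kB (β + n) (1 / 2 * W) := by
    rw [abs_mul, abs_pow, abs_neg, abs_one, one_pow, one_mul, abs_of_nonneg (kB_nonneg _ _)]
    exact kB_anti _ (by positivity) (mul_le_mul_of_nonneg_right (Uy_P ht) hW.le)
  have b4 := kB_nonneg (β + n) (1 / 2 * W)
  rw [abs_mul, abs_mul, abs_mul, abs_of_pos (Real.rpow_pos_of_pos hW _)]
  have b5 := Real.rpow_pos_of_pos hW (p0 + l + n)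
  gcongr

lemma kap_aesm (a β η y p0 : ℝ) (l n : ℕ) {t : ℝ} (ht : t < 1) :
    AEStronglyMeasurable (kap a β η y p0 l n t) (volume.restrict (Set.Ioi 0)) := by
  refine ContinuousOn.aestronglyMeasurable ?_ measurableSet_Ioi
  unfold kap
  refine ((ContinuousOn.mul ?_ (continuousOn_const.mul ?_)).mul ?_).mul ?_
  · exact fun W hW => (Real.continuousAt_rpow_const _ _ (Or.inl (ne_of_gt hW))).continuousWithinAt
  · exact (continuousOn_kB (β + n)).comp (by fun_prop) (fun W hW => mul_pos (Pf_pos ht) hW)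
  · exact ((continuous_io β).comp (by fun_prop : Continuous fun W : ℝ => -(η * W))).continuousOn
  · exact ((continuous_io (a + l)).comp (by fun_prop : Continuous fun W : ℝ => -((y - Qf t) * W))).continuousOn

lemma kapB_integrable {a β p0 : ℝ} (hp1 : -1 < p0) (hp2 : β - 1 < p0) (l n : ℕ) :
    IntegrableOn (kapB a β p0 l n) (Set.Ioi 0) := by
  have hl : (0 : ℝ) ≤ l := Nat.cast_nonneg l
  have hn : (0 : ℝ) ≤ n := Nat.cast_nonneg n
  exact ((kB_rpow_integrable (p := p0 + l + n) (β := β + n) (by linarith) (by linarith) (by norm_num)).mul_const _).mul_const _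

lemma kap_integrable {a β η y p0 : ℝ} (ha : 0 ≤ a) (hβ : -1 / 2 ≤ β) (hη : 0 ≤ η) (hp1 : -1 < p0) (hp2 : β - 1 < p0)
    (l n : ℕ) {t : ℝ} (ht : t ∈ Uy y) :
    IntegrableOn (kap a β η y p0 l n t) (Set.Ioi 0) :=
  Integrable.mono' (kapB_integrable (a := a) hp1 hp2 l n) (kap_aesm _ _ _ _ _ _ _ (Uy_lt ht))
    ((ae_restrict_iff' measurableSet_Ioi).2 (Eventually.of_forall fun _ hW => kap_bound ha hβ hη l n ht hW))

lemma kap_int_deriv {a β η y p0 : ℝ} (ha : 0 ≤ a) (hβ : -1 / 2 ≤ β) (hη : 0 ≤ η) (hp1 : -1 < p0) (hp2 : β - 1 < p0)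
    (l n : ℕ) {t : ℝ} (ht : t ∈ Uy y) :
    HasDerivAt (fun t => ∫ W in Set.Ioi (0 : ℝ), kap a β η y p0 l n t W)
      (Qd t * (∫ W in Set.Ioi (0 : ℝ), kap a β η y p0 (l + 1) n t W)
        + Pd t * ∫ W in Set.Ioi (0 : ℝ), kap a β η y p0 l (n + 1) t W) t := by
  have hU := (Uy_open y).mem_nhds ht
  have h := hasDerivAt_integral_of_dominated_loc_of_deriv_le (μ := volume.restrict (Set.Ioi (0 : ℝ)))
    (F := fun t W => kap a β η y p0 l n t W)
    (F' := fun t W => Qd t * kap a β η y p0 (l + 1) n t W + Pd t * kap a β η y p0 l (n + 1) t W) (x₀ := t)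
    (s := Uy y) (bound := fun W => 5 * kapB a β p0 (l + 1) n W + 5 * kapB a β p0 l (n + 1) W)
    hU (by filter_upwards [hU] with s hs using kap_aesm _ _ _ _ _ _ _ (Uy_lt hs))
    (kap_integrable ha hβ hη hp1 hp2 l n ht)
    (((kap_aesm _ _ _ _ _ _ _ (Uy_lt ht)).const_mul _).add ((kap_aesm _ _ _ _ _ _ _ (Uy_lt ht)).const_mul _))
    ((ae_restrict_iff' measurableSet_Ioi).2 (Eventually.of_forall fun W hW x hx => by
      refine (norm_add_le _ _).trans ?_
      rw [norm_mul, norm_mul]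
      exact add_le_add
        (mul_le_mul (Uy_Qd hx) (kap_bound ha hβ hη (l + 1) n hx hW) (norm_nonneg _) (by norm_num))
        (mul_le_mul (Uy_Pd hx) (kap_bound ha hβ hη l (n + 1) hx hW) (norm_nonneg _) (by norm_num))))
    (((kapB_integrable hp1 hp2 (l + 1) n).const_mul 5).add ((kapB_integrable hp1 hp2 l (n + 1)).const_mul 5))
    ((ae_restrict_iff' measurableSet_Ioi).2 (Eventually.of_forall fun W hW x hx =>
      kap_deriv a β η y p0 l n (Uy_lt hx) hW))
  refine h.2.congr_deriv ?_
  rw [integral_add ((kap_integrable ha hβ hη hp1 hp2 (l + 1) n ht).const_mul _)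
    ((kap_integrable ha hβ hη hp1 hp2 l (n + 1) ht).const_mul _), integral_const_mul, integral_const_mul]

/-- exchange for the concrete family -/
lemma kap_exch {a β η y p0 : ℝ} (ha : 0 ≤ a) (hβ : -1 / 2 ≤ β) (hη : 0 ≤ η) (hy : 0 < y) (hp1 : -1 < p0) (hp2 : β - 1 < p0)
    (j : ℕ) {f : ℝ → ℝ} (hf : ContDiffOn ℝ ∞ f (Set.Iio 1)) :
    IntegrableOn (fun W => iteratedDeriv j (fun t => f t * kap a β η y p0 0 0 t W) 0) (Set.Ioi 0) ∧
    ∫ W in Set.Ioi (0 : ℝ), iteratedDeriv j (fun t => f t * kap a β η y p0 0 0 t W) 0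
      = iteratedDeriv j (fun t => f t * ∫ W in Set.Ioi (0 : ℝ), kap a β η y p0 0 0 t W) 0 :=
  ⟨exch_integrable (Uy_open y) (Uy_zero hy) (smooth_Pd.mono Uy_sub) (smooth_Qd.mono Uy_sub) j (k := kap a β η y p0)
    (fun l n _ hW _ ht => kap_deriv a β η y p0 l n (Uy_lt ht) hW)
    (fun l n => kap_integrable ha hβ hη hp1 hp2 l n (Uy_zero hy)) (hf.mono Uy_sub),
   exch (Uy_open y) (Uy_zero hy) (smooth_Pd.mono Uy_sub) (smooth_Qd.mono Uy_sub) j (k := kap a β η y p0)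
    (fun l n _ hW _ ht => kap_deriv a β η y p0 l n (Uy_lt ht) hW)
    (fun l n _ ht => kap_int_deriv ha hβ hη hp1 hp2 l n ht)
    (fun l n => kap_integrable ha hβ hη hp1 hp2 l n (Uy_zero hy)) (hf.mono Uy_sub)⟩


lemma io_lin_fam (a W Z : ℝ) (m : ℕ) (Q : ℝ) :
    HasDerivAt (fun Q => W ^ m * io (a + m) (Q * W + Z)) (W ^ (m + 1) * io (a + (m + 1 : ℕ)) (Q * W + Z)) Q := by
  have h1 : HasDerivAt (fun Q => Q * W + Z) W Q := by
    simpa using ((hasDerivAt_id Q).mul_const W).add_const Z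
  have h2 := ((hasDerivAt_io (a + m) (Q * W + Z)).comp Q h1).const_mul (W ^ m)
  refine h2.congr_deriv ?_
  push_cast; rw [← add_assoc]; ring

lemma io_lin_smooth (a W Z : ℝ) : ContDiff ℝ ∞ (fun Q => io a (Q * W + Z)) := by
  have h := fam1_contDiffOn isOpen_univ (g := fun m Q => W ^ m * io (a + m) (Q * W + Z))
    (fun n t _ => io_lin_fam a W Z n t) 0
  simpa [contDiffOn_univ] using h

lemma io_lin_iter (a W Z : ℝ) (l : ℕ) :
    iteratedDeriv l (fun Q => io a (Q * W + Z)) 0 = W ^ l * io (a + l) Z := by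
  have h := fam1_iter isOpen_univ (g := fun m Q => W ^ m * io (a + m) (Q * W + Z))
    (fun n t _ => io_lin_fam a W Z n t) l 0 (Set.mem_univ _)
  simpa using h

/-- the difference of the two generating expressions -/
noncomputable def rQ (α y W : ℝ) (j : ℕ) (Q : ℝ) : ℝ :=
  io α (-(y * W)) * io α (Q * W + 0) - ∑ i ∈ Finset.range (j + 1),
    ((-y) ^ i * ioC α i * W ^ (2 * i)) * (Q ^ i * io (α + 2 * i) (Q * W + -(y * W)))

lemma rQ_smooth (α y W : ℝ) (j : ℕ) : ContDiff ℝ ∞ (rQ α y W j) := by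
  unfold rQ
  refine (contDiff_const.mul (io_lin_smooth _ _ _)).sub (ContDiff.sum fun i _ => ?_)
  exact contDiff_const.mul ((contDiff_id.pow i).mul (io_lin_smooth _ _ _))

lemma rQ_jet {α y W : ℝ} {j l : ℕ} (hl : l ≤ j) : iteratedDeriv l (rQ α y W j) 0 = 0 := by
  have s : ∀ a Z, ContDiffAt ℝ l (fun Q => io a (Q * W + Z)) 0 := fun a Z =>
    ((io_lin_smooth a W Z).contDiffAt).of_le (by exact_mod_cast le_top)
  have s2 : ∀ i : ℕ, ContDiffAt ℝ l (fun Q => Q ^ i * io (α + 2 * i) (Q * W + -(y * W))) 0 := fun i =>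
    (contDiff_id.pow i).contDiffAt.mul (s _ _)
  have e : iteratedDeriv l (rQ α y W j) 0 = io α (-(y * W)) * (W ^ l * io (α + l) 0)
      - ∑ i ∈ Finset.range (j + 1), ((-y) ^ i * ioC α i * W ^ (2 * i)) *
        ((l.choose i : ℝ) * i.factorial * (W ^ (l - i) * io (α + 2 * i + (l - i : ℕ)) (-(y * W)))) := by
    unfold rQ
    rw [iteratedDeriv_fun_sub (contDiffAt_const.mul (s _ _)) (ContDiffAt.sum fun i _ => contDiffAt_const.mul (s2 i)),
      iteratedDeriv_fun_sum (fun i _ => contDiffAt_const.mul (s2 i)), iteratedDeriv_const_mul_field, io_lin_iter]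
    congr 1
    refine Finset.sum_congr rfl fun i _ => ?_
    rw [iteratedDeriv_const_mul_field, iter_pow_mul i l (s _ _), io_lin_iter]
  rw [e, io_zero]
  have e2 : ∑ i ∈ Finset.range (j + 1), ((-y) ^ i * ioC α i * W ^ (2 * i)) *
        ((l.choose i : ℝ) * i.factorial * (W ^ (l - i) * io (α + 2 * i + (l - i : ℕ)) (-(y * W))))
      = ∑ i ∈ Finset.range (l + 1), W ^ l * ((l.choose i : ℝ) * (1 / Real.Gamma (i + α + 1)) *
        ((-(y * W)) ^ i * io (α + l + i) (-(y * W)))) := by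
    symm
    rw [← Finset.sum_subset (Finset.range_subset_range.2 (by omega : l + 1 ≤ j + 1))]
    · refine Finset.sum_congr rfl fun i hi => ?_
      have hil : i ≤ l := by simpa [Nat.lt_succ_iff] using hi
      have a1 : α + 2 * i + (l - i : ℕ) = α + l + i := by rw [Nat.cast_sub hil]; ring
      have a2 : W ^ (2 * i) * W ^ (l - i) = W ^ l * W ^ i := by rw [← pow_add, ← pow_add]; congr 1; omega
      have a3 : (i.factorial : ℝ) ≠ 0 := by positivity
      have a4 : ioC α i * i.factorial = 1 / Real.Gamma (i + α + 1) := by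
        unfold ioC; rw [div_mul_eq_mul_div, one_mul, div_mul_eq_div_div, div_self a3]
      rw [a1, ← a4, neg_mul_eq_neg_mul, mul_pow]
      linear_combination -((-y) ^ i * ioC α i * (l.choose i : ℝ) * i.factorial * io (α + l + i) (-y * W)) * a2
    · intro i _ hi
      have : l < i := by simpa using hi
      rw [Nat.choose_eq_zero_of_lt this]; simp
  rw [e2, ← Finset.mul_sum, prod_identity]
  ring

noncomputable def gK (β c W t : ℝ) : ℝ := (1 - t) ^ (-c) * kB β (Pf t * W)

lemma pow_smooth (c : ℝ) : ContDiffOn ℝ ∞ (fun t : ℝ => (1 - t) ^ (-c)) (Set.Iio 1) := by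
  refine ContDiffOn.rpow_const_of_ne (by fun_prop) fun t ht => ?_
  have : t < 1 := ht
  linarith

lemma kB_smooth (β : ℝ) : ContDiffOn ℝ ∞ (kB β) (Set.Ioi 0) := by
  have h := fam1_contDiffOn isOpen_Ioi (g := fun m v => (-1) ^ m * kB (β + m) v)
    (fun n t ht => by
      refine ((hasDerivAt_kB (β + n) ht).const_mul ((-1) ^ n)).congr_deriv ?_
      push_cast; rw [← add_assoc, pow_succ]; ring) 0
  simpa using h

lemma gK_smooth (β c : ℝ) {W : ℝ} (hW : 0 < W) : ContDiffOn ℝ ∞ (gK β c W) (Set.Iio 1) := by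
  refine (pow_smooth c).mul ((kB_smooth β).comp (smooth_Pf.mul contDiffOn_const) ?_)
  exact fun t ht => mul_pos (Pf_pos ht) hW

noncomputable def lam (α β c : ℝ) (j : ℕ) (W : ℝ) : ℝ :=
  iteratedDeriv j (fun t => (1 - t) ^ (-c) * io α (Qf t * W) * kB β (Pf t * W)) 0

lemma lam_mul {α β c y W : ℝ} (j : ℕ) (hW : 0 < W) :
    lam α β c j W * io α (-(y * W)) = ∑ i ∈ Finset.range (j + 1),
      iteratedDeriv j (fun t => ((1 - t) ^ (-c) * ((-y) ^ i * ioC α i * Qf t ^ i)) *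
        (W ^ (2 * i) * kB β (Pf t * W) * io (α + 2 * i) (-((y - Qf t) * W)))) 0 := by
  have hU : IsOpen (Set.Iio (1 : ℝ)) := isOpen_Iio
  have h0 : (0 : ℝ) ∈ Set.Iio (1 : ℝ) := by norm_num
  have hz := jet_zero hU h0 smooth_Qf (by simp [Qf]) j (rQ_smooth α y W j) (fun l hl => rQ_jet hl) (gK_smooth β c hW)
  have s1 : ContDiffOn ℝ ∞ (fun t => io α (-(y * W)) * (gK β c W t * io α (Qf t * W + 0))) (Set.Iio 1) :=
    contDiffOn_const.mul ((gK_smooth β c hW).mul ((io_lin_smooth α W 0).comp_contDiffOn smooth_Qf))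
  have s2 : ∀ i : ℕ, ContDiffOn ℝ ∞ (fun t => gK β c W t * (((-y) ^ i * ioC α i * W ^ (2 * i)) *
      (Qf t ^ i * io (α + 2 * i) (Qf t * W + -(y * W))))) (Set.Iio 1) := fun i =>
    (gK_smooth β c hW).mul (contDiffOn_const.mul ((smooth_Qf.pow i).mul ((io_lin_smooth _ W _).comp_contDiffOn smooth_Qf)))
  have e : (fun t => gK β c W t * rQ α y W j (Qf t)) = fun t =>
      io α (-(y * W)) * (gK β c W t * io α (Qf t * W + 0)) - ∑ i ∈ Finset.range (j + 1),
        gK β c W t * (((-y) ^ i * ioC α i * W ^ (2 * i)) * (Qf t ^ i * io (α + 2 * i) (Qf t * W + -(y * W)))) := by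
    funext t
    unfold rQ
    rw [mul_sub, Finset.mul_sum]; ring
  rw [e, iteratedDeriv_fun_sub (cda hU s1 h0 j) (ContDiffAt.sum fun i _ => cda hU (s2 i) h0 j),
    iteratedDeriv_fun_sum (fun i _ => cda hU (s2 i) h0 j), iteratedDeriv_const_mul_field, sub_eq_zero] at hz
  have e1 : (fun t => gK β c W t * io α (Qf t * W + 0)) = fun t => (1 - t) ^ (-c) * io α (Qf t * W) * kB β (Pf t * W) := by
    funext t; rw [add_zero, gK]; ring
  rw [e1] at hz
  rw [lam, mul_comm, hz]
  refine Finset.sum_congr rfl fun i _ => ?_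
  congr 1
  funext t
  rw [show -((y - Qf t) * W) = Qf t * W + -(y * W) by ring, gK]; ring

/-- integrability of the coefficient functions -/
lemma lam_integrable {α β c : ℝ} (hα : 0 ≤ α) (hβ : -1 / 2 ≤ β) (j : ℕ) :
    IntegrableOn (fun W => lam α β c j W * W ^ (α + β)) (Set.Ioi 0) := by
  have h0 : (0 : ℝ) ∈ Set.Iio (1 : ℝ) := by norm_num
  have h := exch_integrable isOpen_Iio h0 smooth_Pd smooth_Qd j
    (k := fun l n t W => W ^ (α + β + l + n) * ((-1) ^ n * kB (β + n) (Pf t * W)) * io (α + l) (Qf t * W))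
    (fun l n W hW t ht => by
      have h1 : HasDerivAt (fun t => Pf t * W) (Pd t * W) t := (hasDerivAt_Pf ht).mul_const W
      have h2 : HasDerivAt (fun t => Qf t * W) (Qd t * W) t := (hasDerivAt_Qf ht).mul_const W
      have h3 := (hasDerivAt_kB (β + n) (mul_pos (Pf_pos ht) hW)).comp t h1
      have h4 := (hasDerivAt_io (α + l) (Qf t * W)).comp t h2
      have h5 := ((h3.const_mul ((-1) ^ n)).const_mul (W ^ (α + β + l + n))).mul h4
      refine h5.congr_deriv ?_
      have e1 : W ^ (α + β + (l + 1 : ℕ) + n) = W ^ (α + β + l + n) * W := by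
        rw [← Real.rpow_add_one hW.ne']; congr 1; push_cast; ring
      have e2 : W ^ (α + β + l + (n + 1 : ℕ)) = W ^ (α + β + l + n) * W := by
        rw [← Real.rpow_add_one hW.ne']; congr 1; push_cast; ring
      rw [e1, e2, pow_succ]
      push_cast
      rw [← add_assoc, ← add_assoc]
      simp only [Function.comp]
      ring)
    (fun l n => by
      have hl : (0 : ℝ) ≤ l := Nat.cast_nonneg l
      have hn : (0 : ℝ) ≤ n := Nat.cast_nonneg n
      have hi := (kB_rpow_integrable (p := α + β + l + n) (β := β + n) (P := 1) (by linarith) (by linarith) one_pos).const_mul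
        ((-1) ^ n * io (α + l) 0)
      refine hi.congr (Eventually.of_forall fun W => ?_)
      simp only [Pf, Qf]
      norm_num
      ring)
    (pow_smooth c)
  refine IntegrableOn.congr_fun h (fun W hW => ?_) measurableSet_Ioi
  simp only [lam]
  rw [← iteratedDeriv_mul_const_field]
  congr 1
  funext t
  simp
  ring


lemma psi_lin_iter {l A B c2 : ℝ} {N : ℕ} (hl : 0 ≤ l) (hN : 0 < l + N) (hS : 0 < A ^ 2 + c2) (m : ℕ) :
    ContDiffAt ℝ m (fun t => psi l N (A + t * B) c2) 0 ∧ ∀ k,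
    iteratedDeriv k (fun t => psi l N (A + t * B) c2) 0 = B ^ k * psi l (N + k) A c2 := by
  have hU : IsOpen {t : ℝ | 0 < (A + t * B) ^ 2 + c2} := isOpen_lt continuous_const (by fun_prop)
  have h0 : (0 : ℝ) ∈ {t : ℝ | 0 < (A + t * B) ^ 2 + c2} := by simpa using hS
  have hg : ∀ n : ℕ, ∀ t ∈ {t : ℝ | 0 < (A + t * B) ^ 2 + c2},
      HasDerivAt (fun t => B ^ n * psi l (N + n) (A + t * B) c2) (B ^ (n + 1) * psi l (N + (n + 1)) (A + t * B) c2) t := by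
    intro n t ht
    have h1 : HasDerivAt (fun t => A + t * B) B t := by
      simpa using ((hasDerivAt_id t).mul_const B).const_add A
    have hpos : 0 < l + (N + n : ℕ) := by push_cast; have : (0 : ℝ) ≤ n := Nat.cast_nonneg n; linarith
    refine (((hasDerivAt_psi hpos hl ht).comp t h1).const_mul (B ^ n)).congr_deriv ?_
    rw [← add_assoc]; ring
  constructor
  · have := cda hU (fam1_contDiffOn hU (g := fun n t => B ^ n * psi l (N + n) (A + t * B) c2) hg 0) h0 m
    simpa using this
  · intro k
    have := fam1_iter hU (g := fun n t => B ^ n * psi l (N + n) (A + t * B) c2) hg k 0 h0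
    simpa using this

lemma F_pos {β η y : ℝ} (n0 j : ℕ) (hβ : -1 / 2 ≤ β) (hα : 0 ≤ β + n0) (hη : 0 ≤ η) (hy : 0 < y) :
    ∫ W in Set.Ioi (0 : ℝ), lam (β + n0) β (β + n0 + β + 1) j W * W ^ (β + n0 + β) * io β (-(η * W)) * io (β + n0) (-(y * W))
      = j.factorial * ((-1) ^ n0 * (4 ^ β / (2 * √π)) * psi (β + 1 / 2) (n0 + j) (1 + y - η) (4 * η) *
        ∑ i ∈ Finset.range (j + 1), ioC (β + n0) i * ((-y) ^ i * gE j i (1 - y + η))) := by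
  set α := β + n0 with hαd
  have hl0 : 0 ≤ β + 1 / 2 := by linarith
  have hln : 0 < β + 1 / 2 + n0 := by linarith
  have hf : ∀ i : ℕ, ContDiffOn ℝ ∞ (fun t => (1 - t) ^ (-(α + β + 1)) * ((-y) ^ i * ioC α i * Qf t ^ i)) (Set.Iio 1) :=
    fun i => (pow_smooth _).mul (contDiffOn_const.mul (smooth_Qf.pow i))
  have hk : ∀ i : ℕ, _ := fun i => kap_exch (a := α + 2 * i) (p0 := α + β + 2 * i) (η := η) (y := y) (by positivity) hβ hη hy
    (by have : (0 : ℝ) ≤ i := Nat.cast_nonneg i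
        linarith) (by have : (0 : ℝ) ≤ i := Nat.cast_nonneg i
                      linarith) j (hf i)
  have e1 : ∫ W in Set.Ioi (0 : ℝ), lam α β (α + β + 1) j W * W ^ (α + β) * io β (-(η * W)) * io α (-(y * W))
      = ∫ W in Set.Ioi (0 : ℝ), ∑ i ∈ Finset.range (j + 1),
        iteratedDeriv j (fun t => ((1 - t) ^ (-(α + β + 1)) * ((-y) ^ i * ioC α i * Qf t ^ i)) *
          kap (α + 2 * i) β η y (α + β + 2 * i) 0 0 t W) 0 := by
    refine setIntegral_congr_fun measurableSet_Ioi fun W hW => ?_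
    have hW' : 0 < W := hW
    have h := lam_mul (α := α) (β := β) (c := α + β + 1) (y := y) j hW'
    calc lam α β (α + β + 1) j W * W ^ (α + β) * io β (-(η * W)) * io α (-(y * W))
        = (lam α β (α + β + 1) j W * io α (-(y * W))) * (W ^ (α + β) * io β (-(η * W))) := by ring
      _ = _ := by
        rw [h, Finset.sum_mul]
        refine Finset.sum_congr rfl fun i _ => ?_
        rw [← iteratedDeriv_mul_const_field]
        congr 1
        funext t
        unfold kap
        have a1 : W ^ (α + β + 2 * i + (0 : ℕ) + (0 : ℕ)) = W ^ (α + β) * W ^ (2 * i) := by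
          rw [← Real.rpow_natCast, ← Real.rpow_add hW']; congr 1; push_cast; ring
        rw [a1]
        simp only [Nat.cast_zero, add_zero, pow_zero, one_mul]
        ring
  rw [e1, integral_finsetSum _ (fun i _ => (hk i).1), Finset.mul_sum, Finset.mul_sum]
  refine Finset.sum_congr rfl fun i _ => ?_
  rw [(hk i).2]
  have hln' : 0 < β + 1 / 2 + (n0 + 2 * i : ℕ) := by
    push_cast
    have : (0 : ℝ) ≤ i := Nat.cast_nonneg i
    linarith
  have hS0 : 0 < (1 + y - η) ^ 2 + 4 * η := by
    have := S_pos one_pos hy.le hη (Or.inl hy)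
    rw [mul_one] at this
    rw [show 1 + y - η = y + 1 - η by ring]; exact this
  have ev : (fun t => ((1 - t) ^ (-(α + β + 1)) * ((-y) ^ i * ioC α i * Qf t ^ i)) *
        ∫ W in Set.Ioi (0 : ℝ), kap (α + 2 * i) β η y (α + β + 2 * i) 0 0 t W) =ᶠ[nhds 0]
      fun t => ((-1) ^ n0 * (4 ^ β / (2 * √π)) * ((-y) ^ i * ioC α i)) *
        (t ^ (2 * i) * psi (β + 1 / 2) (n0 + 2 * i) ((1 + y - η) + t * (1 - y + η)) (4 * η)) := by
    filter_upwards [(Uy_open y).mem_nhds (Uy_zero hy)] with t ht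
    have ht1 := Uy_lt ht
    have hr : 0 < 1 - t := by linarith
    have b1 : ∫ W in Set.Ioi (0 : ℝ), kap (α + 2 * i) β η y (α + β + 2 * i) 0 0 t W = nM β η (n0 + 2 * i) (Pf t) (y - Qf t) := by
      unfold nM kap
      congr 1
      funext W
      have c1 : α + β + 2 * i + (0 : ℕ) + (0 : ℕ) = 2 * β + (n0 + 2 * i : ℕ) := by rw [hαd]; push_cast; ring
      have c2 : α + 2 * i + (0 : ℕ) = β + (n0 + 2 * i : ℕ) := by rw [hαd]; push_cast; ring
      rw [c1, c2]; simp
    rw [b1, nM_eq hβ hη (Pf_pos ht1) _ hln' _ (Uy_Q ht)]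
    have hS := S_pos (Pf_pos ht1) (Uy_Q ht).le hη (Or.inl (Uy_Q ht))
    have b2 : y - Qf t + Pf t - η = ((1 + y - η) + t * (1 - y + η)) / (1 - t) := by
      unfold Qf Pf; field_simp; ring
    have b3 : 4 * Pf t * η = 4 * η / (1 - t) ^ 2 := by unfold Pf; field_simp
    rw [b2, b3] at hS
    have hS' : 0 < ((1 + y - η) + t * (1 - y + η)) ^ 2 + 4 * η := by
      have : ((1 + y - η) + t * (1 - y + η)) ^ 2 + 4 * η
        = (1 - t) ^ 2 * ((((1 + y - η) + t * (1 - y + η)) / (1 - t)) ^ 2 + 4 * η / (1 - t) ^ 2) := by field_simp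
      rw [this]; positivity
    rw [b2, b3, psi_scale _ _ hr hS']
    have b4 : (1 - t) ^ ((n0 + 2 * i : ℕ) + 2 * (β + 1 / 2)) = (1 - t) ^ (α + β + 1) * ((1 - t) ^ 2) ^ i := by
      rw [← pow_mul, ← Real.rpow_natCast, ← Real.rpow_add hr]; congr 1; rw [hαd]; push_cast; ring
    have b5 : (-1 : ℝ) ^ (n0 + 2 * i) = (-1) ^ n0 := by rw [pow_add, pow_mul]; norm_num
    have b6 : Qf t ^ i * ((1 - t) ^ 2) ^ i = t ^ (2 * i) := by
      rw [← mul_pow, pow_mul]; congr 1; unfold Qf; field_simp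
    have b7 : (1 - t) ^ (-(α + β + 1)) * (1 - t) ^ (α + β + 1) = 1 := by
      rw [← Real.rpow_add hr, neg_add_cancel, Real.rpow_zero]
    rw [b4, b5, ← b6]
    linear_combination ((-1) ^ n0 * (4 ^ β / (2 * √π)) * ((-y) ^ i * ioC α i) * Qf t ^ i * ((1 - t) ^ 2) ^ i *
      psi (β + 1 / 2) (n0 + 2 * i) ((1 + y - η) + t * (1 - y + η)) (4 * η)) * b7
  rw [ev.iteratedDeriv_eq, iteratedDeriv_const_mul_field]
  obtain ⟨hc, hi⟩ := psi_lin_iter (A := 1 + y - η) (B := 1 - y + η) hl0 hln' hS0 j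
  rw [iter_pow_mul (2 * i) j hc, hi]
  by_cases hij : 2 * i ≤ j
  · rw [show n0 + 2 * i + (j - 2 * i) = n0 + j by omega]
    unfold gE
    rw [if_pos hij]
    have hcf := Nat.choose_mul_factorial_mul_factorial hij
    have hcf' : (j.choose (2 * i) : ℝ) * (2 * i).factorial * (j - 2 * i).factorial = j.factorial := by exact_mod_cast hcf
    rw [← hcf']
    have : ((j - 2 * i).factorial : ℝ) ≠ 0 := by positivity
    field_simp
  · rw [gE_of_lt (by omega), Nat.choose_eq_zero_of_lt (by omega)]; simp

lemma F_all {β η y : ℝ} (n0 j : ℕ) (hβ : -1 / 2 ≤ β) (hα : 0 ≤ β + n0) (hη : 0 ≤ η) (hy : 0 ≤ y) :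
    ∫ W in Set.Ioi (0 : ℝ), lam (β + n0) β (β + n0 + β + 1) j W * W ^ (β + n0 + β) * io β (-(η * W)) * io (β + n0) (-(y * W))
      = j.factorial * ((-1) ^ n0 * (4 ^ β / (2 * √π)) * psi (β + 1 / 2) (n0 + j) (1 + y - η) (4 * η) *
        ∑ i ∈ Finset.range (j + 1), ioC (β + n0) i * ((-y) ^ i * gE j i (1 - y + η))) := by
  rcases hy.eq_or_lt with h | h
  swap
  · exact F_pos n0 j hβ hα hη h
  subst h
  have hln : 0 < β + 1 / 2 + (n0 + j : ℕ) := by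
    push_cast
    have : (0 : ℝ) ≤ j := Nat.cast_nonneg j
    linarith
  have hIntg : IntegrableOn (fun W => lam (β + n0) β (β + n0 + β + 1) j W * W ^ (β + n0 + β) * io β (-(η * W))) (Set.Ioi 0) := by
    refine Integrable.mul_bdd (c := 1 / Real.Gamma (β + 1)) (lam_integrable hα hβ j)
      ((continuous_io β).comp (by fun_prop : Continuous fun W : ℝ => -(η * W))).aestronglyMeasurable ?_
    exact (ae_restrict_iff' measurableSet_Ioi).2 (Eventually.of_forall fun W hW =>
        io_bound hβ (mul_nonneg hη (le_of_lt hW)))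
  have t1 : Tendsto (fun y => ∫ W in Set.Ioi (0 : ℝ), lam (β + n0) β (β + n0 + β + 1) j W * W ^ (β + n0 + β) * io β (-(η * W)) * io (β + n0) (-(y * W)))
      (nhdsWithin 0 (Set.Ioi 0)) (nhds (∫ W in Set.Ioi (0 : ℝ), lam (β + n0) β (β + n0 + β + 1) j W * W ^ (β + n0 + β) * io β (-(η * W)) * io (β + n0) (-(0 * W)))) := by
    refine tendsto_integral_filter_of_dominated_convergence
      (fun W => ‖lam (β + n0) β (β + n0 + β + 1) j W * W ^ (β + n0 + β) * io β (-(η * W))‖ * (1 / Real.Gamma (β + n0 + 1)))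
      (Eventually.of_forall fun y => hIntg.aestronglyMeasurable.mul
        ((continuous_io _).comp (by fun_prop : Continuous fun W : ℝ => -(y * W))).aestronglyMeasurable) ?_
      (hIntg.norm.mul_const _) ?_
    · filter_upwards [self_mem_nhdsWithin] with y hy
      refine (ae_restrict_iff' measurableSet_Ioi).2 (Eventually.of_forall fun W hW => ?_)
      rw [norm_mul]
      exact mul_le_mul_of_nonneg_left (io_bound (by linarith) (mul_nonneg (le_of_lt hy) (le_of_lt hW))) (norm_nonneg _)
    · refine Eventually.of_forall fun W => ?_
      refine Tendsto.mono_left ?_ nhdsWithin_le_nhds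
      exact (continuous_const.mul ((continuous_io (β + n0)).comp (by fun_prop : Continuous fun y : ℝ => -(y * W)))).tendsto 0
  have hc : ContinuousAt (fun y : ℝ => j.factorial * ((-1) ^ n0 * (4 ^ β / (2 * √π)) * psi (β + 1 / 2) (n0 + j) (1 + y - η) (4 * η) *
        ∑ i ∈ Finset.range (j + 1), ioC (β + n0) i * ((-y) ^ i * gE j i (1 - y + η)))) 0 := by
    have hS0 : 0 < (1 + 0 - η) ^ 2 + 4 * η := by
      have := S_pos one_pos le_rfl hη (Or.inr (Or.inr trivial))
      rw [mul_one] at this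
      rw [show 1 + 0 - η = 0 + 1 - η by ring]; exact this
    have h1 : ContinuousAt (fun y : ℝ => psi (β + 1 / 2) (n0 + j) (1 + y - η) (4 * η)) 0 :=
      ContinuousAt.comp (f := fun y : ℝ => 1 + y - η) (g := fun z => psi (β + 1 / 2) (n0 + j) z (4 * η))
        (hasDerivAt_psi hln (by linarith) hS0).continuousAt (by fun_prop)
    have h2 : ∀ i, Continuous (gE j i) := fun i =>
      continuous_iff_continuousAt.2 fun x => (hasDerivAt_gE j i x).continuousAt
    have h3 : ContinuousAt (fun y : ℝ => ∑ i ∈ Finset.range (j + 1), ioC (β + n0) i * ((-y) ^ i * gE j i (1 - y + η))) 0 := by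
      refine Continuous.continuousAt (continuous_finsetSum _ fun i _ => ?_)
      exact continuous_const.mul ((by fun_prop : Continuous fun y : ℝ => (-y) ^ i).mul ((h2 i).comp (by fun_prop)))
    exact continuousAt_const.mul ((continuousAt_const.mul h1).mul h3)
  refine tendsto_nhds_unique t1 ((hc.tendsto.mono_left nhdsWithin_le_nhds).congr' ?_)
  filter_upwards [self_mem_nhdsWithin] with y hy
  exact (F_pos n0 j hβ hα hη hy).symm


lemma cov_sq (g : ℝ → ℝ) :
    ∫ x in Ioi (0 : ℝ), (x / 2) * g (x ^ 2 / 4) = ∫ W in Ioi (0 : ℝ), g W := by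
  have h1 := integral_comp_rpow_Ioi_of_pos (g := fun y => g ((1 / 4) * y)) (p := (2 : ℝ)) (by norm_num)
  have h2 := integral_comp_mul_left_Ioi g 0 (b := (1 / 4 : ℝ)) (by norm_num)
  rw [h2, mul_zero] at h1
  have h3 : ∫ x in Ioi (0 : ℝ), (x / 2) * g (x ^ 2 / 4) =
      ∫ x in Ioi (0 : ℝ), (1 / 4 : ℝ) * ((2 * x ^ ((2 : ℝ) - 1)) • g ((1 / 4) * x ^ (2 : ℝ))) := by
    refine setIntegral_congr_fun measurableSet_Ioi fun x _ => ?_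
    have e1 : x ^ ((2 : ℝ) - 1) = x := by norm_num
    have e2 : x ^ (2 : ℝ) = x ^ 2 := by exact_mod_cast Real.rpow_natCast x 2
    simp only [e1, e2, smul_eq_mul]
    rw [show (1 / 4 : ℝ) * x ^ 2 = x ^ 2 / 4 by ring]
    ring
  rw [h3, integral_const_mul, h1]
  simp only [smul_eq_mul]
  ring

lemma LambdaF_eq {μ ν : ℝ} (hν : -1 ≤ ν) (j : ℕ) {x : ℝ} (hx : 0 < x) :
    LambdaF μ ν j x = lam (μ / 2) (ν / 2) (μ / 2 + ν / 2 + 1) j (x ^ 2 / 4) / j.factorial := by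
  unfold LambdaF lam
  congr 1
  refine Filter.EventuallyEq.iteratedDeriv_eq j ?_
  have : ∀ᶠ t : ℝ in nhds 0, t < 1 := eventually_lt_nhds (by norm_num)
  filter_upwards [this] with t ht
  have h1 : 0 < 1 - t := by linarith
  unfold genFun
  rw [besselIt_eq, besselKt_eq (by linarith) (by positivity)]
  have a1 : (t * x / (1 - t)) ^ 2 / 4 = Qf t * (x ^ 2 / 4) := by unfold Qf; field_simp
  have a2 : (x / (1 - t)) ^ 2 / 4 = Pf t * (x ^ 2 / 4) := by unfold Pf; field_simp
  have a3 : -(μ + ν + 2) / 2 = -(μ / 2 + ν / 2 + 1) := by ring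
  rw [a1, a2, a3]

lemma gE_scale (j i : ℕ) {R : ℝ} (hR : 0 < R) (c : ℝ) :
    (R ^ 2) ^ i * gE j i (R * c) = R ^ j * gE j i c := by
  unfold gE
  split_ifs with h
  · have : R ^ j = R ^ (2 * i) * R ^ (j - 2 * i) := by rw [← pow_add]; congr 1; omega
    rw [this, mul_pow, ← pow_mul]; ring
  · simp

lemma sum_gegen (j : ℕ) {α R c y : ℝ} (hR : 0 < R) (hα : -1 / 2 < α)
    (hy : 4 * y = R ^ 2 * (1 - c ^ 2)) :
    ∑ i ∈ Finset.range (j + 1), ioC α i * ((-y) ^ i * gE j i (R * c)) =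
      R ^ j * (4 ^ α / (√π * Real.Gamma (j + 2 * α + 1)) * gegenbauerCt j (α + 1 / 2) c) := by
  rw [← gT_eq j (j + 1) (by omega) hα c]
  unfold gT
  rw [Finset.sum_range_succ _ (j + 1), gE_of_lt (n := j) (k := j + 1) (by omega)]
  simp only [mul_zero, add_zero]
  rw [Finset.mul_sum]
  refine Finset.sum_congr rfl fun i _ => ?_
  have h := gE_scale j i hR c
  have e : -y = -((1 - c ^ 2) / 4) * R ^ 2 := by linarith
  rw [e, mul_pow]
  linear_combination (ioC α i * (-((1 - c ^ 2) / 4)) ^ i) * h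

lemma thm_real {β : ℝ} (n0 j : ℕ) (hβ : -1 / 2 ≤ β) (hα : 0 ≤ β + n0) {ϑ φ : ℝ}
    (hpos : 0 < cos ϑ + cos φ) :
    ∫ x in Ioi (0 : ℝ),
        LambdaF (2 * (β + n0)) (2 * β) j x * besselJt (β + n0) (sin ϑ / (cos ϑ + cos φ) * x)
          * besselJt β (sin φ / (cos ϑ + cos φ) * x) * x ^ (2 * (β + n0) + 2 * β + 1)
      = (-1) ^ j * ((2 : ℝ) ^ (2 * (2 * (β + n0) + 2 * β)) * (n0 + j).factorial)
            / (π * Real.Gamma (j + 2 * (β + n0) + 1))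
          * ((cos ϑ + cos φ) / 2) ^ (β + n0 + β + 1)
          * gegenbauerCt j (β + n0 + 1 / 2) (cos ϑ)
          * gegenbauerCt (n0 + j) (β + 1 / 2) (cos φ) := by
  set s := cos ϑ + cos φ with hs
  set α := β + n0 with hαd
  set y := (sin ϑ / s) ^ 2 with hy
  set η := (sin φ / s) ^ 2 with hη
  have hj : (0 : ℝ) < j.factorial := by positivity
  have key := F_all (β := β) (η := η) (y := y) n0 j hβ hα (by positivity) (by positivity)
  rw [← hαd] at key
  set G : ℝ → ℝ := fun W => lam α β (α + β + 1) j W * W ^ (α + β) * io β (-(η * W)) * io α (-(y * W))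
    with hG
  have e1 : ∫ x in Ioi (0 : ℝ), LambdaF (2 * α) (2 * β) j x * besselJt α (sin ϑ / s * x)
          * besselJt β (sin φ / s * x) * x ^ (2 * α + 2 * β + 1) =
      ∫ x in Ioi (0 : ℝ), (2 * 4 ^ (α + β) / j.factorial) * ((x / 2) * G (x ^ 2 / 4)) := by
    refine setIntegral_congr_fun measurableSet_Ioi fun x hx => ?_
    have hx : 0 < x := hx
    simp only [hG]
    rw [LambdaF_eq (by linarith) j hx, besselJt_eq, besselJt_eq]
    have b1 : x ^ (2 * α + 2 * β + 1) = x * (4 ^ (α + β) * (x ^ 2 / 4) ^ (α + β)) := by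
      rw [← Real.mul_rpow (by norm_num) (by positivity), mul_div_cancel₀ _ (by norm_num),
        Real.rpow_add hx, Real.rpow_one, show 2 * α + 2 * β = ((2 : ℕ) : ℝ) * (α + β) by push_cast; ring,
        Real.rpow_mul hx.le, Real.rpow_natCast]
      ring
    rw [b1, show 2 * α / 2 = α by ring, show 2 * β / 2 = β by ring,
      show (sin ϑ / s * x) ^ 2 / 4 = y * (x ^ 2 / 4) by rw [hy]; ring,
      show (sin φ / s * x) ^ 2 / 4 = η * (x ^ 2 / 4) by rw [hη]; ring]
    field_simp
  rw [e1, integral_const_mul, cov_sq, key]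
  have hs0 : s ≠ 0 := hpos.ne'
  set R := 2 / s with hR
  have hRp : 0 < R := by positivity
  have sϑ := sin_sq_add_cos_sq ϑ
  have sφ := sin_sq_add_cos_sq φ
  have hA : 1 + y - η = R * cos φ := by
    rw [hy, hη, hR]; field_simp
    rw [hs]; linear_combination sϑ - sφ
  have hB : 1 - y + η = R * cos ϑ := by
    rw [hy, hη, hR]; field_simp
    rw [hs]; linear_combination sφ - sϑ
  have h4y : 4 * y = R ^ 2 * (1 - cos ϑ ^ 2) := by
    rw [hy, hR]; field_simp; linear_combination 4 * sϑ
  have h4η : 4 * η = R ^ 2 * (1 - cos φ ^ 2) := by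
    rw [hη, hR]; field_simp; linear_combination 4 * sφ
  rw [hA, hB, sum_gegen j hRp (by linarith) h4y, psi_gegen (β + 1 / 2) (n0 + j) hRp
    (by rw [h4η]; ring), mul_div_cancel_left₀ _ hRp.ne']
  have p1 : R ^ (-(((n0 + j : ℕ) : ℝ) + 2 * (β + 1 / 2))) * R ^ j = (s / 2) ^ (α + β + 1) := by
    rw [← Real.rpow_natCast R j, ← Real.rpow_add hRp, show s / 2 = R⁻¹ by rw [hR]; field_simp,
      Real.inv_rpow hRp.le, ← Real.rpow_neg hRp.le]
    congr 1; rw [hαd]; push_cast; ring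
  have p2 : (2 : ℝ) ^ (2 * (2 * α + 2 * β)) = 4 ^ (α + β) * 4 ^ β * 4 ^ α := by
    rw [← Real.rpow_add (by norm_num), ← Real.rpow_add (by norm_num),
      show (4 : ℝ) = 2 ^ (2 : ℝ) by norm_num, ← Real.rpow_mul (by norm_num)]
    congr 1; ring
  have p3 : (-1 : ℝ) ^ n0 * (-1) ^ (n0 + j) = (-1) ^ j := by
    rw [← pow_add, ← add_assoc, pow_add, ← two_mul, pow_mul]; simp
  have p4 : √π * √π = π := Real.mul_self_sqrt pi_pos.le
  have p5 : 0 < √π := by positivity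
  have p6 : 0 < Real.Gamma (j + 2 * α + 1) := Real.Gamma_pos_of_pos (by positivity)
  rw [p2, ← p3, ← p1, ← p4]
  field_simp
  rw [Real.sqrt_sq p5.le]

/-- **Theorem A with explicit constant, for `u = Λ_j^{μ,ν}`.** -/
theorem theoremA_Lambda (μ ν : ℤ) (hcond : IntCond μ ν) (j : ℕ)
    (ϑ φ : ℝ) (hϑ : ϑ ∈ Set.Icc (0 : ℝ) Real.pi) (hφ : φ ∈ Set.Icc (0 : ℝ) Real.pi)
    (hpos : Real.cos ϑ + Real.cos φ > 0) :
    ∫ x in Set.Ioi (0 : ℝ),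
        LambdaF μ ν j x * besselJt ((μ : ℝ) / 2) (Real.sin ϑ / (Real.cos ϑ + Real.cos φ) * x)
          * besselJt ((ν : ℝ) / 2) (Real.sin φ / (Real.cos ϑ + Real.cos φ) * x)
          * x ^ ((μ : ℝ) + ν + 1)
      = (-1) ^ j * ((2 : ℝ) ^ (2 * ((μ : ℝ) + ν)) * Real.Gamma (j + ((μ : ℝ) - ν + 2) / 2))
            / (Real.pi * Real.Gamma (j + (μ : ℝ) + 1))
          * ((Real.cos ϑ + Real.cos φ) / 2) ^ (((μ : ℝ) + ν + 2) / 2)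
          * gegenbauerCt j (((μ : ℝ) + 1) / 2) (Real.cos ϑ)
          * gegenbauerCt (j + ((μ - ν) / 2).toNat) (((ν : ℝ) + 1) / 2) (Real.cos φ) := by
  obtain ⟨h1, h2, h3, h4⟩ := hcond
  obtain ⟨n0, hn0⟩ : ∃ n0 : ℕ, μ - ν = 2 * n0 := by
    obtain ⟨r, hr⟩ := h3
    exact ⟨r.toNat, by omega⟩
  have hμ0 : 0 ≤ μ := by omega
  have e0 : ((μ - ν) / 2).toNat = n0 := by omega
  have r0 : (μ : ℝ) = ν + 2 * n0 := by
    have : μ = ν + 2 * n0 := by omega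
    rw [this]; push_cast; ring
  have r1 : (-1 : ℝ) ≤ ν := by exact_mod_cast h1
  have r2 : (0 : ℝ) ≤ μ := by exact_mod_cast hμ0
  have T := thm_real (β := (ν : ℝ) / 2) n0 j (by linarith) (by linarith) hpos
  have q1 : (ν : ℝ) / 2 + n0 = (μ : ℝ) / 2 := by linarith
  rw [q1, show 2 * ((μ : ℝ) / 2) = μ by ring, show 2 * ((ν : ℝ) / 2) = ν by ring] at T
  rw [T, e0, show (j : ℝ) + ((μ : ℝ) - ν + 2) / 2 = ((n0 + j : ℕ) : ℝ) + 1 by push_cast; linarith,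
    Real.Gamma_nat_eq_factorial, show (μ : ℝ) / 2 + ν / 2 + 1 = (μ + ν + 2) / 2 by ring,
    show (μ : ℝ) / 2 + 1 / 2 = (μ + 1) / 2 by ring, show (ν : ℝ) / 2 + 1 / 2 = (ν + 1) / 2 by ring,
    Nat.add_comm n0 j]
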